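/- arXiv:1203.3995 — 2 statements merged into one kernel-verified Lean document; each statement's English description precedes it below -/
import Mathlib

section
/- Let n ≥ 2 and 1 < m < n. Let u : ℂⁿ → ℝ be a C² function which is globally bounded, has globally bounded gradient (sup_{ℂⁿ} ‖∇u‖ < ∞), is m-subharmonic, and is maximal in the sense that σ_m(λ(H_u(z))) = 0 for every z ∈ ℂⁿ. Then u is constant. -/
open MeasureTheory Metric Complex

noncomputable section

/-- `σ_k(λ)`, the `k`-th elementary symmetric polynomial of `λ ∈ ℝⁿ`. -/
def esymm (n k : ℕ) (lam : Fin n → ℝ) : ℝ :=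
  ∑ s ∈ Finset.univ.powersetCard k, ∏ i ∈ s, lam i

/-- The Gårding cone `Γ_m = {λ ∈ ℝⁿ : σ_1(λ) > 0, …, σ_m(λ) > 0}`. -/
def gardingCone (n m : ℕ) : Set (Fin n → ℝ) :=
  {lam | ∀ k, 1 ≤ k → k ≤ m → 0 < esymm n k lam}

/-- The `j`-th standard basis vector of `ℂⁿ`. -/
def ebasis (n : ℕ) (j : Fin n) : EuclideanSpace ℂ (Fin n) :=
  EuclideanSpace.single j 1

/-- The complex Hessian matrix `(H_u(z))_{jk} = ∂²u/∂z_j∂z̄_k(z)`, expressed through real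
second derivatives: `∂²u/∂z_j∂z̄_k = ¼[(u_{x_jx_k} + u_{y_jy_k}) + i(u_{x_jy_k} - u_{y_jx_k})]`. -/
def complexHessian {n : ℕ} (u : EuclideanSpace ℂ (Fin n) → ℝ)
    (z : EuclideanSpace ℂ (Fin n)) : Matrix (Fin n) (Fin n) ℂ :=
  fun j k =>
    (1 / 4 : ℂ) *
      (((iteratedFDeriv ℝ 2 u z ![ebasis n j, ebasis n k]
          + iteratedFDeriv ℝ 2 u z ![Complex.I • ebasis n j, Complex.I • ebasis n k] : ℝ) : ℂ)
        + Complex.I *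
          ((iteratedFDeriv ℝ 2 u z ![ebasis n j, Complex.I • ebasis n k]
            - iteratedFDeriv ℝ 2 u z ![Complex.I • ebasis n j, ebasis n k] : ℝ) : ℂ))

/-!
Normalise `u` to take values in `[0, 1]` and to be Lipschitz, and relax the equation to a notion of
weak solution which is stable under translations and locally uniform limits. Weak solutions `u` are
shown to be constant by downward induction on the space `V` of complex directions in which `u` is
invariant.

If `dim V ≥ n - m`, the complex Hessian of a mollification of `u` vanishes on `V`, so that it has
rank at most `m`; membership in `Γ̄_m` then makes it positive semidefinite. The mollification is a
bounded plurisubharmonic function, hence constant by the Liouville theorem on complex lines.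

Otherwise, if `u` is not constant, compare it with `τ + δ φ ⋆ g²`, where `τ` is a translate of a
mollification of `u`, `g` is a fine mollification and `φ` a cut-off which is `1` on a large ball.
If the energy `φ ⋆ |∂_ξ g|²` were bounded below for all unit `ξ ⊥ V` wherever `τ - u` is large, the
Hessian of this function would lie in the open cone `Γ_m` at a point where, after subtracting a
small multiple of `|z - q|²`, it touches `u` from below. Hence there are points `x_k` and unit
vectors `ξ_k ⊥ V` at which the energy tends to zero, and a limit of the translates `u (· + x_k)` is
a non-constant weak solution that is invariant under `V` and under the limit direction of the
`ξ_k`.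
-/

/-! ### Elementary symmetric polynomials and the Gårding cone -/

section ElementarySymmetric

open Polynomial

variable {ι : Type*}

/-- The elementary symmetric polynomial `σ_k` in the variables indexed by a finset `s`; needed
next to `esymm` because the inductive arguments remove one variable at a time. -/
def esymmOn {R : Type*} [CommSemiring R] (s : Finset ι) (k : ℕ) (x : ι → R) : R :=
  ∑ t ∈ s.powersetCard k, ∏ i ∈ t, x i

/-- The generating polynomial `∏ (1 + x_i X)` of the elementary symmetric polynomials. -/
def esymmPoly {R : Type*} [CommSemiring R] (s : Finset ι) (x : ι → R) : R[X] :=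
  ∏ i ∈ s, (1 + C (x i) * X)

section CommSemiring

variable {R : Type*} [CommSemiring R]

lemma esymmOn_zero (s : Finset ι) (x : ι → R) : esymmOn s 0 x = 1 := by simp [esymmOn]

lemma esymmOn_one (s : Finset ι) (x : ι → R) : esymmOn s 1 x = ∑ i ∈ s, x i := by
  simp [esymmOn, Finset.powersetCard_one]

lemma coeff_esymmPoly (s : Finset ι) (x : ι → R) (k : ℕ) :
    (esymmPoly s x).coeff k = esymmOn s k x := by
  have expand : esymmPoly s x = ∑ t ∈ s.powerset, C (∏ i ∈ t, x i) * X ^ t.card := by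
    simp only [esymmPoly, Finset.prod_one_add, Finset.prod_mul_distrib, map_prod,
      Finset.prod_const]
  simp only [expand, finsetSum_coeff, coeff_C_mul_X_pow, esymmOn, Finset.powersetCard_eq_filter,
    Finset.sum_filter, eq_comm]

variable [DecidableEq ι]

lemma esymmPoly_eq_mul_erase {s : Finset ι} {i : ι} (hi : i ∈ s) (x : ι → R) :
    esymmPoly s x = (1 + C (x i) * X) * esymmPoly (s.erase i) x :=
  (Finset.mul_prod_erase s _ hi).symm

lemma esymmOn_succ {s : Finset ι} {i : ι} (hi : i ∈ s) (k : ℕ) (x : ι → R) :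
    esymmOn s (k + 1) x = esymmOn (s.erase i) (k + 1) x + x i * esymmOn (s.erase i) k x := by
  simp only [← coeff_esymmPoly, esymmPoly_eq_mul_erase hi, add_mul, one_mul, mul_assoc, coeff_add,
    coeff_C_mul, coeff_X_mul]

lemma succ_mul_esymmOn (s : Finset ι) (k : ℕ) (x : ι → R) :
    (k + 1) * esymmOn s (k + 1) x = ∑ i ∈ s, x i * esymmOn (s.erase i) k x := by
  have euler : derivative (esymmPoly s x) = ∑ i ∈ s, C (x i) * esymmPoly (s.erase i) x := by
    simp only [esymmPoly, derivative_prod_finset, derivative_add, derivative_one, zero_add,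
      derivative_C_mul, derivative_X, mul_one]
    exact Finset.sum_congr rfl fun _ _ => mul_comm _ _
  have hk := congrArg (coeff · k) euler
  simp only [coeff_derivative, finsetSum_coeff, coeff_C_mul, coeff_esymmPoly] at hk
  rw [← hk, mul_comm]

end CommSemiring

lemma splits_esymmPoly (s : Finset ι) (x : ι → ℝ) : (esymmPoly s x).Splits :=
  Splits.prod fun _ _ => Splits.of_natDegree_le_one (by compute_degree)

lemma splits_derivative {p : ℝ[X]} (hp : p.Splits) : (derivative p).Splits := by
  rcases eq_or_ne (derivative p) 0 with h0 | h0
  · exact h0 ▸ Splits.zero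
  rw [splits_iff_card_roots] at hp ⊢
  have rolle := card_roots_le_derivative p
  have := card_roots' (derivative p)
  have := natDegree_derivative_lt (p := p) fun h => h0 (derivative_of_natDegree_zero h)
  omega

lemma laguerre_inequality {p : ℝ[X]} (hp : p.Splits) (t : ℝ) :
    p.eval t * (derivative (derivative p)).eval t ≤ (derivative p).eval t ^ 2 := by
  induction hp using Submonoid.closure_induction with
  | mem p hp => rcases hp with ⟨a, rfl⟩ | ⟨a, rfl⟩ <;> simp
  | one => simp
  | mul p q _ _ hp hq =>
    simp only [derivative_mul, derivative_add, eval_add, eval_mul]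
    nlinarith [mul_le_mul_of_nonneg_left hp (sq_nonneg (q.eval t)),
      mul_le_mul_of_nonneg_left hq (sq_nonneg (p.eval t))]

lemma newton_inequality (s : Finset ι) (x : ι → ℝ) (k : ℕ) :
    (k + 2) * (esymmOn s k x * esymmOn s (k + 2) x) ≤ (k + 1) * esymmOn s (k + 1) x ^ 2 := by
  have hsplits : (derivative^[k] (esymmPoly s x)).Splits :=
    Function.Iterate.rec (fun p : ℝ[X] => p.Splits) (splits_esymmPoly s x)
      (fun _ hp => splits_derivative hp) k
  have h := laguerre_inequality hsplits 0
  simp only [← Function.iterate_succ_apply' derivative, ← coeff_zero_eq_eval_zero,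
    coeff_iterate_derivative, zero_add, coeff_esymmPoly, Nat.descFactorial_self, nsmul_eq_mul,
    Nat.factorial_succ, Nat.succ_eq_add_one, add_assoc, Nat.reduceAdd] at h
  push_cast at h
  have hpos : (0 : ℝ) < (k + 1) * k.factorial ^ 2 := by positivity
  exact le_of_mul_le_mul_left (by linarith) hpos

lemma esymmOn_mul_esymmOn_le_sq (s : Finset ι) (x : ι → ℝ) (k : ℕ) :
    esymmOn s k x * esymmOn s (k + 2) x ≤ esymmOn s (k + 1) x ^ 2 := by
  nlinarith [newton_inequality s x k, (k.cast_nonneg : (0 : ℝ) ≤ k),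
    sq_nonneg (esymmOn s (k + 1) x)]

/-- Membership in the Gårding cone `Γ_m` for vectors indexed by a finset; the index `k = 0`, where
`σ_0 = 1`, is included for the sake of induction. -/
def EsymmPos (s : Finset ι) (m : ℕ) (x : ι → ℝ) : Prop := ∀ k ≤ m, 0 < esymmOn s k x

lemma EsymmPos.mono {s : Finset ι} {k m : ℕ} {x : ι → ℝ} (h : EsymmPos s m x) (hkm : k ≤ m) :
    EsymmPos s k x := fun j hj => h j (hj.trans hkm)

/-- The quotient `σ_{k+1} / σ_k`, which is superadditive on `Γ_k`. -/
def esymmRatio (s : Finset ι) (k : ℕ) (x : ι → ℝ) : ℝ := esymmOn s (k + 1) x / esymmOn s k x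

variable [DecidableEq ι]

lemma EsymmPos.erase {s : Finset ι} {x : ι → ℝ} {i : ι} {m : ℕ} (h : EsymmPos s (m + 1) x)
    (hi : i ∈ s) : EsymmPos (s.erase i) m x := by
  induction m with
  | zero => simp [EsymmPos, esymmOn_zero]
  | succ m ih =>
    have ih := ih (h.mono (Nat.le_succ _))
    refine fun k hk => hk.lt_or_eq.elim (fun hlt => ih k (by omega)) ?_
    rintro rfl
    by_contra! hneg
    have h0 := ih m le_rfl
    have h1 := h (m + 1) (by omega)
    have h2 := h (m + 2) (by omega)
    rw [esymmOn_succ hi] at h1 h2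
    have newton := esymmOn_mul_esymmOn_le_sq (s.erase i) x m
    have hxi : 0 < x i := by nlinarith
    nlinarith [hxi, mul_pos h0 h2, mul_nonneg (neg_nonneg.2 hneg) h1.le]

lemma add_esymmRatio_erase {s : Finset ι} {x : ι → ℝ} {i : ι} {k : ℕ} (h : EsymmPos s (k + 1) x)
    (hi : i ∈ s) :
    x i + esymmRatio (s.erase i) k x = esymmOn s (k + 1) x / esymmOn (s.erase i) k x := by
  have := h.erase hi k le_rfl
  rw [esymmRatio, esymmOn_succ hi]
  field_simp
  ring

lemma add_esymmRatio_erase_pos {s : Finset ι} {x : ι → ℝ} {i : ι} {k : ℕ}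
    (h : EsymmPos s (k + 1) x) (hi : i ∈ s) : 0 < x i + esymmRatio (s.erase i) k x := by
  rw [add_esymmRatio_erase h hi]
  exact div_pos (h _ le_rfl) (h.erase hi k le_rfl)

/- Superadditivity of `esymmRatio` is proved by induction on `k` through this formula, in which the
quotient of order `k + 1` depends monotonically on the quotients of order `k`. -/
lemma mul_esymmRatio_succ {s : Finset ι} {x : ι → ℝ} {k : ℕ} (h : EsymmPos s (k + 1) x) :
    (k + 2) * esymmRatio s (k + 1) x
      = ∑ i ∈ s, (x i - x i ^ 2 / (x i + esymmRatio (s.erase i) k x)) := by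
  have euler := succ_mul_esymmOn s (k + 1) x
  push_cast at euler
  rw [esymmRatio, ← mul_div_assoc, show (k : ℝ) + 2 = k + 1 + 1 by ring, euler, Finset.sum_div]
  refine Finset.sum_congr rfl fun i hi => ?_
  have := h.erase hi k le_rfl
  have := h (k + 1) le_rfl
  rw [add_esymmRatio_erase h hi, eq_sub_of_add_eq (esymmOn_succ hi k x).symm]
  field_simp

lemma add_sq_div_le {a b p q r : ℝ} (hp : 0 < p) (hq : 0 < q) (hr : p + q ≤ r) :
    (a + b) ^ 2 / r ≤ a ^ 2 / p + b ^ 2 / q :=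
  calc (a + b) ^ 2 / r ≤ (a + b) ^ 2 / (p + q) := by gcongr
    _ ≤ a ^ 2 / p + b ^ 2 / q := by
      rw [div_add_div _ _ hp.ne' hq.ne', div_le_div_iff₀ (by positivity) (by positivity)]
      nlinarith [sq_nonneg (a * q - b * p)]

omit [DecidableEq ι] in
theorem EsymmPos.add_and_esymmRatio_add_le {s : Finset ι} {k : ℕ} {x y : ι → ℝ}
    (hx : EsymmPos s k x) (hy : EsymmPos s k y) :
    EsymmPos s k (x + y) ∧ esymmRatio s k x + esymmRatio s k y ≤ esymmRatio s k (x + y) := by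
  classical
  induction k generalizing s with
  | zero => simp [EsymmPos, esymmRatio, esymmOn_zero, esymmOn_one, Finset.sum_add_distrib]
  | succ k ih =>
    obtain ⟨pos, ratio⟩ := ih (hx.mono k.le_succ) (hy.mono k.le_succ)
    have hxy : EsymmPos s (k + 1) (x + y) := by
      refine fun j hj => hj.lt_or_eq.elim (fun hlt => pos j (by omega)) ?_
      rintro rfl
      refine (div_pos_iff_of_pos_right (pos k le_rfl)).1 (ratio.trans_lt' ?_)
      exact add_pos (div_pos (hx _ le_rfl) (hx _ k.le_succ))
        (div_pos (hy _ le_rfl) (hy _ k.le_succ))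
    refine ⟨hxy, le_of_mul_le_mul_left ?_ (by positivity : (0 : ℝ) < k + 2)⟩
    rw [mul_add, mul_esymmRatio_succ hx, mul_esymmRatio_succ hy, mul_esymmRatio_succ hxy,
      ← Finset.sum_add_distrib]
    refine Finset.sum_le_sum fun i hi => ?_
    have ratio_erase := (ih (hx.erase hi) (hy.erase hi)).2
    have := add_sq_div_le (a := x i) (b := y i) (add_esymmRatio_erase_pos hx hi)
      (add_esymmRatio_erase_pos hy hi)
      (r := (x + y) i + esymmRatio (s.erase i) k (x + y))
      (by simp only [Pi.add_apply]; linarith)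
    simp only [Pi.add_apply] at this ⊢
    linarith

end ElementarySymmetric

section ConvexCone

variable {M : Type*} [NormedAddCommGroup M] [NormedSpace ℝ M] {K : ConvexCone ℝ M} {x y : M}

open Pointwise in
lemma add_mem_of_mem_closure (hK : IsOpen (K : Set M)) (hx : x ∈ K) (hy : y ∈ K.closure) :
    x + y ∈ K := by
  obtain ⟨a, ha, c, hc, hac⟩ := hK.add_closure K ▸ Set.add_mem_add hx hy
  exact hac ▸ K.add_mem ha hc

lemma mem_closure_of_forall_add_smul_mem (h : ∀ t : ℝ, 0 < t → x + t • y ∈ K) :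
    x ∈ K.closure := by
  have hlim : Filter.Tendsto (fun t : ℝ => x + t • y) (nhdsWithin 0 (Set.Ioi 0)) (nhds x) := by
    have hcont : Continuous fun t : ℝ => x + t • y := by fun_prop
    simpa using (hcont.tendsto 0).mono_left nhdsWithin_le_nhds
  exact mem_closure_of_tendsto hlim (Filter.mem_of_superset self_mem_nhdsWithin h)

lemma smul_mem_closure_of_nonneg (hK : (K : Set M).Nonempty) {c : ℝ} (hc : 0 ≤ c)
    (hx : x ∈ K.closure) : c • x ∈ K.closure := by
  rcases hc.eq_or_lt with rfl | hc
  · obtain ⟨y, hy⟩ := hK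
    rw [zero_smul]
    exact mem_closure_of_forall_add_smul_mem (y := y) fun t ht => by
      simpa using K.smul_mem ht hy
  · exact K.closure.smul_mem hc hx

end ConvexCone

section GardingCone

variable {n k m : ℕ} {x y : Fin n → ℝ}

lemma mem_gardingCone_iff : x ∈ gardingCone n m ↔ EsymmPos Finset.univ m x := by
  refine ⟨fun h k hk => ?_, fun h k _ hk => h k hk⟩
  rcases k.eq_zero_or_pos with rfl | hpos
  · simp [esymmOn_zero]
  · exact h k hpos hk

lemma add_mem_gardingCone (hx : x ∈ gardingCone n m) (hy : y ∈ gardingCone n m) :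
    x + y ∈ gardingCone n m := by
  rw [mem_gardingCone_iff] at *
  exact (hx.add_and_esymmRatio_add_le hy).1

lemma esymm_smul (c : ℝ) (x : Fin n → ℝ) : esymm n k (c • x) = c ^ k * esymm n k x := by
  rw [esymm, esymm, Finset.mul_sum]
  refine Finset.sum_congr rfl fun t ht => ?_
  simp [Finset.prod_mul_distrib, (Finset.mem_powersetCard.1 ht).2]

lemma smul_mem_gardingCone (hx : x ∈ gardingCone n m) {c : ℝ} (hc : 0 < c) :
    c • x ∈ gardingCone n m := by
  intro k h1 h2
  rw [esymm_smul]
  exact mul_pos (pow_pos hc k) (hx k h1 h2)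

/-- The Gårding cone as a convex cone in the sense of Mathlib. -/
def gardingConvexCone (n m : ℕ) : ConvexCone ℝ (Fin n → ℝ) where
  carrier := gardingCone n m
  smul_mem' _ hc _ hx := smul_mem_gardingCone hx hc
  add_mem' _ hx _ hy := add_mem_gardingCone hx hy

lemma convex_gardingCone (n m : ℕ) : Convex ℝ (gardingCone n m) :=
  (gardingConvexCone n m).convex

lemma continuous_esymm (n k : ℕ) : Continuous (esymm n k) := by
  unfold esymm
  fun_prop

lemma isOpen_gardingCone (n m : ℕ) : IsOpen (gardingCone n m) := by
  have : gardingCone n m = ⋂ k ∈ Finset.Icc 1 m, {x | 0 < esymm n k x} := by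
    ext x
    simp [gardingCone]
  rw [this]
  exact isOpen_biInter_finset fun k _ => isOpen_lt continuous_const (continuous_esymm n k)

lemma add_mem_gardingCone_of_mem_closure (hx : x ∈ gardingCone n m)
    (hy : y ∈ closure (gardingCone n m)) : x + y ∈ gardingCone n m :=
  add_mem_of_mem_closure (K := gardingConvexCone n m) (isOpen_gardingCone n m) hx hy

lemma esymm_eq_of_map_eq (h : Finset.univ.val.map x = Finset.univ.val.map y) (k : ℕ) :
    esymm n k x = esymm n k y := by
  rw [esymm, esymm, ← Finset.esymm_map_val, ← Finset.esymm_map_val, h]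

lemma esymm_comp_perm (k : ℕ) (x : Fin n → ℝ) (e : Equiv.Perm (Fin n)) :
    esymm n k (x ∘ e) = esymm n k x :=
  esymm_eq_of_map_eq (by rw [← Multiset.map_map, Multiset.map_univ_val_equiv]) k

lemma esymm_pos_of_nonneg (hx : ∀ i, 0 ≤ x i) (hk : k ≤ Fintype.card {i // x i ≠ 0}) :
    0 < esymm n k x := by
  rw [Fintype.card_subtype] at hk
  obtain ⟨t, ht, htk⟩ := Finset.exists_subset_card_eq hk
  refine Finset.sum_pos' (fun t _ => Finset.prod_nonneg fun i _ => hx i)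
    ⟨t, Finset.mem_powersetCard_univ.2 htk, Finset.prod_pos fun i hi => ?_⟩
  exact (hx i).lt_of_ne' (Finset.mem_filter.1 (ht hi)).2

lemma esymm_eq_zero_of_card_lt (hk : Fintype.card {i // x i ≠ 0} < k) : esymm n k x = 0 := by
  rw [Fintype.card_subtype] at hk
  refine Finset.sum_eq_zero fun t ht => ?_
  rw [← (Finset.mem_powersetCard.1 ht).2] at hk
  obtain ⟨i, hit, hi⟩ := Finset.exists_mem_notMem_of_card_lt_card hk
  exact Finset.prod_eq_zero hit (by simpa using hi)

/- `-1 / x i` is a root of the generating polynomial, whose coefficients are nonnegative and whose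
constant coefficient is `1`. -/
lemma nonneg_of_forall_esymm_nonneg (hx : ∀ k, 0 ≤ esymm n k x) (i : Fin n) : 0 ≤ x i := by
  by_contra! hi
  have root : (esymmPoly Finset.univ x).eval (-1 / x i) = 0 := by
    rw [esymmPoly, Polynomial.eval_prod]
    refine Finset.prod_eq_zero (Finset.mem_univ i) ?_
    simp [mul_div_cancel₀ _ hi.ne]
  rw [Polynomial.eval_eq_sum_range, Finset.sum_range_succ'] at root
  simp only [coeff_esymmPoly, esymmOn_zero, pow_zero, mul_one] at root
  have ht : 0 ≤ -1 / x i := div_nonneg_of_nonpos (by norm_num) hi.le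
  have := Finset.sum_nonneg fun k (_ : k ∈ Finset.range (esymmPoly Finset.univ x).natDegree) =>
    mul_nonneg (hx (k + 1)) (pow_nonneg ht (k + 1))
  simp only [esymm, esymmOn] at this root
  linarith

end GardingCone
/-! ### Eigenvalues of Hermitian matrices -/

section HermitianMatrix

open Matrix

open Polynomial in
lemma prod_X_sub_C_eq_prod_map {ι R : Type*} [Fintype ι] [CommRing R] (d : ι → R) :
    ∏ i, (X - C (d i)) = ((Finset.univ.val.map d).map fun a => X - C a).prod := by
  rw [Multiset.map_map]
  rfl

variable {ι 𝕜 : Type*} [Fintype ι] [DecidableEq ι] [RCLike 𝕜] {A B : Matrix ι ι 𝕜}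

lemma mulVec_mem_of_mem_doublyStochastic {s : Set (ι → ℝ)} (hs : Convex ℝ s)
    (hperm : ∀ x ∈ s, ∀ σ : Equiv.Perm ι, x ∘ σ ∈ s) {M : Matrix ι ι ℝ}
    (hM : M ∈ doublyStochastic ℝ ι) {x : ι → ℝ} (hx : x ∈ s) : M *ᵥ x ∈ s := by
  obtain ⟨w, hw0, hw1, rfl⟩ := exists_eq_sum_perm_of_mem_doublyStochastic hM
  simp only [Matrix.sum_mulVec, Matrix.smul_mulVec, Matrix.permMatrix_mulVec]
  exact hs.sum_mem (fun σ _ => hw0 σ) hw1 fun σ _ => hperm x hx σ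

lemma norm_inner_sq_mem_doublyStochastic {E : Type*} [NormedAddCommGroup E]
    [InnerProductSpace 𝕜 E] (v b : OrthonormalBasis ι 𝕜 E) :
    (Matrix.of fun i j => ‖inner 𝕜 (v j) (b i)‖ ^ 2) ∈ doublyStochastic ℝ ι := by
  refine mem_doublyStochastic_iff_sum.2 ⟨fun i j => sq_nonneg _, fun i => ?_, fun j => ?_⟩
  · simp [v.sum_sq_norm_inner_right]
  · simp [b.sum_sq_norm_inner_left]

lemma re_dotProduct_mulVec_eq_sum (hA : A.IsHermitian) (w : EuclideanSpace 𝕜 ι) :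
    RCLike.re (star w.ofLp ⬝ᵥ A *ᵥ w.ofLp)
      = ∑ j, ‖inner 𝕜 (hA.eigenvectorBasis j) w‖ ^ 2 * hA.eigenvalues j := by
  set v := hA.eigenvectorBasis
  have eigen (j : ι) : inner 𝕜 (v j) (toEuclideanLin A w) = hA.eigenvalues j * inner 𝕜 (v j) w := by
    rw [← isSymmetric_toEuclideanLin_iff.2 hA, toLpLin_apply, hA.mulVec_eigenvectorBasis,
      WithLp.toLp_smul, WithLp.toLp_ofLp, inner_smul_left_eq_smul, RCLike.real_smul_eq_coe_mul]
  have pair : star w.ofLp ⬝ᵥ A *ᵥ w.ofLp = inner 𝕜 w (toEuclideanLin A w) := by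
    rw [EuclideanSpace.inner_eq_star_dotProduct, dotProduct_comm]
    rfl
  rw [pair, ← v.sum_inner_mul_inner, map_sum]
  refine Finset.sum_congr rfl fun j _ => ?_
  rw [eigen, mul_left_comm, RCLike.re_ofReal_mul, inner_mul_symm_re_eq_norm, norm_mul,
    norm_inner_symm, ← sq, mul_comm]

theorem re_dotProduct_mulVec_mem {s : Set (ι → ℝ)} (hs : Convex ℝ s)
    (hperm : ∀ x ∈ s, ∀ σ : Equiv.Perm ι, x ∘ σ ∈ s) (hA : A.IsHermitian)
    (h : hA.eigenvalues ∈ s) (b : OrthonormalBasis ι 𝕜 (EuclideanSpace 𝕜 ι)) :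
    (fun i => RCLike.re (star (b i).ofLp ⬝ᵥ A *ᵥ (b i).ofLp)) ∈ s := by
  convert mulVec_mem_of_mem_doublyStochastic hs hperm
    (norm_inner_sq_mem_doublyStochastic hA.eigenvectorBasis b) h using 1
  ext i
  exact re_dotProduct_mulVec_eq_sum hA (b i)

lemma smul_add_smul_one_eq_cfc (hA : A.IsHermitian) (c t : ℝ) :
    c • A + t • 1 = cfc (fun x => c * x + t) A := by
  rw [cfc_add_const t _ A, cfc_const_mul_id c A, Algebra.algebraMap_eq_smul_one]

variable {n k m : ℕ} {A B : Matrix (Fin n) (Fin n) 𝕜}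

lemma continuous_charpoly_coeff {R : Type*} [CommRing R] [TopologicalSpace R]
    [IsTopologicalSemiring R] (k : ℕ) :
    Continuous fun M : Matrix ι ι R => M.charpoly.coeff k := by
  have (M : Matrix ι ι R) : M.charpoly.coeff k =
      MvPolynomial.eval (fun p : ι × ι => M p.1 p.2) ((charpoly.univ R ι).coeff k) :=
    (charpoly.univ_coeff_eval₂Hom ι (RingHom.id R) (fun p : ι × ι => M p.1 p.2) k).symm
  simp_rw [this]
  exact (MvPolynomial.continuous_eval _).comp (by fun_prop)

open Polynomial in
lemma esymm_eigenvalues_of_charpoly_eq (hA : A.IsHermitian) {d : Fin n → ℝ}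
    (h : A.charpoly = ∏ i, (X - C (d i : 𝕜))) : esymm n k hA.eigenvalues = esymm n k d := by
  refine esymm_eq_of_map_eq (Multiset.map_injective (RCLike.ofReal_injective (K := 𝕜)) ?_) k
  rw [Multiset.map_map, Multiset.map_map]
  exact hA.roots_charpoly_eq_eigenvalues.symm.trans
    (by rw [h, prod_X_sub_C_eq_prod_map, roots_multiset_prod_X_sub_C]; rfl)

open Polynomial in
lemma charpoly_coeff_eq_esymm_eigenvalues (hA : A.IsHermitian) (hk : k ≤ n) :
    A.charpoly.coeff (n - k) = ((-1) ^ k * esymm n k hA.eigenvalues : ℝ) := by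
  rw [hA.charpoly_eq, prod_X_sub_C_eq_prod_map, Multiset.prod_X_sub_C_coeff _ (by simp),
    Finset.esymm_map_val]
  simp [esymm, Nat.sub_sub_self hk]

lemma continuous_esymm_eigenvalues {T : Type*} [TopologicalSpace T]
    {A : T → Matrix (Fin n) (Fin n) 𝕜} (hA : ∀ x, (A x).IsHermitian) (hcont : Continuous A) :
    Continuous fun x => esymm n k (hA x).eigenvalues := by
  rcases le_or_gt k n with hk | hk
  · have (x : T) : esymm n k (hA x).eigenvalues
        = (-1) ^ k * RCLike.re ((A x).charpoly.coeff (n - k)) := by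
      rw [charpoly_coeff_eq_esymm_eigenvalues (hA x) hk, RCLike.ofReal_re, ← mul_assoc,
        ← mul_pow]
      simp
    simp_rw [this]
    exact continuous_const.mul
      (RCLike.continuous_re.comp ((continuous_charpoly_coeff _).comp hcont))
  · have (x : T) : esymm n k (hA x).eigenvalues = 0 :=
      esymm_eq_zero_of_card_lt ((Fintype.card_subtype_le _).trans_lt (by simpa using hk))
    simp_rw [this]
    exact continuous_const

lemma eigenvalues_add_mem_gardingCone {C : Matrix (Fin n) (Fin n) 𝕜}
    (hA : A.IsHermitian) (hB : B.IsHermitian) (hC : C.IsHermitian) (h : C = A + B)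
    (hAm : hA.eigenvalues ∈ gardingCone n m) (hBm : hB.eigenvalues ∈ gardingCone n m) :
    hC.eigenvalues ∈ gardingCone n m := by
  have hperm : ∀ x ∈ gardingCone n m, ∀ σ : Equiv.Perm (Fin n), x ∘ σ ∈ gardingCone n m :=
    fun x hx σ k h1 h2 => (esymm_comp_perm k x σ).symm ▸ hx k h1 h2
  set b := hC.eigenvectorBasis
  convert add_mem_gardingCone
    (re_dotProduct_mulVec_mem (convex_gardingCone n m) hperm hA hAm b)
    (re_dotProduct_mulVec_mem (convex_gardingCone n m) hperm hB hBm b) using 1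
  ext i
  rw [hC.eigenvalues_eq]
  simp [b, h, add_mulVec]

lemma esymm_eigenvalues_smul_add_smul_one {c t : ℝ} (hA : A.IsHermitian)
    (hB : B.IsHermitian) (h : B = c • A + t • 1) :
    esymm n k hB.eigenvalues = esymm n k (fun i => c * hA.eigenvalues i + t) :=
  esymm_eigenvalues_of_charpoly_eq hB (by rw [h, smul_add_smul_one_eq_cfc hA, hA.charpoly_cfc_eq])

open scoped ComplexOrder

lemma eigenvalues_mem_gardingCone_of_posSemidef (hA : A.PosSemidef) (hr : m ≤ A.rank) :
    hA.isHermitian.eigenvalues ∈ gardingCone n m := by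
  intro k _ hk
  refine esymm_pos_of_nonneg (fun i => hA.eigenvalues_nonneg i) (hk.trans ?_)
  rwa [← hA.isHermitian.rank_eq_card_non_zero_eigs]

lemma posSemidef_of_esymm_nonneg (hA : A.IsHermitian) (hr : A.rank ≤ m)
    (h : ∀ k ≤ m, 0 ≤ esymm n k hA.eigenvalues) : A.PosSemidef := by
  refine hA.posSemidef_iff_eigenvalues_nonneg.2 (nonneg_of_forall_esymm_nonneg fun k => ?_)
  rcases le_or_gt k m with hk | hk
  · exact h k hk
  · rw [hA.rank_eq_card_non_zero_eigs] at hr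
    exact (esymm_eq_zero_of_card_lt (hr.trans_lt hk)).ge

end HermitianMatrix
/-! ### The Levi form of a real bilinear form -/

section LeviForm

/-- Continuous real linear maps, typed through the normed space structures of `E` and `F`: for
`F = ℝ` this gives the instances carried by `fderiv`, which those of `E →L[ℝ] ℝ` only unfold to. -/
abbrev RealCLM (E F : Type*) [NormedAddCommGroup E] [NormedSpace ℝ E] [NormedAddCommGroup F]
    [NormedSpace ℝ F] :=
  E →L[ℝ] F

/-- Real bilinear forms, the type of second derivatives of functions `E → ℝ`. -/
abbrev RealBilin (E : Type*) [NormedAddCommGroup E] [NormedSpace ℝ E] := RealCLM E (RealCLM E ℝ)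

variable {E : Type*} [NormedAddCommGroup E] [InnerProductSpace ℂ E]

/-- The Hermitian form `∑ B_{jk̄} η̄_j ζ_k` obtained from the `(1,1)`-part of a real bilinear form
`B`, e.g. the complex Hessian of a function when `B` is its real Hessian. The formula symmetrises
`B`, so that the form is Hermitian for every `B`. -/
def leviForm (B : RealBilin E) (η : E) : E →ₗ[ℂ] ℂ where
  toFun ζ := (1 / 8 : ℂ) *
    ((B η ζ + B ζ η + B (I • η) (I • ζ) + B (I • ζ) (I • η) : ℝ)
      + I * (B (I • η) ζ + B ζ (I • η) - B η (I • ζ) - B (I • ζ) η : ℝ))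
  map_add' ζ ξ := by
    simp only [smul_add, map_add, add_apply]
    push_cast
    ring
  map_smul' c ζ := by
    have hc : c • ζ = c.re • ζ + c.im • I • ζ := by
      conv_lhs => rw [← re_add_im c, add_smul, mul_smul]
      rfl
    have hIc : I • c • ζ = c.re • I • ζ - c.im • ζ := by
      rw [hc, smul_add, smul_comm I c.re, smul_comm I c.im, smul_smul I I, I_mul_I]
      simp [sub_eq_add_neg]
    conv_rhs => rw [← re_add_im c]
    rw [hIc, hc]
    simp only [map_add, map_sub, map_smul, add_apply, sub_apply, smul_apply, smul_eq_mul]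
    apply Complex.ext <;> simp <;> ring

/-- The quadratic form `ζ ↦ ∑ B_{jk̄} ζ̄_j ζ_k` of `leviForm B`. -/
def levi (B : RealBilin E) (ζ : E) : ℝ := (B ζ ζ + B (I • ζ) (I • ζ)) / 4

variable (A B : RealBilin E) (c : ℝ) (η ζ : E)

lemma leviForm_apply : leviForm B η ζ = (1 / 8 : ℂ) *
    ((B η ζ + B ζ η + B (I • η) (I • ζ) + B (I • ζ) (I • η) : ℝ)
      + I * (B (I • η) ζ + B ζ (I • η) - B η (I • ζ) - B (I • ζ) η : ℝ)) := rfl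

lemma leviForm_self : leviForm B ζ ζ = levi B ζ := by
  rw [leviForm_apply, levi]
  push_cast
  ring

lemma star_leviForm : star (leviForm B η ζ) = leviForm B ζ η := by
  simp only [leviForm_apply, star_mul', star_add, RCLike.star_def, conj_ofReal, conj_I, map_div₀,
    map_one, map_ofNat]
  push_cast
  ring

lemma levi_smul (w : ℂ) : levi B (w • ζ) = ‖w‖ ^ 2 * levi B ζ := by
  have : (levi B (w • ζ) : ℂ) = (‖w‖ ^ 2 * levi B ζ : ℝ) := by
    rw [← leviForm_self, map_smul, ← star_leviForm, map_smul, smul_eq_mul, smul_eq_mul, star_mul',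
      star_leviForm, leviForm_self, ← mul_assoc, RCLike.star_def, mul_conj']
    push_cast
    rfl
  exact_mod_cast this

lemma leviForm_add : leviForm (A + B) η ζ = leviForm A η ζ + leviForm B η ζ := by
  simp only [leviForm_apply, add_apply]
  push_cast
  ring

lemma leviForm_smul : leviForm (c • B) η ζ = c * leviForm B η ζ := by
  simp only [leviForm_apply, smul_apply, smul_eq_mul]
  push_cast
  ring

lemma levi_add : levi (A + B) ζ = levi A ζ + levi B ζ := by
  simp only [levi, add_apply]
  ring

lemma levi_real_smul : levi (c • B) ζ = c * levi B ζ := by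
  simp only [levi, smul_apply, smul_eq_mul]
  ring

variable (E) in
/-- The real part of the inner product, as a real bilinear form. -/
def reInner : RealBilin E :=
  letI := InnerProductSpace.complexToReal (G := E)
  innerSL ℝ

lemma reInner_apply : reInner E η ζ = (inner ℂ η ζ).re := rfl

lemma leviForm_reInner : leviForm (reInner E) η ζ = inner ℂ η ζ / 2 := by
  simp only [leviForm_apply, reInner_apply, inner_smul_left, inner_smul_right]
  rw [← inner_conj_symm ζ η]
  generalize inner ℂ η ζ = w
  apply Complex.ext <;> simp <;> ring

lemma levi_reInner : levi (reInner E) ζ = ‖ζ‖ ^ 2 / 2 := by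
  have : (levi (reInner E) ζ : ℂ) = (‖ζ‖ ^ 2 / 2 : ℝ) := by
    rw [← leviForm_self, leviForm_reInner, inner_self_eq_norm_sq_to_K]
    push_cast
    rfl
  exact_mod_cast this

variable {n : ℕ} (b : OrthonormalBasis (Fin n) ℂ E)

/-- The matrix of `leviForm B` in an orthonormal basis. -/
def leviMatrix : Matrix (Fin n) (Fin n) ℂ := fun j k => leviForm B (b j) (b k)

lemma isHermitian_leviMatrix : (leviMatrix B b).IsHermitian :=
  Matrix.ext fun _ _ => star_leviForm B _ _

lemma leviMatrix_add : leviMatrix (A + B) b = leviMatrix A b + leviMatrix B b :=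
  Matrix.ext fun _ _ => leviForm_add A B _ _

lemma leviMatrix_smul : leviMatrix (c • B) b = c • leviMatrix B b :=
  Matrix.ext fun _ _ => leviForm_smul B c _ _

lemma leviMatrix_reInner : leviMatrix (reInner E) b = (1 / 2 : ℝ) • 1 := by
  ext j k
  rw [leviMatrix, leviForm_reInner, orthonormal_iff_ite.1 b.orthonormal, Matrix.smul_apply,
    Matrix.one_apply]
  split_ifs <;> simp

lemma continuous_leviMatrix : Continuous fun B : RealBilin E => leviMatrix B b := by
  refine continuous_matrix fun j k => ?_
  simp only [leviMatrix, leviForm_apply]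
  fun_prop

lemma leviMatrix_mulVec (j : Fin n) :
    (leviMatrix B b).mulVec (b.repr ζ).ofLp j = leviForm B (b j) ζ := by
  conv_rhs => rw [← b.sum_repr ζ, map_sum]
  simp only [map_smul, smul_eq_mul, mul_comm ((b.repr ζ).ofLp _)]
  rfl

lemma dotProduct_leviMatrix_mulVec :
    star (b.repr ζ).ofLp ⬝ᵥ (leviMatrix B b).mulVec (b.repr ζ).ofLp = levi B ζ := by
  rw [← leviForm_self, ← star_leviForm]
  conv_rhs => rw [← b.sum_repr ζ, map_sum, star_sum]
  refine Finset.sum_congr rfl fun j _ => ?_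
  rw [leviMatrix_mulVec, b.sum_repr, map_smul, smul_eq_mul, star_mul', star_leviForm]
  rfl

lemma rank_leviMatrix_add_finrank_ker : (leviMatrix B b).rank
    + Module.finrank ℂ (LinearMap.ker (LinearMap.pi fun j => leviForm B (b j))) = n := by
  have : FiniteDimensional ℂ E := b.toBasis.finiteDimensional_of_finite
  have factor : LinearMap.pi (fun j => leviForm B (b j))
      = (leviMatrix B b).mulVecLin ∘ₗ b.repr.toLinearEquiv.trans (WithLp.linearEquiv 2 ℂ _) :=
    LinearMap.ext fun ζ => funext fun j => (leviMatrix_mulVec B ζ b j).symm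
  have rank_nullity := (LinearMap.pi fun j => leviForm B (b j)).finrank_range_add_finrank_ker
  rwa [Module.finrank_eq_card_basis b.toBasis, Fintype.card_fin, factor,
    LinearEquiv.range_comp, ← factor] at rank_nullity

end LeviForm

/-! ### The cone of real bilinear forms defined by the Gårding cone -/

section LeviCone

variable {E : Type*} [NormedAddCommGroup E] [InnerProductSpace ℂ E] {n : ℕ}
  (b : OrthonormalBasis (Fin n) ℂ E) {m : ℕ} {A B : RealBilin E}

/-- The convex cone of real bilinear forms whose Levi form has its eigenvalues in the Gårding
cone `Γ_m`. -/
def leviCone (m : ℕ) : ConvexCone ℝ (RealBilin E) where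
  carrier := {B | (isHermitian_leviMatrix B b).eigenvalues ∈ gardingCone n m}
  smul_mem' c hc B hB k hk hkm := by
    rw [esymm_eigenvalues_smul_add_smul_one (isHermitian_leviMatrix B b) _
      (c := c) (t := 0) (by rw [leviMatrix_smul, zero_smul, add_zero])]
    simpa only [add_zero] using! smul_mem_gardingCone hB hc k hk hkm
  add_mem' A hA B hB :=
    eigenvalues_add_mem_gardingCone _ _ (isHermitian_leviMatrix (A + B) b) (leviMatrix_add A B b)
      hA hB

lemma mem_leviCone :
    B ∈ leviCone b m ↔ (isHermitian_leviMatrix B b).eigenvalues ∈ gardingCone n m := Iff.rfl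

lemma isOpen_leviCone : IsOpen (leviCone b m : Set (RealBilin E)) := by
  have : (leviCone b m : Set (RealBilin E))
      = ⋂ k ∈ Finset.Icc 1 m, {B | 0 < esymm n k (isHermitian_leviMatrix B b).eigenvalues} := by
    ext x
    simp [mem_leviCone, gardingCone]
  rw [this]
  exact isOpen_biInter_finset fun k _ => isOpen_lt continuous_const
    (continuous_esymm_eigenvalues _ (continuous_leviMatrix b))

open scoped ComplexOrder in
lemma posSemidef_leviMatrix (h : ∀ ζ, 0 ≤ levi B ζ) : (leviMatrix B b).PosSemidef := by
  refine .of_dotProduct_mulVec_nonneg (isHermitian_leviMatrix B b) fun x => ?_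
  have := dotProduct_leviMatrix_mulVec B (b.repr.symm (WithLp.toLp 2 x)) b
  rw [LinearIsometryEquiv.apply_symm_apply] at this
  rw [this]
  exact_mod_cast h _

lemma mem_leviCone_of_levi_pos_on (h : ∀ ζ, 0 ≤ levi B ζ) (W : Submodule ℂ E)
    (hW : ∀ ζ ∈ W, ζ ≠ 0 → 0 < levi B ζ) (hmW : m ≤ Module.finrank ℂ W) : B ∈ leviCone b m := by
  have : FiniteDimensional ℂ E := b.toBasis.finiteDimensional_of_finite
  refine eigenvalues_mem_gardingCone_of_posSemidef (posSemidef_leviMatrix b h) ?_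
  have rank_nullity := rank_leviMatrix_add_finrank_ker B b
  have hdisj : Disjoint W (LinearMap.ker (LinearMap.pi fun j => leviForm B (b j))) := by
    refine Submodule.disjoint_def.2 fun ζ hζ hker => ?_
    by_contra hne
    have hzero : (leviMatrix B b).mulVec (b.repr ζ).ofLp = 0 :=
      funext fun j => (leviMatrix_mulVec B ζ b j).trans (congrFun hker j)
    have hlevi := dotProduct_leviMatrix_mulVec B ζ b
    rw [hzero, dotProduct_zero] at hlevi
    exact (hW ζ hζ hne).ne (by exact_mod_cast hlevi)
  have := Submodule.finrank_add_finrank_le_of_disjoint hdisj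
  rw [Module.finrank_eq_card_basis b.toBasis, Fintype.card_fin] at this
  omega

lemma mem_leviCone_of_levi_pos (hmn : m ≤ n) (h : ∀ ζ, ζ ≠ 0 → 0 < levi B ζ) :
    B ∈ leviCone b m := by
  refine mem_leviCone_of_levi_pos_on b (fun ζ => ?_) ⊤ (fun ζ _ => h ζ) ?_
  · rcases eq_or_ne ζ 0 with rfl | hζ
    · simp [levi]
    · exact (h ζ hζ).le
  · rwa [finrank_top, Module.finrank_eq_card_basis b.toBasis, Fintype.card_fin]

lemma reInner_mem_leviCone (hmn : m ≤ n) : reInner E ∈ leviCone b m :=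
  mem_leviCone_of_levi_pos b hmn fun ζ hζ => by
    rw [levi_reInner]
    have := norm_pos_iff.2 hζ
    positivity

lemma mem_closure_leviCone_of_levi_nonneg (hmn : m ≤ n) (h : ∀ ζ, 0 ≤ levi B ζ) :
    B ∈ (leviCone b m).closure :=
  mem_closure_of_forall_add_smul_mem fun t ht =>
    mem_leviCone_of_levi_pos b hmn fun ζ hζ => by
      rw [levi_add, levi_real_smul, levi_reInner]
      have := h ζ
      have := norm_pos_iff.2 hζ
      positivity

open scoped ComplexOrder in
lemma levi_nonneg_of_mem_closure_leviCone (hB : B ∈ (leviCone b m).closure)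
    (V : Submodule ℂ E) (hV : ∀ ζ ∈ V, ∀ η, B ζ η = 0 ∧ B η ζ = 0)
    (hnV : n ≤ Module.finrank ℂ V + m) (ζ : E) : 0 ≤ levi B ζ := by
  have : FiniteDimensional ℂ E := b.toBasis.finiteDimensional_of_finite
  have hker : V ≤ LinearMap.ker (LinearMap.pi fun j => leviForm B (b j)) := by
    refine fun ζ hζ => funext fun j => ?_
    have hIζ := V.smul_mem I hζ
    simp [leviForm_apply, hV _ hζ, hV _ hIζ]
  have hrank : (leviMatrix B b).rank ≤ m := by
    have := Submodule.finrank_mono hker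
    have := rank_leviMatrix_add_finrank_ker B b
    omega
  have hesymm (k : ℕ) (hk : k ≤ m) :
      0 ≤ esymm n k (isHermitian_leviMatrix B b).eigenvalues := by
    rcases k.eq_zero_or_pos with rfl | hk0
    · simp [esymm]
    · exact closure_minimal (fun A hA => (hA k hk0 hk).le) (isClosed_le continuous_const
        (continuous_esymm_eigenvalues _ (continuous_leviMatrix b))) hB
  have := (posSemidef_of_esymm_nonneg _ hrank hesymm).dotProduct_mulVec_nonneg (b.repr ζ).ofLp
  rw [dotProduct_leviMatrix_mulVec] at this
  exact_mod_cast this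

lemma mem_closure_leviCone_of_eigenvalues (hmn : m ≤ n)
    (h : (isHermitian_leviMatrix B b).eigenvalues ∈ closure (gardingCone n m)) :
    B ∈ (leviCone b m).closure := by
  refine mem_closure_of_forall_add_smul_mem (y := (2 : ℝ) • reInner E) fun t ht k hk hkm => ?_
  rw [esymm_eigenvalues_smul_add_smul_one (isHermitian_leviMatrix B b) _ (c := 1) (t := t) (by
    rw [leviMatrix_add, leviMatrix_smul, leviMatrix_smul, leviMatrix_reInner]
    simp [smul_smul])]
  have hconst : (fun _ => t) ∈ gardingCone n m := fun l _ hl =>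
    esymm_pos_of_nonneg (fun _ => ht.le) (by simpa [ht.ne'] using hl.trans hmn)
  convert add_mem_gardingCone_of_mem_closure hconst h k hk hkm using 2
  ext i
  simp [add_comm]

end LeviCone

/-! ### Real Hessians and the Laplacian -/

section Hessian

open Filter Topology

variable {E : Type*} [NormedAddCommGroup E] [NormedSpace ℝ E] {f g : E → ℝ} {x : E}

/-- The real Hessian of `f` at `x`, as a bilinear form. -/
def hess (f : E → ℝ) (x : E) : RealBilin E := fderiv ℝ (fderiv ℝ f : E → RealCLM E ℝ) x

lemma iteratedFDeriv_two_eq_hess (f : E → ℝ) (x ζ η : E) :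
    iteratedFDeriv ℝ 2 f x ![ζ, η] = hess f x ζ η :=
  iteratedFDeriv_two_apply f x _

lemma hess_add (hf : ContDiffAt ℝ 2 f x) (hg : ContDiffAt ℝ 2 g x) :
    hess (fun z => f z + g z) x = hess f x + hess g x := by
  ext ζ η
  rw [← iteratedFDeriv_two_eq_hess, fun_iteratedFDeriv_add_apply hf hg]
  simp only [add_apply, iteratedFDeriv_two_eq_hess]

lemma hess_sub (hf : ContDiffAt ℝ 2 f x) (hg : ContDiffAt ℝ 2 g x) :
    hess (fun z => f z - g z) x = hess f x - hess g x := by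
  ext ζ η
  rw [← iteratedFDeriv_two_eq_hess, fun_iteratedFDeriv_sub_apply hf hg]
  simp only [sub_apply, iteratedFDeriv_two_eq_hess]

lemma hess_const_mul (c : ℝ) (hf : ContDiffAt ℝ 2 f x) :
    hess (fun z => c * f z) x = c • hess f x := by
  ext ζ η
  rw [← iteratedFDeriv_two_eq_hess]
  change iteratedFDeriv ℝ 2 (c • f) x ![ζ, η] = _
  rw [iteratedFDeriv_const_smul_apply hf]
  simp only [smul_apply, iteratedFDeriv_two_eq_hess]

lemma hess_const (c : ℝ) : hess (fun _ : E => c) x = 0 := by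
  ext ζ η
  rw [← iteratedFDeriv_two_eq_hess, iteratedFDeriv_const_of_ne two_ne_zero]
  rfl

lemma hess_comp_add_right (f : E → ℝ) (a x : E) :
    hess (fun z => f (z + a)) x = hess f (x + a) := by
  ext ζ η
  simp only [← iteratedFDeriv_two_eq_hess, iteratedFDeriv_comp_add_right]

lemma continuous_hess (hf : ContDiff ℝ 2 f) : Continuous (hess f) :=
  (hf.fderiv_right (m := 1) (by norm_num)).continuous_fderiv one_ne_zero

lemma hess_comm (hf : ContDiff ℝ 2 f) (x ζ η : E) : hess f x ζ η = hess f x η ζ :=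
  hf.contDiffAt.isSymmSndFDerivAt (by simp) ζ η

lemma hasDerivAt_fderiv_add_smul (hf : ContDiffAt ℝ 2 f x) (ζ : E) :
    HasDerivAt (fun t : ℝ => fderiv ℝ f (x + t • ζ) ζ) (hess f x ζ ζ) 0 := by
  have hline : HasDerivAt (fun t : ℝ => x + t • ζ) ζ 0 := by
    simpa using ((hasDerivAt_id (0 : ℝ)).smul_const ζ).const_add x
  have hf' : HasFDerivAt (fderiv ℝ f : E → RealCLM E ℝ) (hess f x) (x + (0 : ℝ) • ζ) := by
    rw [zero_smul, add_zero]
    exact ((hf.fderiv_right (m := 1) (by norm_num)).differentiableAt one_ne_zero).hasFDerivAt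
  have hderiv : HasDerivAt (fun t : ℝ => (fderiv ℝ f (x + t • ζ) : RealCLM E ℝ)) (hess f x ζ) 0 :=
    hf'.comp_hasDerivAt 0 hline
  exact (hderiv.clm_apply (hasDerivAt_const _ ζ)).congr_deriv (by simp)

lemma hess_apply_self_nonneg_of_isLocalMin (hf : ContDiffAt ℝ 2 f x) (hmin : IsLocalMin f x)
    (ζ : E) : 0 ≤ hess f x ζ ζ := by
  have hline : Tendsto (fun t : ℝ => x + t • ζ) (𝓝 0) (𝓝 x) :=
    Continuous.tendsto' (by fun_prop) _ _ (by simp)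
  let g : ℝ → ℝ := fun t => f (x + t • ζ)
  have hg : ∀ᶠ t in 𝓝 0, HasDerivAt g (fderiv ℝ f (x + t • ζ) ζ) t := by
    filter_upwards [hline.eventually (hf.eventually (by simp))] with t ht
    refine (ht.differentiableAt two_ne_zero).hasFDerivAt.comp_hasDerivAt t ?_
    simpa using ((hasDerivAt_id t).smul_const ζ).const_add x
  have hg' : deriv (deriv g) 0 = hess f x ζ ζ := by
    rw [EventuallyEq.deriv_eq (hg.mono fun t ht => ht.deriv)]
    exact (hasDerivAt_fderiv_add_smul hf ζ).deriv
  have gmin : IsLocalMin g 0 := by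
    simpa [IsLocalMin, IsMinFilter, g] using hline.eventually hmin
  by_contra! hneg
  have gmax : IsLocalMax g 0 := isLocalMax_of_deriv_deriv_neg (hg' ▸ hneg) gmin.deriv_eq_zero
    hg.self_of_nhds.continuousAt
  have gconst : g =ᶠ[𝓝 0] fun _ => g 0 := by
    filter_upwards [gmin, gmax] with t h₁ h₂ using le_antisymm h₂ h₁
  have : deriv (deriv g) 0 = 0 := by simpa using gconst.deriv.deriv_eq
  linarith

lemma fderiv_apply_eq_zero_of_invariant {ζ : E} (hg : DifferentiableAt ℝ g x)
    (hinv : ∀ t : ℝ, g (x + t • ζ) = g x) : fderiv ℝ g x ζ = 0 := by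
  rw [← hg.lineDeriv_eq_fderiv, lineDeriv, funext hinv, deriv_const]

lemma hess_apply_eq_zero_of_invariant {ζ : E} (hg : ContDiff ℝ 2 g)
    (hinv : ∀ x, ∀ t : ℝ, g (x + t • ζ) = g x) (x η : E) : hess g x η ζ = 0 := by
  have hess_eq : HasFDerivAt (fun y => fderiv ℝ g y ζ) ((hess g x).flip ζ) x :=
    (((hg.fderiv_right (m := 1) (by norm_num)).differentiable one_ne_zero x).hasFDerivAt.clm_apply
      (hasFDerivAt_const ζ x)).congr_fderiv (by ext; simp [hess])
  rw [funext fun y => fderiv_apply_eq_zero_of_invariant (hg.differentiable two_ne_zero y) (hinv y)]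
    at hess_eq
  exact congr($(hess_eq.unique (hasFDerivAt_const 0 x)) η)

end Hessian

section Laplacian

open Filter Topology InnerProductSpace Laplacian

variable {E : Type*} [NormedAddCommGroup E] [InnerProductSpace ℝ E]

lemma hess_norm_sub_sq_apply (q z ζ η : E) :
    hess (fun z => ‖z - q‖ ^ 2) z ζ η = 2 * inner ℝ ζ η := by
  have hderiv (w : E) : HasFDerivAt (fun z => ‖z - q‖ ^ 2) (((2 : ℝ) • innerSL ℝ) (w - q)) w :=
    (((hasFDerivAt_id w).sub_const q).norm_sq).congr_fderiv (by ext; simp)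
  have hderiv' := (((2 : ℝ) • innerSL ℝ : E →L[ℝ] E →L[ℝ] ℝ).hasFDerivAt (x := z - q)).comp z
    ((hasFDerivAt_id z).sub_const q)
  rw [hess, funext fun w => (hderiv w).fderiv]
  exact congr($(hderiv'.fderiv) ζ η)

variable [FiniteDimensional ℝ E] {f : E → ℝ} {z : E}

lemma laplacian_eq_sum_hess (f : E → ℝ) (z : E) : Δ f z
    = ∑ i, hess f z (stdOrthonormalBasis ℝ E i) (stdOrthonormalBasis ℝ E i) := by
  simp only [laplacian_eq_iteratedFDeriv_stdOrthonormalBasis, iteratedFDeriv_two_eq_hess]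

lemma laplacian_nonneg_of_isLocalMin (hf : ContDiffAt ℝ 2 f z) (hmin : IsLocalMin f z) :
    0 ≤ Δ f z := by
  rw [laplacian_eq_sum_hess]
  exact Finset.sum_nonneg fun i _ => hess_apply_self_nonneg_of_isLocalMin hf hmin _

lemma laplacian_norm_sq (z : E) : Δ (fun z : E => ‖z‖ ^ 2) z = 2 * Module.finrank ℝ E := by
  have hess_norm_sq (ζ : E) : hess (fun z : E => ‖z‖ ^ 2) z ζ ζ = 2 * ‖ζ‖ ^ 2 := by
    simpa using hess_norm_sub_sq_apply 0 z ζ ζ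
  simp [laplacian_eq_sum_hess, hess_norm_sq, mul_comm]

lemma not_isLocalMax_of_laplacian_pos (hf : ContDiffAt ℝ 2 f z) (h : 0 < Δ f z) :
    ¬ IsLocalMax f z := fun hmax => by
  have := laplacian_nonneg_of_isLocalMin hf.neg hmax.neg
  rw [show (fun z => -f z) = -f from rfl, laplacian_neg, Pi.neg_apply] at this
  linarith

lemma le_of_laplacian_nonneg [Nontrivial E] {U s : Set E} {M : ℝ} (hU : IsOpen U)
    (hs : IsCompact s) (hUs : U ⊆ s) (hfs : ContinuousOn f s)
    (hfU : ∀ z ∈ U, ContDiffAt ℝ 2 f z ∧ 0 ≤ Δ f z) (hM : ∀ z ∈ s \ U, f z ≤ M) {p : E}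
    (hp : p ∈ s) : f p ≤ M := by
  obtain ⟨C, hC⟩ := hs.isBounded.exists_norm_le
  refine le_of_forall_pos_le_add fun ε hε => ?_
  set δ := ε / (C ^ 2 + 1)
  have : 0 < δ := by positivity
  have hq : ContDiff ℝ 2 fun z : E => ‖z‖ ^ 2 := contDiff_norm_sq ℝ
  obtain ⟨z, hz, hmax⟩ := hs.exists_isMaxOn ⟨p, hp⟩
    (hfs.add (hq.const_smul δ).continuous.continuousOn)
  have hzU : z ∉ U := fun hzU => by
    have hqz : ContDiffAt ℝ 2 (δ • fun z : E => ‖z‖ ^ 2) z := (hq.const_smul δ).contDiffAt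
    refine not_isLocalMax_of_laplacian_pos ((hfU z hzU).1.add hqz) ?_
      (hmax.isLocalMax (mem_of_superset (hU.mem_nhds hzU) hUs))
    rw [show (fun x => f x + (δ • fun z : E => ‖z‖ ^ 2) x) = f + δ • fun z => ‖z‖ ^ 2 from rfl,
      (hfU z hzU).1.laplacian_add hqz, laplacian_smul δ hq.contDiffAt, laplacian_norm_sq]
    have : (0 : ℝ) < Module.finrank ℝ E := mod_cast Module.finrank_pos
    have := (hfU z hzU).2
    simp only [smul_eq_mul]
    positivity
  have hpz : f p + δ * ‖p‖ ^ 2 ≤ f z + δ * ‖z‖ ^ 2 := hmax hp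
  have hzC : δ * ‖z‖ ^ 2 ≤ ε := by
    have : ‖z‖ ^ 2 ≤ C ^ 2 := pow_le_pow_left₀ (norm_nonneg z) (hC z hz) 2
    rw [div_mul_eq_mul_div, div_le_iff₀ (by positivity)]
    nlinarith
  have := hM z ⟨hz, hzU⟩
  have : 0 ≤ δ * ‖p‖ ^ 2 := by positivity
  linarith

end Laplacian

section PlanarLiouville

open Filter Topology InnerProductSpace Laplacian

variable {f : ℂ → ℝ} {M N r R ε : ℝ} {c p : ℂ}

lemma le_add_log_of_laplacian_nonneg (hf : ContDiff ℝ 2 f) (hΔ : ∀ z, 0 ≤ Δ f z) (hr : 0 < r)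
    (hfr : ∀ z ∈ sphere c r, f z ≤ N)
    (hfR : ∀ z ∈ sphere c R, f z ≤ N + ε * (Real.log R - Real.log r)) (hrp : r ≤ dist p c)
    (hpR : dist p c ≤ R) : f p ≤ N + ε * (Real.log (dist p c) - Real.log r) := by
  have hlog (z : ℂ) (hz : r ≤ dist z c) : HarmonicAt (fun z => Real.log ‖z - c‖) z :=
    AnalyticAt.harmonicAt_log_norm (by fun_prop) (dist_pos.1 (hr.trans_le hz) |> sub_ne_zero.2)
  have hG (z : ℂ) (hz : r ≤ dist z c) :
      ContDiffAt ℝ 2 (f - ε • fun z => Real.log ‖z - c‖) z ∧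
        Δ (f - ε • fun z => Real.log ‖z - c‖) z = Δ f z := by
    have hε := (hlog z hz).const_smul (c := ε)
    refine ⟨hf.contDiffAt.sub hε.1, ?_⟩
    rw [hf.contDiffAt.laplacian_sub hε.1, hε.2.self_of_nhds, Pi.zero_apply, sub_zero]
  have key := le_of_laplacian_nonneg (s := closedBall c R ∩ {z | r ≤ dist z c})
    (U := ball c R ∩ {z | r < dist z c}) (M := N - ε * Real.log r) (p := p)
    (f := f - ε • fun z => Real.log ‖z - c‖)
    (isOpen_ball.inter (isOpen_lt continuous_const (by fun_prop)))
    ((isCompact_closedBall c R).inter_right (isClosed_le continuous_const (by fun_prop)))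
    (Set.inter_subset_inter ball_subset_closedBall fun z (hz : r < dist z c) => hz.le)
    (fun z hz => (hG z hz.2).1.continuousAt.continuousWithinAt)
    (fun z hz => ⟨(hG z (le_of_lt hz.2)).1, (hΔ z).trans_eq (hG z (le_of_lt hz.2)).2.symm⟩)
    ?_ ⟨hpR, hrp⟩
  · simp only [Pi.sub_apply, Pi.smul_apply, smul_eq_mul, ← dist_eq_norm] at key
    linarith
  · rintro z ⟨⟨hzR, hzr⟩, hz⟩
    simp only [Pi.sub_apply, Pi.smul_apply, smul_eq_mul, ← dist_eq_norm]
    rcases (mem_closedBall.1 hzR).lt_or_eq with hlt | heq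
    · obtain heq : dist z c = r := le_antisymm (not_lt.1 fun h => hz ⟨hlt, h⟩) hzr
      rw [heq]
      linarith [hfr z heq]
    · rw [heq]
      linarith [hfR z heq]

lemma le_of_forall_sphere_le_of_laplacian_nonneg (hf : ContDiff ℝ 2 f) (hM : ∀ z, f z ≤ M)
    (hΔ : ∀ z, 0 ≤ Δ f z) (hr : 0 < r) (hfr : ∀ z ∈ sphere c r, f z ≤ N) (hrp : r ≤ dist p c) :
    f p ≤ N := by
  have bound (ε : ℝ) (hε : 0 < ε) : f p ≤ N + ε * (Real.log (dist p c) - Real.log r) := by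
    have hlog : Tendsto (fun R => N + ε * (Real.log R - Real.log r)) atTop atTop :=
      tendsto_atTop_add_const_left _ _
        ((tendsto_atTop_add_const_right _ _ Real.tendsto_log_atTop).const_mul_atTop hε)
    obtain ⟨R, hMR, hpR⟩ :=
      ((hlog.eventually_ge_atTop M).and (eventually_ge_atTop (dist p c))).exists
    exact le_add_log_of_laplacian_nonneg hf hΔ hr hfr (fun z _ => (hM z).trans hMR) hrp hpR
  have lim : Tendsto (fun ε => N + ε * (Real.log (dist p c) - Real.log r)) (𝓝[>] 0) (𝓝 N) :=
    (Continuous.tendsto' (by fun_prop) _ _ (by simp)).mono_left nhdsWithin_le_nhds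
  exact ge_of_tendsto lim (eventually_mem_nhdsWithin.mono bound)

theorem eq_of_laplacian_nonneg (hf : ContDiff ℝ 2 f) (hM : ∀ z, f z ≤ M) (hΔ : ∀ z, 0 ≤ Δ f z)
    (p c : ℂ) : f p = f c := by
  suffices H : ∀ p c, f p ≤ f c from le_antisymm (H p c) (H c p)
  intro p c
  rcases eq_or_ne p c with rfl | hpc
  · rfl
  refine le_of_forall_pos_le_add fun δ hδ => ?_
  obtain ⟨ρ, hρ, hball⟩ := Metric.continuous_iff.1 hf.continuous c δ hδ
  have hr : 0 < min (ρ / 2) (dist p c) := lt_min (half_pos hρ) (dist_pos.2 hpc)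
  refine le_of_forall_sphere_le_of_laplacian_nonneg hf hM hΔ hr (fun z hz => ?_)
    (min_le_right _ _)
  have := hball z ((mem_sphere.1 hz).trans_le (min_le_left _ _) |>.trans_lt (half_lt_self hρ))
  linarith [(abs_lt.1 this).2]

end PlanarLiouville

section Levi

open InnerProductSpace Laplacian

variable {E : Type*} [NormedAddCommGroup E] [InnerProductSpace ℂ E] {g : E → ℝ}

lemma hess_norm_sub_sq (q z : E) : hess (fun z => ‖z - q‖ ^ 2) z = (2 : ℝ) • reInner E := by
  let _ := InnerProductSpace.complexToReal (G := E)
  ext ζ η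
  exact hess_norm_sub_sq_apply q z ζ η

lemma contDiff_norm_sub_sq (q : E) : ContDiff ℝ 2 fun z : E => ‖z - q‖ ^ 2 := by
  let _ := InnerProductSpace.complexToReal (G := E)
  exact (contDiff_id.sub contDiff_const).norm_sq ℝ

lemma hess_sub_const_mul_norm_sub_sq (hg : ContDiff ℝ 2 g) (δ : ℝ) (q z : E) :
    hess (fun z => g z - δ * ‖z - q‖ ^ 2) z = hess g z - (2 * δ) • reInner E := by
  have hq := contDiff_norm_sub_sq q
  rw [hess_sub hg.contDiffAt (contDiff_const.mul hq).contDiffAt, hess_const_mul _ hq.contDiffAt,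
    hess_norm_sub_sq, smul_smul, mul_comm]

lemma laplacian_comp_add_smul (hg : ContDiff ℝ 2 g) (p ζ : E) (w : ℂ) :
    Δ (fun w : ℂ => g (p + w • ζ)) w = 4 * levi (hess g (p + w • ζ)) ζ := by
  have hess_line (a b : ℂ) : iteratedFDeriv ℝ 2 (fun w : ℂ => g (p + w • ζ)) w ![a, b]
      = hess g (p + w • ζ) (a • ζ) (b • ζ) := by
    let line : ℂ →L[ℝ] E := (ContinuousLinearMap.toSpanSingleton ℂ ζ).restrictScalars ℝ
    have hgp : ContDiff ℝ 2 fun z => g (p + z) := hg.comp (contDiff_const.add contDiff_id)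
    have h := line.iteratedFDeriv_comp_right (i := 2) hgp w le_rfl
    rw [iteratedFDeriv_comp_add_left] at h
    exact (DFunLike.congr_fun h ![a, b]).trans
      (iteratedFDeriv_two_apply g (p + w • ζ) fun i => line (![a, b] i))
  simp only [laplacian_eq_iteratedFDeriv_complexPlane, hess_line, levi, one_smul]
  ring

lemma eq_of_levi_hess_nonneg (hg : ContDiff ℝ 2 g) {M : ℝ} (hM : ∀ z, g z ≤ M)
    (hlevi : ∀ z ζ, 0 ≤ levi (hess g z) ζ) (p q : E) : g p = g q := by
  have := eq_of_laplacian_nonneg (f := fun w : ℂ => g (p + w • (q - p)))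
    (hg.comp (f := fun w : ℂ => p + w • (q - p)) (by fun_prop)) (fun w => hM _)
    (fun w => ?_) 0 1
  · simpa using this
  · rw [laplacian_comp_add_smul hg]
    exact mul_nonneg zero_le_four (hlevi _ _)

end Levi

/-! ### Convolutions -/

section Convolution

open ContinuousLinearMap Filter Topology
open scoped Convolution

variable {E F : Type*} [NormedAddCommGroup E] [MeasureSpace E]
  [NormedAddCommGroup F] [NormedSpace ℝ F] {k : E → ℝ} {f : E → F}

lemma convolution_comp_add_right (k : E → ℝ) (f : E → F) (a x : E) :
    (k ⋆ fun z => f (z + a)) x = (k ⋆ f) (x + a) := by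
  simp only [convolution_lsmul, sub_add_eq_add_sub]

lemma convolution_eq_of_invariant {u : E → ℝ} {v : E} (hv : ∀ x, u (x + v) = u x) (x : E) :
    (k ⋆ u) (x + v) = (k ⋆ u) x := by
  rw [← convolution_comp_add_right, funext hv]

variable [NormedSpace ℝ E] [FiniteDimensional ℝ E] [BorelSpace E]
  [(volume : Measure E).IsAddHaarMeasure]

lemma convolution_comm_of_real (k f : E → ℝ) : k ⋆ f = f ⋆ k := by
  ext x
  simp only [convolution_lsmul, convolution_lsmul_swap (f := k), smul_eq_mul, mul_comm]

lemma convolutionExists_of_continuous (h : HasCompactSupport k ∨ HasCompactSupport f)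
    (hk : Continuous k) (hf : Continuous f) : ConvolutionExists k f (lsmul ℝ ℝ) volume :=
  h.elim
    (fun h => h.convolutionExists_left_of_continuous_right _ hk.locallyIntegrable hf)
    (fun h => h.convolutionExists_right _ hk.locallyIntegrable hf)

lemma continuous_convolution (h : HasCompactSupport k ∨ HasCompactSupport f)
    (hk : Continuous k) (hf : Continuous f) : Continuous (k ⋆ f) :=
  h.elim
    (fun h => h.continuous_convolution_left _ hk hf.locallyIntegrable)
    (fun h => h.continuous_convolution_right _ hk.locallyIntegrable hf)

lemma hasFDerivAt_convolution_of_hasCompactSupport_left (hc : HasCompactSupport k)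
    (hk : Continuous k) (hf : ContDiff ℝ 1 f) (x : E) :
    HasFDerivAt (k ⋆ f) ((k ⋆ (fderiv ℝ f : E → RealCLM E F)) x) x := by
  have hf' : Continuous (fderiv ℝ f) := hf.continuous_fderiv one_ne_zero
  have integrand_continuous : Continuous fun p : E × E => k p.2 • fderiv ℝ f (p.1 - p.2) :=
    (hk.comp continuous_snd).smul (hf'.comp (continuous_fst.sub continuous_snd))
  obtain ⟨C, hC⟩ := ((isCompact_closedBall x 1).prod
    hc.isCompact).exists_bound_of_continuousOn integrand_continuous.continuousOn
  refine hasFDerivAt_integral_of_dominated_of_fderiv_le (bound := (tsupport k).indicator fun _ => C)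
    (F' := fun x y => k y • fderiv ℝ f (x - y)) (closedBall_mem_nhds x one_pos)
    (.of_forall fun x => ?_)
    (convolutionExists_of_continuous (.inl hc) hk hf.continuous x).integrable ?_
    (.of_forall fun y x hx => ?_) ?_ (.of_forall fun y x _ => ?_)
  · exact (hk.smul (hf.continuous.comp (continuous_sub_left x))).aestronglyMeasurable
  · exact (hk.smul (hf'.comp (continuous_sub_left x))).aestronglyMeasurable
  · by_cases hy : y ∈ tsupport k
    · rw [Set.indicator_of_mem hy]
      exact hC (x, y) ⟨hx, hy⟩
    · rw [Set.indicator_of_notMem hy, image_eq_zero_of_notMem_tsupport hy, zero_smul, norm_zero]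
  · rw [integrable_indicator_iff hc.isCompact.measurableSet]
    exact integrableOn_const hc.isCompact.measure_lt_top.ne
  · exact (((hf.differentiable one_ne_zero (x - y)).hasFDerivAt).comp x
      ((hasFDerivAt_id x).sub_const y)).const_smul (k y)

lemma hasFDerivAt_convolution (h : HasCompactSupport k ∨ HasCompactSupport f)
    (hk : Continuous k) (hf : ContDiff ℝ 1 f) (x : E) :
    HasFDerivAt (k ⋆ f) ((k ⋆ (fderiv ℝ f : E → RealCLM E F)) x) x :=
  h.elim (fun h => hasFDerivAt_convolution_of_hasCompactSupport_left h hk hf x)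
    (fun h => h.hasFDerivAt_convolution_right (lsmul ℝ ℝ) hk.locallyIntegrable hf x)

lemma fderiv_convolution (h : HasCompactSupport k ∨ HasCompactSupport f)
    (hk : Continuous k) (hf : ContDiff ℝ 1 f) :
    fderiv ℝ (k ⋆ f) = k ⋆ (fderiv ℝ f : E → RealCLM E F) :=
  funext fun x => (hasFDerivAt_convolution h hk hf x).fderiv

lemma contDiff_one_convolution (h : HasCompactSupport k ∨ HasCompactSupport f)
    (hk : Continuous k) (hf : ContDiff ℝ 1 f) : ContDiff ℝ 1 (k ⋆ f) := by
  rw [contDiff_one_iff_fderiv, fderiv_convolution h hk hf]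
  exact ⟨fun x => (hasFDerivAt_convolution h hk hf x).differentiableAt,
    continuous_convolution (h.imp_right fun h => h.fderiv ℝ) hk (hf.continuous_fderiv one_ne_zero)⟩

lemma contDiff_two_convolution (h : HasCompactSupport k ∨ HasCompactSupport f)
    (hk : Continuous k) (hf : ContDiff ℝ 2 f) : ContDiff ℝ 2 (k ⋆ f) := by
  have hf₁ : ContDiff ℝ 1 f := hf.of_le one_le_two
  rw [← one_add_one_eq_two, contDiff_succ_iff_fderiv, fderiv_convolution h hk hf₁]
  exact ⟨fun x => (hasFDerivAt_convolution h hk hf₁ x).differentiableAt, by simp,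
    contDiff_one_convolution (h.imp_right fun h => h.fderiv ℝ) hk (hf.fderiv_right (by norm_num))⟩

lemma hess_convolution {f : E → ℝ} (h : HasCompactSupport k ∨ HasCompactSupport f)
    (hk : Continuous k) (hf : ContDiff ℝ 2 f) : hess (k ⋆ f) = k ⋆ hess f := by
  ext1 x
  rw [hess, fderiv_convolution h hk (hf.of_le one_le_two),
    fderiv_convolution (h.imp_right fun h => h.fderiv ℝ) hk (hf.fderiv_right (by norm_num))]
  rfl

lemma hess_convolution_left {f : E → ℝ} (hc : HasCompactSupport k) (hk : ContDiff ℝ 2 k)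
    (hf : Continuous f) : hess (k ⋆ f) = f ⋆ hess k := by
  rw [convolution_comm_of_real, hess_convolution (.inr hc) hf hk]

lemma contDiff_two_convolution_left {f : E → ℝ} (hc : HasCompactSupport k) (hk : ContDiff ℝ 2 k)
    (hf : Continuous f) : ContDiff ℝ 2 (k ⋆ f) := by
  rw [convolution_comm_of_real]
  exact contDiff_two_convolution (.inr hc) hf hk

lemma tendsto_convolution {ι : Type*} {l : Filter ι} {u : ι → E → ℝ} {v : E → ℝ}
    (hu : ∀ i, Continuous (u i)) (hv : Continuous v) (hc : HasCompactSupport f) (hf : Continuous f)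
    (huv : ∀ s, IsCompact s → TendstoUniformlyOn u v l s) (x : E) :
    Tendsto (fun i => (u i ⋆ f) x) l (𝓝 ((v ⋆ f) x)) := by
  have exist (w : E → ℝ) (hw : Continuous w) :=
    (convolutionExists_of_continuous (.inr hc) hw hf x).integrable
  have hnorm : Integrable fun y => ‖f (x - y)‖ := by
    simpa using (exist (fun _ => 1) continuous_const).norm
  set C := ∫ y, ‖f (x - y)‖
  have : 0 ≤ C := integral_nonneg fun _ => norm_nonneg _
  have hs : IsCompact ((fun y => x - y) '' tsupport f) := hc.isCompact.image (by fun_prop)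
  rw [Metric.tendsto_nhds]
  intro ε hε
  filter_upwards [Metric.tendstoUniformlyOn_iff.1 (huv _ hs) (ε / (C + 1)) (by positivity)]
    with i hi
  rw [dist_comm, dist_eq_norm, convolution_def, convolution_def,
    ← integral_sub (exist v hv) (exist _ (hu i))]
  calc ‖∫ y, (v y • f (x - y) - u i y • f (x - y))‖
      ≤ ∫ y, ε / (C + 1) * ‖f (x - y)‖ := by
        refine norm_integral_le_of_norm_le (hnorm.const_mul _) (.of_forall fun y => ?_)
        rw [← sub_smul, norm_smul]
        by_cases hy : x - y ∈ tsupport f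
        · exact mul_le_mul_of_nonneg_right (hi y ⟨x - y, hy, sub_sub_self x y⟩).le (norm_nonneg _)
        · simp [image_eq_zero_of_notMem_tsupport hy]
    _ = ε * (C / (C + 1)) := by rw [integral_const_mul]; ring
    _ < ε := mul_lt_of_lt_one_right hε ((div_lt_one (by positivity)).2 (lt_add_one C))

lemma tendsto_fderiv_convolution {ι : Type*} {l : Filter ι} {u : ι → E → ℝ} {v : E → ℝ}
    (hu : ∀ i, Continuous (u i)) (hv : Continuous v) (hc : HasCompactSupport k)
    (hk : ContDiff ℝ 1 k) (huv : ∀ s, IsCompact s → TendstoUniformlyOn u v l s) (x : E) :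
    Tendsto (fun i => (fderiv ℝ (k ⋆ u i) x : RealCLM E ℝ)) l (𝓝 (fderiv ℝ (k ⋆ v) x)) := by
  simp only [convolution_comm_of_real k, fderiv_convolution (.inr hc) hv hk,
    fun i => fderiv_convolution (.inr hc) (hu i) hk]
  exact tendsto_convolution hu hv (hc.fderiv ℝ) (hk.continuous_fderiv one_ne_zero) huv x

lemma tendsto_hess_convolution {ι : Type*} {l : Filter ι} {u : ι → E → ℝ} {v : E → ℝ}
    (hu : ∀ i, Continuous (u i)) (hv : Continuous v) (hc : HasCompactSupport k)
    (hk : ContDiff ℝ 2 k) (huv : ∀ s, IsCompact s → TendstoUniformlyOn u v l s) (x : E) :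
    Tendsto (fun i => hess (k ⋆ u i) x) l (𝓝 (hess (k ⋆ v) x)) := by
  have hc' : HasCompactSupport (hess k) := (hc.fderiv ℝ).fderiv ℝ
  simp only [hess_convolution_left hc hk hv, fun i => hess_convolution_left hc hk (hu i)]
  exact tendsto_convolution (F := RealBilin E) hu hv hc' (continuous_hess hk) huv x

variable [CompleteSpace F]

lemma map_convolution {G : Type*} [NormedAddCommGroup G] [NormedSpace ℝ G] [CompleteSpace G]
    (A : F →L[ℝ] G) (h : HasCompactSupport k ∨ HasCompactSupport f)
    (hk : Continuous k) (hf : Continuous f) (x : E) :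
    A ((k ⋆ f) x) = (k ⋆ fun y => A (f y)) x := by
  simp only [convolution_lsmul, ← map_smul]
  exact (A.integral_comp_comm (convolutionExists_of_continuous h hk hf x).integrable).symm

lemma convolution_mem_closure_convexCone {K : ConvexCone ℝ F} (hK : (K : Set F).Nonempty)
    (hc : HasCompactSupport k) (hk : Continuous k) (hk₀ : 0 ≤ k) (hf : Continuous f)
    (hfK : ∀ y, f y ∈ K.closure) (x : E) : (k ⋆ f) x ∈ K.closure := by
  have support_sub : ∀ y ∉ tsupport k, k y • f (x - y) = 0 := fun y hy => by
    rw [image_eq_zero_of_notMem_tsupport hy, zero_smul]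
  rw [convolution_lsmul, ← setIntegral_eq_integral_of_forall_compl_eq_zero support_sub]
  have hfin : volume (tsupport k) ≠ ⊤ := hc.isCompact.measure_lt_top.ne
  by_cases hnull : volume (tsupport k) = 0
  · simpa [Measure.restrict_eq_zero.2 hnull] using
      smul_mem_closure_of_nonneg hK le_rfl (hfK 0)
  have average_mem : (⨍ y in tsupport k, k y • f (x - y)) ∈ (K.closure : Set F) :=
    K.closure.convex.set_average_mem isClosed_closure hnull hfin
      (.of_forall fun y => smul_mem_closure_of_nonneg hK (hk₀ y) (hfK _))
      (convolutionExists_of_continuous (.inl hc) hk hf x).integrable.integrableOn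
  rw [← measure_smul_setAverage _ hfin]
  exact smul_mem_closure_of_nonneg hK measureReal_nonneg average_mem

end Convolution

/-! ### Weak solutions -/

section Lipschitz

open Filter Topology
open scoped NNReal

variable {X ι : Type*} [PseudoMetricSpace X] {L : ℝ≥0} {l : Filter ι}
  {u : ι → X → ℝ} {v : X → ℝ}

lemma lipschitzWith_of_tendsto [l.NeBot] (hu : ∀ i, LipschitzWith L (u i))
    (huv : ∀ x, Tendsto (fun i => u i x) l (𝓝 (v x))) : LipschitzWith L v :=
  .of_dist_le_mul fun x y =>
    le_of_tendsto ((huv x).dist (huv y)) (.of_forall fun i => (hu i).dist_le_mul x y)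

lemma lipschitzWith_comp_add_right {E : Type*} [SeminormedAddCommGroup E] {f : E → ℝ}
    (hf : LipschitzWith L f) (a : E) : LipschitzWith L fun z => f (z + a) :=
  .of_dist_le_mul fun x y => by
    simpa only [dist_add_right] using hf.dist_le_mul (x + a) (y + a)

lemma tendstoUniformlyOn_of_lipschitzWith (hu : ∀ i, LipschitzWith L (u i))
    (huv : ∀ x, Tendsto (fun i => u i x) l (𝓝 (v x))) {s : Set X} (hs : IsCompact s) :
    TendstoUniformlyOn u v l s := by
  have equicontinuous : EquicontinuousOn u s :=
    (LipschitzWith.uniformEquicontinuous u L hu).equicontinuous.equicontinuousOn s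
  refine UniformOnFun.tendsto_iff_tendstoUniformlyOn.1
    ((EquicontinuousOn.tendsto_uniformOnFun_iff_pi' (𝔖 := {s}) ?_ ?_ l v).2 ?_) s rfl
  · rintro t rfl
    exact hs
  · rintro t rfl
    exact equicontinuous
  · exact tendsto_pi_nhds.2 fun x => huv x

end Lipschitz

section WeakSolution

open Filter Topology
open scoped Convolution NNReal

variable {E : Type*} [NormedAddCommGroup E] [NormedSpace ℝ E] [MeasureSpace E]
  {K : ConvexCone ℝ (RealBilin E)} {L : ℝ≥0} {u : E → ℝ}

/-- Normalised weak solutions `u` of "`hess u` lies in the boundary of the cone `K`". Being a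
subsolution is expressed through mollification, being a supersolution by comparison on balls with
strict `C²` subsolutions; both conditions survive translations and locally uniform limits. -/
structure IsWeakSolution (K : ConvexCone ℝ (RealBilin E)) (L : ℝ≥0) (u : E → ℝ) : Prop where
  mem_Icc : ∀ x, u x ∈ Set.Icc (0 : ℝ) 1
  lipschitz : LipschitzWith L u
  hess_convolution_mem : ∀ φ : E → ℝ, ContDiff ℝ 2 φ → HasCompactSupport φ → 0 ≤ φ →
    ∀ x, hess (φ ⋆ u) x ∈ K.closure
  comparison : ∀ (h : E → ℝ) (x : E) (r M : ℝ), ContDiff ℝ 2 h → 0 < r →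
    (∀ z ∈ closedBall x r, hess h z ∈ K) → (∀ z ∈ sphere x r, M ≤ u z - h z) → M ≤ u x - h x

namespace IsWeakSolution

lemma comp_add_right (hu : IsWeakSolution K L u) (a : E) :
    IsWeakSolution K L fun z => u (z + a) where
  mem_Icc x := hu.mem_Icc (x + a)
  lipschitz := lipschitzWith_comp_add_right hu.lipschitz a
  hess_convolution_mem φ hφ hc hφ₀ x := by
    rw [funext (convolution_comp_add_right φ u a), hess_comp_add_right]
    exact hu.hess_convolution_mem φ hφ hc hφ₀ (x + a)
  comparison h x r M hh hr hK hM := by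
    have := hu.comparison (fun z => h (z + -a)) (x + a) r M (by fun_prop) hr
      (fun z hz => ?_) (fun z hz => ?_)
    · simpa using this
    · rw [hess_comp_add_right]
      refine hK _ ?_
      rwa [mem_closedBall, ← dist_add_right _ _ a, neg_add_cancel_right]
    · have := hM (z + -a)
      rw [mem_sphere, ← dist_add_right _ _ a, neg_add_cancel_right] at this
      exact this hz

variable [BorelSpace E] [FiniteDimensional ℝ E] [(volume : Measure E).IsAddHaarMeasure]

lemma of_contDiff (hK : IsOpen (K : Set (RealBilin E)))
    (hK₀ : ∀ B : RealBilin E, (∀ ζ, 0 ≤ B ζ ζ) → B ∈ K.closure) (hu : ContDiff ℝ 2 u)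
    (hmem : ∀ x, u x ∈ Set.Icc (0 : ℝ) 1) (hL : LipschitzWith L u)
    (hcl : ∀ z, hess u z ∈ K.closure) (hnot : ∀ z, hess u z ∉ K) : IsWeakSolution K L u where
  mem_Icc := hmem
  lipschitz := hL
  hess_convolution_mem φ hφ hc hφ₀ x := by
    have hne : (K : Set (RealBilin E)).Nonempty := closure_nonempty_iff.1 ⟨_, hcl x⟩
    rw [hess_convolution (.inl hc) hφ.continuous hu]
    exact convolution_mem_closure_convexCone hne hc hφ.continuous hφ₀ (continuous_hess hu) hcl x
  comparison h x r M hh hr hhK hM := by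
    by_contra! hlt
    obtain ⟨z, hz, hmin⟩ := (isCompact_closedBall x r).exists_isMinOn
      ⟨x, mem_closedBall_self hr.le⟩ (hu.continuous.sub hh.continuous).continuousOn
    have hzr : dist z x ≠ r := fun h =>
      ((hM z h).trans (hmin (mem_closedBall_self hr.le))).not_gt hlt
    have hloc : IsLocalMin (fun z => u z - h z) z :=
      hmin.isLocalMin (closedBall_mem_nhds_of_mem (lt_of_le_of_ne hz hzr))
    have hdiff : hess u z - hess h z ∈ K.closure := by
      rw [← hess_sub hu.contDiffAt hh.contDiffAt]
      exact hK₀ _ (hess_apply_self_nonneg_of_isLocalMin (hu.sub hh).contDiffAt hloc)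
    refine hnot z ?_
    rw [← sub_add_cancel (hess u z) (hess h z), add_comm]
    exact add_mem_of_mem_closure hK (hhK z hz) hdiff

lemma of_tendsto {ι : Type*} {l : Filter ι} [l.NeBot] {v : ι → E → ℝ}
    (hv : ∀ i, IsWeakSolution K L (v i)) (hvu : ∀ x, Tendsto (fun i => v i x) l (𝓝 (u x))) :
    IsWeakSolution K L u := by
  have hcont (i : ι) : Continuous (v i) := (hv i).lipschitz.continuous
  have hL : LipschitzWith L u := lipschitzWith_of_tendsto (fun i => (hv i).lipschitz) hvu
  have hunif : ∀ s, IsCompact s → TendstoUniformlyOn v u l s := fun s hs =>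
    tendstoUniformlyOn_of_lipschitzWith (fun i => (hv i).lipschitz) hvu hs
  refine ⟨fun x => isClosed_Icc.mem_of_tendsto (hvu x) (.of_forall fun i => (hv i).mem_Icc x), hL,
    fun φ hφ hc hφ₀ x => ?_, fun h x r M hh hr hK hM => ?_⟩
  · refine isClosed_closure.mem_of_tendsto
      (tendsto_hess_convolution hcont hL.continuous hc hφ hunif x)
      (.of_forall fun i => (hv i).hess_convolution_mem φ hφ hc hφ₀ x)
  · refine le_of_forall_pos_le_add fun ε hε => ?_
    suffices ∀ᶠ i in l, M - ε ≤ v i x - h x from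
      sub_le_iff_le_add.1 (ge_of_tendsto ((hvu x).sub_const (h x)) this)
    filter_upwards [Metric.tendstoUniformlyOn_iff.1 (hunif _ (isCompact_sphere x r)) ε hε] with i hi
    refine (hv i).comparison h x r (M - ε) hh hr hK fun z hz => ?_
    linarith [hM z hz, (abs_lt.1 (hi z hz)).2]

end IsWeakSolution

end WeakSolution

section Mollification

open scoped Convolution NNReal

variable {E : Type*} [NormedAddCommGroup E] [NormedSpace ℝ E] [HasContDiffBump E]
  [FiniteDimensional ℝ E] [MeasureSpace E] [BorelSpace E] [(volume : Measure E).IsAddHaarMeasure]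
  {L : ℝ≥0} {u : E → ℝ}

lemma exists_dist_normed_convolution_le (hu : LipschitzWith L u) {ε : ℝ} (hε : 0 < ε) :
    ∃ ψ : ContDiffBump (0 : E), ∀ x, dist ((ψ.normed volume ⋆ u) x) (u x) ≤ ε := by
  have hr : 0 < ε / (L + 1) := by positivity
  refine ⟨⟨ε / (L + 1) / 2, ε / (L + 1), half_pos hr, half_lt_self hr⟩, fun x =>
    ContDiffBump.dist_normed_convolution_le hu.continuous.aestronglyMeasurable fun y hy => ?_⟩
  calc dist (u y) (u x) ≤ L * (ε / (L + 1)) :=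
        (hu.dist_le_mul y x).trans (mul_le_mul_of_nonneg_left (mem_ball.1 hy).le L.2)
    _ ≤ (L + 1) * (ε / (L + 1)) := by gcongr; linarith
    _ = ε := by field_simp

lemma normed_convolution_mem_Icc (ψ : ContDiffBump (0 : E)) (hu : Continuous u) {a b : ℝ}
    (hab : ∀ x, u x ∈ Set.Icc a b) (x : E) : (ψ.normed volume ⋆ u) x ∈ Set.Icc a b := by
  rw [Real.Icc_eq_closedBall] at hab ⊢
  exact dist_convolution_le (dist_nonneg.trans (hab x)) ψ.support_normed_eq.subset
    ψ.nonneg_normed ψ.integral_normed hu.aestronglyMeasurable fun y _ => hab y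

lemma IsWeakSolution.hess_normed_convolution_mem {K : ConvexCone ℝ (RealBilin E)}
    (hu : IsWeakSolution K L u) (ψ : ContDiffBump (0 : E)) (x : E) :
    hess (ψ.normed volume ⋆ u) x ∈ K.closure :=
  hu.hess_convolution_mem _ ψ.contDiff_normed ψ.hasCompactSupport_normed ψ.nonneg_normed x

lemma IsWeakSolution.contDiff_normed_convolution {K : ConvexCone ℝ (RealBilin E)}
    (hu : IsWeakSolution K L u) (ψ : ContDiffBump (0 : E)) :
    ContDiff ℝ 2 (ψ.normed volume ⋆ u) :=
  contDiff_two_convolution_left ψ.hasCompactSupport_normed ψ.contDiff_normed hu.lipschitz.continuous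

end Mollification

section Touching

open Filter Topology
open scoped NNReal

variable {E : Type*} [NormedAddCommGroup E] [InnerProductSpace ℂ E] [MeasureSpace E]
  {K : ConvexCone ℝ (RealBilin E)} {L : ℝ≥0} {u h : E → ℝ}

/-- The comparison condition is a viscosity condition: strict subsolutions cannot touch a weak
solution from below. -/
lemma IsWeakSolution.hess_notMem_of_forall_sub_le (hK : IsOpen (K : Set (RealBilin E)))
    (hu : IsWeakSolution K L u) (hh : ContDiff ℝ 2 h) {x : E}
    (hmin : ∀ y, u x - h x ≤ u y - h y) : hess h x ∉ K := by
  intro hx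
  have perturbed : ∀ᶠ p : ℝ × E in 𝓝 (0, x), hess h p.2 - (2 * p.1) • reInner E ∈ K := by
    have hcont : Continuous fun p : ℝ × E => hess h p.2 - (2 * p.1) • reInner E :=
      ((continuous_hess hh).comp continuous_snd).sub (by fun_prop)
    exact hcont.continuousAt.eventually (hK.mem_nhds (by simpa using hx))
  obtain ⟨r, hr, hball⟩ := nhds_basis_closedBall.eventually_iff.1 perturbed
  have key := hu.comparison (fun z => h z - r * ‖z - x‖ ^ 2) x r (u x - h x + r * r ^ 2)
    (hh.sub (contDiff_const.mul (contDiff_norm_sub_sq x))) hr (fun z hz => ?_) fun z hz => ?_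
  · simp only [sub_self, norm_zero, ne_eq, OfNat.ofNat_ne_zero, not_false_eq_true, zero_pow,
      mul_zero, sub_zero, add_le_iff_nonpos_right] at key
    exact key.not_gt (by positivity)
  · rw [hess_sub_const_mul_norm_sub_sq hh]
    refine hball (x := (r, z)) ?_
    rw [← closedBall_prod_same]
    exact ⟨by simp [abs_of_pos hr], hz⟩
  · rw [mem_sphere_iff_norm.1 hz]
    linarith [hmin z]

end Touching

section Invariant

open scoped Convolution NNReal

variable {E : Type*} [NormedAddCommGroup E] [InnerProductSpace ℂ E] [FiniteDimensional ℂ E]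
  [MeasureSpace E] [BorelSpace E] [(volume : Measure E).IsAddHaarMeasure] {n m : ℕ}
  {b : OrthonormalBasis (Fin n) ℂ E} {L : ℝ≥0} {u : E → ℝ}

/-- The Levi form of a mollification `g` of `u` has rank at most `m`, so `g` is plurisubharmonic. -/
theorem IsWeakSolution.eq_of_invariant (hu : IsWeakSolution (leviCone b m) L u)
    (V : Submodule ℂ E) (hV : ∀ v ∈ V, ∀ x, u (x + v) = u x)
    (hnV : n ≤ Module.finrank ℂ V + m) (p q : E) : u p = u q := by
  refine eq_of_forall_dist_le fun ε hε => ?_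
  obtain ⟨ψ, hψ⟩ := exists_dist_normed_convolution_le hu.lipschitz (half_pos hε)
  set g := ψ.normed volume ⋆ u
  have hgC : ContDiff ℝ 2 g := hu.contDiff_normed_convolution ψ
  have hgV (v : E) (hv : v ∈ V) (x : E) (t : ℝ) : g (x + t • v) = g x := by
    have htv : t • v ∈ V := by simpa only [coe_smul] using V.smul_mem (t : ℂ) hv
    exact convolution_eq_of_invariant (hV _ htv) x
  have hlevi (z ζ : E) : 0 ≤ levi (hess g z) ζ := by
    refine levi_nonneg_of_mem_closure_leviCone b (hu.hess_normed_convolution_mem ψ z) V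
      (fun v hv η => ?_) hnV ζ
    have := hess_apply_eq_zero_of_invariant hgC (fun x t => hgV v hv x t) z η
    exact ⟨by rw [hess_comm hgC, this], this⟩
  have hpq : g p = g q := eq_of_levi_hess_nonneg hgC
    (fun z => (normed_convolution_mem_Icc ψ hu.lipschitz.continuous hu.mem_Icc z).2) hlevi p q
  calc dist (u p) (u q) ≤ dist (g p) (u p) + dist (g p) (u q) := dist_triangle_left _ _ _
    _ ≤ ε / 2 + ε / 2 := add_le_add (hψ p) (hpq ▸ hψ q)
    _ = ε := add_halves ε

end Invariant

/-! ### The squared gradient -/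

section GradSq

open ContinuousLinearMap
open scoped Convolution

variable {E : Type*} [NormedAddCommGroup E] [NormedSpace ℝ E] {g φ χ : E → ℝ}

/-- The bilinear form `dg ⊗ dg` at `z`. Its mollifications measure local energies of `g`. -/
def gradSq (g : E → ℝ) (z : E) : RealBilin E := (fderiv ℝ g z).smulRight (fderiv ℝ g z)

lemma gradSq_apply (z ζ η : E) : gradSq g z ζ η = fderiv ℝ g z ζ * fderiv ℝ g z η := rfl

lemma continuous_gradSq (hg : ContDiff ℝ 1 g) : Continuous (gradSq g) := by
  have h : Continuous (fderiv ℝ g) := hg.continuous_fderiv one_ne_zero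
  exact (smulRightL ℝ E (RealCLM E ℝ)).continuous₂.comp (h.prodMk h)

lemma hess_sq (hg : ContDiff ℝ 2 g) (x : E) :
    hess (fun z => g z ^ 2) x = (2 * g x) • hess g x + (2 : ℝ) • gradSq g x := by
  have hg' (z : E) : HasFDerivAt g (fderiv ℝ g z) z :=
    (hg.differentiable two_ne_zero z).hasFDerivAt
  have fderiv_sq : fderiv ℝ (fun z => g z ^ 2) = fun z => (2 * g z) • fderiv ℝ g z := by
    ext1 z
    simpa using ((hg' z).pow 2).fderiv
  have hg'' : HasFDerivAt (fderiv ℝ g : E → RealCLM E ℝ) (hess g x) x :=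
    ((hg.fderiv_right (m := 1) (by norm_num)).differentiable one_ne_zero x).hasFDerivAt
  rw [hess, fderiv_sq, (((hg' x).const_mul 2).fun_smul hg'').fderiv]
  congr 1
  ext ζ η
  simp [gradSq_apply, mul_assoc]

variable [FiniteDimensional ℝ E] [MeasureSpace E] [BorelSpace E]
  [(volume : Measure E).IsAddHaarMeasure]

lemma convolution_gradSq_apply (hc : HasCompactSupport φ) (hφ : Continuous φ)
    (hg : ContDiff ℝ 1 g) (x ζ η : E) : (φ ⋆ gradSq g) x ζ η =
      (φ ⋆ fun y => fderiv ℝ g y ζ * fderiv ℝ g y η) x :=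
  let A : RealBilin E →L[ℝ] ℝ :=
    (apply ℝ ℝ η : RealCLM E ℝ →L[ℝ] ℝ).comp (apply ℝ (RealCLM E ℝ) ζ)
  map_convolution A (.inl hc) hφ (continuous_gradSq hg) x

lemma convolution_gradSq_apply_self_nonneg (hc : HasCompactSupport φ) (hφ : Continuous φ)
    (hφ₀ : 0 ≤ φ) (hg : ContDiff ℝ 1 g) (x ζ : E) : 0 ≤ (φ ⋆ gradSq g) x ζ ζ := by
  rw [convolution_gradSq_apply hc hφ hg, convolution_lsmul]
  exact integral_nonneg fun y => mul_nonneg (hφ₀ y) (mul_self_nonneg _)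

lemma hess_convolution_sq (hc : HasCompactSupport φ) (hφ : Continuous φ) (hg : ContDiff ℝ 2 g)
    (x : E) : hess (φ ⋆ fun z => g z ^ 2) x =
      (φ ⋆ fun y => (2 * g y) • hess g y) x + (2 : ℝ) • (φ ⋆ gradSq g) x := by
  have hgrad := continuous_gradSq (hg.of_le one_le_two)
  have hhess : Continuous fun y => (2 * g y) • hess g y :=
    (continuous_const.mul hg.continuous).smul (continuous_hess hg)
  have hsum : (hess fun z => g z ^ 2)
      = (fun y => (2 * g y) • hess g y) + (2 : ℝ) • gradSq g := funext fun z => hess_sq hg z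
  rw [hess_convolution (.inl hc) hφ (hg.pow 2), hsum,
    (convolutionExists_of_continuous (.inl hc) hφ hhess x).distrib_add
      (convolutionExists_of_continuous (.inl hc) hφ (hgrad.const_smul 2) x), convolution_smul]
  rfl

lemma sq_convolution_le_convolution_sq {k f : E → ℝ} (hc : HasCompactSupport k)
    (hk : Continuous k) (hk₀ : 0 ≤ k) (hk₁ : ∫ y, k y = 1) (hf : Continuous f) (x : E) :
    (k ⋆ f) x ^ 2 ≤ (k ⋆ fun y => f y ^ 2) x := by
  set d := (k ⋆ f) x with hd
  have exist {w : E → ℝ} (hw : Continuous w) : Integrable fun y => k y * w (x - y) :=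
    (convolutionExists_of_continuous (.inl hc) hk hw x).integrable
  have variance_nonneg : 0 ≤ ∫ y, k y * (f (x - y) - d) ^ 2 :=
    integral_nonneg fun y => mul_nonneg (hk₀ y) (sq_nonneg _)
  have expand : ∫ y, k y * (f (x - y) - d) ^ 2 = (k ⋆ fun y => f y ^ 2) x - d ^ 2 := by
    have hsq : Integrable fun y => k y * f (x - y) ^ 2 := exist (hf.pow 2)
    have hlin := (exist hf).const_mul (2 * d)
    have hsub : Integrable fun y => k y * f (x - y) ^ 2 - 2 * d * (k y * f (x - y)) :=
      hsq.sub hlin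
    have hconst := (hk.integrable_of_hasCompactSupport (μ := volume) hc).mul_const (d ^ 2)
    calc ∫ y, k y * (f (x - y) - d) ^ 2
        = ∫ y, (k y * f (x - y) ^ 2 - 2 * d * (k y * f (x - y)) + k y * d ^ 2) := by
          congr with y
          ring
      _ = (k ⋆ fun y => f y ^ 2) x - 2 * d * d + 1 * d ^ 2 := by
          rw [integral_add hsub hconst, integral_sub hsq hlin, integral_const_mul,
            integral_mul_const, hk₁, hd]
          rfl
      _ = (k ⋆ fun y => f y ^ 2) x - d ^ 2 := by ring
  linarith

lemma convolution_add_le_mul_convolution {k f : E → ℝ} (hkc : HasCompactSupport k)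
    (hk : Continuous k) (hφc : HasCompactSupport φ) (hφ : Continuous φ) (hf : Continuous f)
    (hf₀ : 0 ≤ f) {z : E} {C : ℝ} (hkφ : ∀ y, k (y + z) ≤ C * φ y) (x : E) :
    (k ⋆ f) (x + z) ≤ C * (φ ⋆ f) x := by
  have hint :=
    (convolutionExists_of_continuous (.inl hkc) hk hf (x + z)).integrable.comp_add_right z
  simp only [convolution_lsmul, ContinuousLinearMap.lsmul_apply] at hint ⊢
  rw [← integral_const_mul, ← integral_add_right_eq_self _ z]
  refine integral_mono hint
    ((convolutionExists_of_continuous (.inl hφc) hφ hf x).integrable.const_mul C) fun y => ?_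
  simp only [add_sub_add_right_eq_sub, smul_eq_mul, ← mul_assoc]
  exact mul_le_mul_of_nonneg_right (hkφ y) (hf₀ _)

lemma sq_fderiv_convolution_apply_le (hχc : HasCompactSupport χ) (hχ : Continuous χ) (hχ₀ : 0 ≤ χ)
    (hχ₁ : ∫ y, χ y = 1) (hφc : HasCompactSupport φ) (hφ : Continuous φ) (hg : ContDiff ℝ 1 g)
    {z : E} {C : ℝ} (hχφ : ∀ y, χ (y + z) ≤ C * φ y) (x η : E) :
    fderiv ℝ (χ ⋆ g) (x + z) η ^ 2 ≤ C * (φ ⋆ gradSq g) x η η := by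
  have hg' : Continuous (fderiv ℝ g : E → RealCLM E ℝ) := hg.continuous_fderiv one_ne_zero
  have hgη : Continuous fun y => fderiv ℝ g y η := hg'.clm_apply continuous_const
  have happly : fderiv ℝ (χ ⋆ g) (x + z) η = (χ ⋆ fun y => fderiv ℝ g y η) (x + z) := by
    rw [fderiv_convolution (.inl hχc) hχ hg]
    exact map_convolution (apply ℝ ℝ η) (.inl hχc) hχ hg' (x + z)
  simp only [happly, convolution_gradSq_apply hφc hφ hg, ← pow_two]
  exact (sq_convolution_le_convolution_sq hχc hχ hχ₀ hχ₁ hgη _).trans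
    (convolution_add_le_mul_convolution hχc hχ hφc hφ (hgη.pow 2) (fun y => sq_nonneg _) hχφ x)

end GradSq

/-! ### Directions of small energy -/

section OrthogonalReInner

variable {E : Type*} [NormedAddCommGroup E] [InnerProductSpace ℂ E]
  {V : Submodule ℂ E} {n m : ℕ}

lemma levi_eq_of_sub_mem {T : RealBilin E} (hT : ∀ v ∈ V, ∀ η, T v η = 0 ∧ T η v = 0) {ζ ξ : E}
    (h : ζ - ξ ∈ V) : levi T ζ = levi T ξ := by
  have hI := V.smul_mem I h
  obtain ⟨v, rfl⟩ : ∃ v, ζ = ξ + v := ⟨ζ - ξ, by abel⟩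
  rw [add_sub_cancel_left] at h hI
  simp only [levi, smul_add, map_add, add_apply, (hT v h _).1, (hT v h _).2, (hT _ hI _).1,
    (hT _ hI _).2, add_zero]

variable [FiniteDimensional ℂ E]

variable (V) in
/-- The real part of the inner product of the components orthogonal to `V`, as a real bilinear
form. -/
def orthogonalReInner : RealBilin E := (reInner E).comp (Vᗮ.starProjection.restrictScalars ℝ)

lemma levi_orthogonalReInner (ζ : E) :
    levi (orthogonalReInner V) ζ = ‖Vᗮ.starProjection ζ‖ ^ 2 / 2 := by
  have hdiag (η : E) : orthogonalReInner V η η = ‖Vᗮ.starProjection η‖ ^ 2 :=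
    Vᗮ.re_inner_starProjection_eq_normSq η
  rw [levi, hdiag, hdiag, map_smul, norm_smul, norm_I, one_mul]
  ring

lemma orthogonalReInner_mem_leviCone (b : OrthonormalBasis (Fin n) ℂ E)
    (hV : Module.finrank ℂ V + m ≤ n) : orthogonalReInner V ∈ leviCone b m := by
  refine mem_leviCone_of_levi_pos_on b (fun ζ => ?_) Vᗮ (fun ζ hζ hζ₀ => ?_) ?_
  · rw [levi_orthogonalReInner]
    positivity
  · rw [levi_orthogonalReInner, Submodule.starProjection_eq_self_iff.2 hζ]
    have := norm_pos_iff.2 hζ₀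
    positivity
  · have := V.finrank_add_finrank_orthogonal
    rw [Module.finrank_eq_card_basis b.toBasis, Fintype.card_fin] at this
    omega

lemma sub_orthogonalReInner_mem_closure_leviCone (b : OrthonormalBasis (Fin n) ℂ E) (hmn : m ≤ n)
    {T : RealBilin E} (hT : ∀ v ∈ V, ∀ η, T v η = 0 ∧ T η v = 0) {c : ℝ}
    (hc : ∀ ξ ∈ Vᗮ, ‖ξ‖ = 1 → c ≤ levi T ξ) :
    T - (2 * c) • orthogonalReInner V ∈ (leviCone b m).closure := by
  refine mem_closure_leviCone_of_levi_nonneg b hmn fun ζ => ?_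
  set ξ := Vᗮ.starProjection ζ
  have hTζ : levi T ζ = levi T ξ := levi_eq_of_sub_mem hT <| by
    simpa only [V.orthogonal_orthogonal] using Vᗮ.sub_starProjection_mem_orthogonal ζ
  have hcξ : c * ‖ξ‖ ^ 2 ≤ levi T ξ := by
    rcases eq_or_ne ξ 0 with h | h
    · simp [h, levi]
    · have := hc _ (Vᗮ.smul_mem (‖ξ‖⁻¹ : ℂ) (Vᗮ.starProjection_apply_mem ζ)) (norm_smul_inv_norm h)
      rw [levi_smul, norm_inv, norm_real, norm_norm, inv_pow] at this
      rwa [← le_inv_mul_iff₀' (by positivity)]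
  rw [sub_eq_add_neg, ← neg_smul, levi_add, levi_real_smul, levi_orthogonalReInner, hTζ]
  linarith

end OrthogonalReInner

section Contact

open Filter Topology
open scoped Convolution NNReal

variable {E : Type*} [NormedAddCommGroup E] [InnerProductSpace ℂ E] [FiniteDimensional ℂ E]
  [MeasureSpace E] {K : ConvexCone ℝ (RealBilin E)} {L : ℝ≥0} {u τ : E → ℝ} {B : RealBilin E}

/-- Minimise `u - τ + ε‖· - q‖²`. -/
lemma IsWeakSolution.exists_hess_sub_notMem_closure (hK : IsOpen (K : Set (RealBilin E)))
    (hu : IsWeakSolution K L u) (hτ : ContDiff ℝ 2 τ) {C : ℝ} (hC : ∀ x, τ x - u x ≤ C)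
    (hB : B ∈ K) (q : E) :
    ∃ x, τ q - u q ≤ τ x - u x ∧ hess τ x - B ∉ K.closure := by
  obtain ⟨ε, hεK, hε⟩ : ∃ ε : ℝ, B - (2 * ε) • reInner E ∈ K ∧ 0 < ε := by
    have hcont : ContinuousAt (fun ε : ℝ => B - (2 * ε) • reInner E) 0 := by fun_prop
    have hnear : ∀ᶠ ε in 𝓝 (0 : ℝ), B - (2 * ε) • reInner E ∈ K :=
      hcont.eventually (hK.mem_nhds (by simpa using hB))
    exact ((hnear.filter_mono nhdsWithin_le_nhds).and (self_mem_nhdsWithin (s := Set.Ioi 0))).exists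
  have hsq : ContDiff ℝ 2 fun z => ε * ‖z - q‖ ^ 2 := contDiff_const.mul (contDiff_norm_sub_sq q)
  have hcoercive : Tendsto (fun z => u z - (τ z - ε * ‖z - q‖ ^ 2)) (cocompact E) atTop := by
    have hnorm : Tendsto (fun z => ‖z - q‖) (cocompact E) atTop := by
      simpa only [dist_eq_norm] using tendsto_dist_right_cocompact_atTop q
    refine tendsto_atTop_mono (fun z => ?_) (tendsto_atTop_add_const_right _ (-C)
      (((tendsto_pow_atTop two_ne_zero).comp hnorm).const_mul_atTop hε))
    simp only [Function.comp_apply]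
    linarith [hC z]
  obtain ⟨x, hx⟩ := (hu.lipschitz.continuous.sub (hτ.sub hsq).continuous).exists_forall_le hcoercive
  refine ⟨x, ?_, fun hmem => hu.hess_notMem_of_forall_sub_le hK (hτ.sub hsq) hx ?_⟩
  · have hxq : u x - (τ x - ε * ‖x - q‖ ^ 2) ≤ u q - (τ q - ε * ‖q - q‖ ^ 2) := hx q
    rw [sub_self, norm_zero] at hxq
    have : 0 ≤ ε * ‖x - q‖ ^ 2 := by positivity
    linarith
  · rw [hess_sub_const_mul_norm_sub_sq hτ]
    convert add_mem_of_mem_closure hK hεK hmem using 1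
    abel

section EnergyContact

variable {n m : ℕ} {b : OrthonormalBasis (Fin n) ℂ E} {V : Submodule ℂ E} {g φ : E → ℝ}
  [BorelSpace E] [(volume : Measure E).IsAddHaarMeasure]

lemma convolution_gradSq_apply_eq_zero (hg : ContDiff ℝ 2 g) (hφc : HasCompactSupport φ)
    (hφ : Continuous φ) (hgV : ∀ v ∈ V, ∀ x, g (x + v) = g x) (x : E) {v : E} (hv : v ∈ V) (η : E) :
    (φ ⋆ gradSq g) x v η = 0 ∧ (φ ⋆ gradSq g) x η v = 0 := by
  have hfderiv (y : E) : fderiv ℝ g y v = 0 :=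
    fderiv_apply_eq_zero_of_invariant (hg.differentiable two_ne_zero y) fun t =>
      hgV _ (by simpa only [coe_smul] using V.smul_mem (t : ℂ) hv) y
  constructor <;>
    rw [convolution_gradSq_apply hφc hφ (hg.of_le one_le_two)] <;>
    simp [hfderiv, convolution]

lemma hess_convolution_sq_sub_mem_closure_leviCone (hmn : m ≤ n) (hg : ContDiff ℝ 2 g)
    (hg₀ : 0 ≤ g) (hgK : ∀ x, hess g x ∈ (leviCone b m).closure)
    (hgV : ∀ v ∈ V, ∀ x, g (x + v) = g x) (hφc : HasCompactSupport φ) (hφ : Continuous φ)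
    (hφ₀ : 0 ≤ φ) {c : ℝ} {x : E} (hc : ∀ ξ ∈ Vᗮ, ‖ξ‖ = 1 → c ≤ levi ((φ ⋆ gradSq g) x) ξ) :
    hess (φ ⋆ fun z => g z ^ 2) x - (4 * c) • orthogonalReInner V ∈ (leviCone b m).closure := by
  have hne : (leviCone b m : Set (RealBilin E)).Nonempty := ⟨_, reInner_mem_leviCone b hmn⟩
  have hfirst : (φ ⋆ fun y => (2 * g y) • hess g y) x ∈ (leviCone b m).closure :=
    convolution_mem_closure_convexCone hne hφc hφ hφ₀
      ((continuous_const.mul hg.continuous).smul (continuous_hess hg))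
      (fun y => smul_mem_closure_of_nonneg hne (mul_nonneg zero_le_two (hg₀ y)) (hgK y)) x
  have hsecond := sub_orthogonalReInner_mem_closure_leviCone b hmn
    (fun v hv => convolution_gradSq_apply_eq_zero hg hφc hφ hgV x hv) hc
  rw [hess_convolution_sq hφc hφ hg]
  convert (leviCone b m).closure.add_mem hfirst
    ((leviCone b m).closure.smul_mem two_pos hsecond) using 1
  module

/-- If the local energy `φ ⋆ gradSq g` were at least `c` in all directions orthogonal to `V`, then
`τ + δ (φ ⋆ g²)` would be a strict subsolution. -/
lemma IsWeakSolution.exists_levi_convolution_gradSq_lt (hu : IsWeakSolution (leviCone b m) L u)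
    (hV : Module.finrank ℂ V + m ≤ n) (hg : ContDiff ℝ 2 g) (hg₀ : 0 ≤ g)
    (hgK : ∀ x, hess g x ∈ (leviCone b m).closure) (hgV : ∀ v ∈ V, ∀ x, g (x + v) = g x)
    (hφc : HasCompactSupport φ) (hφ : Continuous φ) (hφ₀ : 0 ≤ φ) (hτ : ContDiff ℝ 2 τ)
    (hτK : ∀ x, hess τ x ∈ (leviCone b m).closure) {δ c C : ℝ} (hδ : 0 < δ) (hc : 0 < c)
    (hC : ∀ x, τ x + δ * (φ ⋆ fun z => g z ^ 2) x - u x ≤ C) (q : E) :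
    ∃ x, τ q + δ * (φ ⋆ fun z => g z ^ 2) q - u q ≤ τ x + δ * (φ ⋆ fun z => g z ^ 2) x - u x ∧
      ∃ ξ ∈ Vᗮ, ‖ξ‖ = 1 ∧ levi ((φ ⋆ gradSq g) x) ξ < c := by
  have hmn : m ≤ n := (Nat.le_add_left _ _).trans hV
  have hw : ContDiff ℝ 2 (φ ⋆ fun z => g z ^ 2) :=
    contDiff_two_convolution (.inl hφc) hφ (hg.pow 2)
  obtain ⟨x, hx, hnot⟩ := hu.exists_hess_sub_notMem_closure (isOpen_leviCone b)
    (hτ.add (contDiff_const.mul hw)) hC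
    ((leviCone b m).smul_mem (c := δ * (4 * c)) (by positivity)
      (orthogonalReInner_mem_leviCone b hV)) q
  refine ⟨x, hx, ?_⟩
  by_contra! hlarge
  have hmem := (leviCone b m).closure.add_mem (hτK x) ((leviCone b m).closure.smul_mem hδ
    (hess_convolution_sq_sub_mem_closure_leviCone hmn hg hg₀ hgK hgV hφc hφ hφ₀ hlarge))
  refine hnot ?_
  rw [hess_add hτ.contDiffAt (contDiff_const.mul hw).contDiffAt, hess_const_mul δ hw.contDiffAt]
  convert hmem using 1
  module

end EnergyContact

end Contact

/-! ### Limits of translates -/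

section VanishingEnergy

open Filter Topology
open scoped Convolution NNReal

variable {E : Type*} [NormedAddCommGroup E] [NormedSpace ℝ E] [FiniteDimensional ℝ E]
  [MeasureSpace E] [BorelSpace E] [(volume : Measure E).IsAddHaarMeasure]

lemma fderiv_convolution_apply_eq_zero_of_tendsto {ι : Type*} {l : Filter ι} [l.NeBot]
    {g φ : ι → E → ℝ} {v χ : E → ℝ} {x η : ι → E} {ξ : E} (hg : ∀ i, ContDiff ℝ 1 (g i))
    (hv : Continuous v)
    (hgv : ∀ s, IsCompact s → TendstoUniformlyOn (fun i z => g i (z + x i)) v l s)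
    (hφc : ∀ i, HasCompactSupport (φ i)) (hφ : ∀ i, Continuous (φ i)) (hφ₀ : ∀ i, 0 ≤ φ i)
    (hφ₁ : ∀ R, ∀ᶠ i in l, ∀ y ∈ closedBall 0 R, 1 ≤ φ i y) (hη : Tendsto η l (𝓝 ξ))
    (henergy : Tendsto (fun i => (φ i ⋆ gradSq (g i)) (x i) (η i) (η i)) l (𝓝 0))
    (hχc : HasCompactSupport χ) (hχ : ContDiff ℝ 1 χ) (hχ₀ : 0 ≤ χ) (hχ₁ : ∫ y, χ y = 1) (z : E) :
    fderiv ℝ (χ ⋆ v) z ξ = 0 := by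
  obtain ⟨C, hC⟩ := hχc.exists_bound_of_continuous hχ.continuous
  obtain ⟨r, hr⟩ := hχc.isCompact.isBounded.subset_closedBall z
  have hbound : ∀ᶠ i in l, ∀ y, χ (y + z) ≤ C * φ i y := by
    filter_upwards [hφ₁ r] with i hi y
    have hC₀ : 0 ≤ C := (norm_nonneg _).trans (hC 0)
    by_cases hy : y + z ∈ tsupport χ
    · calc χ (y + z) ≤ C * 1 := by simpa using (le_abs_self _).trans (hC (y + z))
        _ ≤ C * φ i y := by
          gcongr
          exact hi y (by simpa [dist_eq_norm] using hr hy)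
    · rw [image_eq_zero_of_notMem_tsupport hy]
      exact mul_nonneg hC₀ (hφ₀ i y)
  have hsq : ∀ᶠ i in l, fderiv ℝ (χ ⋆ fun z => g i (z + x i)) z (η i) ^ 2
      ≤ C * (φ i ⋆ gradSq (g i)) (x i) (η i) (η i) := by
    filter_upwards [hbound] with i hi
    rw [funext (convolution_comp_add_right χ (g i) (x i)), fderiv_comp_add_right, add_comm z]
    exact sq_fderiv_convolution_apply_le hχc hχ.continuous hχ₀ hχ₁ (hφc i) (hφ i) (hg i) hi _ _
  have hlim := tendsto_fderiv_convolution (u := fun i z => g i (z + x i))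
    (fun i => (hg i).continuous.comp (continuous_add_const (x i))) hv hχc hχ hgv z
  have hlimη : Tendsto (fun i => fderiv ℝ (χ ⋆ fun z => g i (z + x i)) z (η i)) l
      (𝓝 (fderiv ℝ (χ ⋆ v) z ξ)) :=
    (isBoundedBilinearMap_apply.continuous.tendsto _).comp (hlim.prodMk_nhds hη)
  have hzero := squeeze_zero' (.of_forall fun i => sq_nonneg _) hsq
    (by simpa using henergy.const_mul C)
  exact pow_eq_zero_iff two_ne_zero |>.1
    (tendsto_nhds_unique (hlimη.pow 2) hzero)

lemma apply_add_eq_of_fderiv_normed_convolution_eq_zero [HasContDiffBump E] {L : ℝ≥0} {v : E → ℝ}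
    (hv : LipschitzWith L v) {η : E}
    (h : ∀ (χ : ContDiffBump (0 : E)) z, fderiv ℝ (χ.normed volume ⋆ v) z η = 0) (x : E) :
    v (x + η) = v x := by
  refine eq_of_forall_dist_le fun ε hε => ?_
  obtain ⟨χ, hχ⟩ := exists_dist_normed_convolution_le hv (half_pos hε)
  set f := χ.normed volume ⋆ v with hf
  have hfd : Differentiable ℝ f := (contDiff_two_convolution_left χ.hasCompactSupport_normed
    χ.contDiff_normed hv.continuous).differentiable two_ne_zero
  have hline (t : ℝ) : HasDerivAt (fun t : ℝ => f (x + t • η)) 0 t := by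
    have hpath : HasDerivAt (fun t : ℝ => x + t • η) η t := by
      simpa using ((hasDerivAt_id t).smul_const η).const_add x
    simpa only [hf, h χ, Function.comp_def] using
      (hfd (x + t • η)).hasFDerivAt.comp_hasDerivAt t hpath
  have heq : f (x + η) = f x := by
    simpa using is_const_of_deriv_eq_zero (fun t => (hline t).differentiableAt)
      (fun t => (hline t).deriv) 1 0
  calc dist (v (x + η)) (v x) ≤ dist (f (x + η)) (v (x + η)) + dist (f (x + η)) (v x) :=
        dist_triangle_left _ _ _
    _ ≤ ε / 2 + ε / 2 := add_le_add (hχ _) (heq ▸ hχ x)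
    _ = ε := add_halves ε

end VanishingEnergy

section SmallEnergy

open scoped Convolution NNReal

variable {E : Type*} [NormedAddCommGroup E] [InnerProductSpace ℂ E] [FiniteDimensional ℂ E]
  [MeasureSpace E] [BorelSpace E] [(volume : Measure E).IsAddHaarMeasure] {n m : ℕ}
  {b : OrthonormalBasis (Fin n) ℂ E} {L : ℝ≥0} {u τ : E → ℝ} {V : Submodule ℂ E}

lemma IsWeakSolution.exists_levi_convolution_gradSq_normed_lt
    (hu : IsWeakSolution (leviCone b m) L u) (hV : ∀ v ∈ V, ∀ x, u (x + v) = u x)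
    (hnV : Module.finrank ℂ V + m ≤ n) (hτ : ContDiff ℝ 2 τ)
    (hτK : ∀ x, hess τ x ∈ (leviCone b m).closure) (hτ₁ : ∀ x, τ x ≤ 1) {a ε : ℝ} (ha : 0 < a)
    (hε : 0 < ε) {q : E} (hq : 2 * a ≤ τ q - u q) (ψ φ : ContDiffBump (0 : E)) :
    ∃ x, a ≤ τ x - u x ∧
      ∃ ξ ∈ Vᗮ, ‖ξ‖ = 1 ∧ levi ((φ ⋆ gradSq (ψ.normed volume ⋆ u)) x) ξ < ε := by
  set g := ψ.normed volume ⋆ u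
  set J := ∫ y, φ y with hJ
  have hJ₀ : 0 < J := φ.integral_pos
  have hgC : ContDiff ℝ 2 g := hu.contDiff_normed_convolution ψ
  have hg₁ (x : E) : g x ∈ Set.Icc 0 1 :=
    normed_convolution_mem_Icc ψ hu.lipschitz.continuous hu.mem_Icc x
  have hw (x : E) : a / J * (φ ⋆ fun z => g z ^ 2) x ∈ Set.Icc 0 a := by
    have hnormed : (φ ⋆ fun z => g z ^ 2) x = J * (φ.normed volume ⋆ fun z => g z ^ 2) x := by
      simp only [convolution_lsmul, φ.normed_def, ← integral_const_mul, smul_eq_mul, ← hJ]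
      congr with y
      field_simp
    have := normed_convolution_mem_Icc φ (hgC.continuous.pow 2)
      (fun x => ⟨sq_nonneg (g x), pow_le_one₀ (hg₁ x).1 (hg₁ x).2⟩) x
    rw [hnormed, ← mul_assoc, div_mul_cancel₀ _ hJ₀.ne']
    exact ⟨mul_nonneg ha.le this.1, mul_le_of_le_one_right ha.le this.2⟩
  obtain ⟨x, hx, hξ⟩ := hu.exists_levi_convolution_gradSq_lt hnV hgC (fun x => (hg₁ x).1)
    (hu.hess_normed_convolution_mem ψ) (fun v hv => convolution_eq_of_invariant (hV v hv))
    φ.hasCompactSupport φ.continuous (fun _ => φ.nonneg) hτ hτK (div_pos ha hJ₀) hε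
    (C := 1 + a) (fun x => by linarith [hτ₁ x, (hw x).2, (hu.mem_Icc x).1]) q
  exact ⟨x, by linarith [(hw q).1, (hw x).2], hξ⟩

end SmallEnergy

section Ultrafilter

open Filter Topology

lemma exists_tendsto_ultrafilter_of_isCompact {ι X : Type*} [TopologicalSpace X] (l : Ultrafilter ι)
    {s : Set X} (hs : IsCompact s) {f : ι → X} (hf : ∀ i, f i ∈ s) :
    ∃ y ∈ s, Tendsto f l (𝓝 y) :=
  hs.ultrafilter_le_nhds' (l.map f) (Ultrafilter.mem_map.2 (Filter.univ_mem' hf))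

end Ultrafilter

section LimitOfTranslates

open Filter Topology
open scoped Convolution NNReal

variable {E : Type*} [NormedAddCommGroup E] [InnerProductSpace ℂ E] [FiniteDimensional ℂ E]
  [MeasureSpace E] [BorelSpace E] [(volume : Measure E).IsAddHaarMeasure]
  {L : ℝ≥0} {u v : E → ℝ}

lemma convolution_gradSq_apply_smul_self_le {φ g : E → ℝ} (hc : HasCompactSupport φ)
    (hφ : Continuous φ) (hφ₀ : 0 ≤ φ) (hg : ContDiff ℝ 1 g) (x ζ : E) (c : ℂ) :
    (φ ⋆ gradSq g) x (c • ζ) (c • ζ) ≤ 4 * ‖c‖ ^ 2 * levi ((φ ⋆ gradSq g) x) ζ := by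
  rw [mul_assoc, ← levi_smul, levi]
  linarith [convolution_gradSq_apply_self_nonneg hc hφ hφ₀ hg x (I • c • ζ)]

lemma apply_add_smul_eq_of_levi_convolution_gradSq_le {ι : Type*} {l : Filter ι} [l.NeBot]
    (hu : LipschitzWith L u) {ψ φ : ι → ContDiffBump (0 : E)} {δ : ι → ℝ} {x ξ : ι → E} {ξ₀ : E}
    (hδ : Tendsto δ l (𝓝 0)) (hψ : ∀ i z, dist (((ψ i).normed volume ⋆ u) z) (u z) ≤ δ i)
    (hφ : Tendsto (fun i => (φ i).rIn) l atTop)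
    (huv : ∀ z, Tendsto (fun i => u (z + x i)) l (𝓝 (v z))) (hξ : Tendsto ξ l (𝓝 ξ₀))
    (henergy : ∀ i, levi ((φ i ⋆ gradSq ((ψ i).normed volume ⋆ u)) (x i)) (ξ i) ≤ δ i)
    (c : ℂ) (z : E) : v (z + c • ξ₀) = v z := by
  have hg (i : ι) : ContDiff ℝ 1 ((ψ i).normed volume ⋆ u) :=
    (contDiff_two_convolution_left (ψ i).hasCompactSupport_normed (ψ i).contDiff_normed
      hu.continuous).of_le one_le_two
  have hui (i : ι) := lipschitzWith_comp_add_right hu (x i)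
  have hv : LipschitzWith L v := lipschitzWith_of_tendsto hui huv
  have hgv (s : Set E) (hs : IsCompact s) :
      TendstoUniformlyOn (fun i z => ((ψ i).normed volume ⋆ u) (z + x i)) v l s := by
    refine tendstoUniformlyOn_iff.2 fun ε hε => ?_
    filter_upwards [tendstoUniformlyOn_iff.1 (tendstoUniformlyOn_of_lipschitzWith hui huv hs) _
      (half_pos hε), hδ.eventually_lt_const (half_pos hε)] with i hi hδi y hy
    linarith [dist_triangle_right (v y) (((ψ i).normed volume ⋆ u) (y + x i)) (u (y + x i)),
      hi y hy, hψ i (y + x i)]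
  have hc : Tendsto (fun i => (φ i ⋆ gradSq ((ψ i).normed volume ⋆ u)) (x i) (c • ξ i) (c • ξ i)) l
      (𝓝 0) :=
    squeeze_zero
      (fun i => convolution_gradSq_apply_self_nonneg (φ i).hasCompactSupport (φ i).continuous
        (fun _ => (φ i).nonneg) (hg i) _ _)
      (fun i => (convolution_gradSq_apply_smul_self_le (φ i).hasCompactSupport (φ i).continuous
        (fun _ => (φ i).nonneg) (hg i) _ _ c).trans
          (mul_le_mul_of_nonneg_left (henergy i) (by positivity)))
      (by simpa using hδ.const_mul (4 * ‖c‖ ^ 2))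
  refine apply_add_eq_of_fderiv_normed_convolution_eq_zero hv (fun χ z => ?_) z
  refine fderiv_convolution_apply_eq_zero_of_tendsto hg hv.continuous hgv
    (fun i => (φ i).hasCompactSupport) (fun i => (φ i).continuous) (fun i _ => (φ i).nonneg)
    (fun R => ?_) (hξ.const_smul c) hc χ.hasCompactSupport_normed χ.contDiff_normed
    χ.nonneg_normed χ.integral_normed z
  filter_upwards [hφ.eventually_ge_atTop R] with i hi y hy
  exact ((φ i).one_of_mem_closedBall (closedBall_subset_closedBall hi hy)).ge

lemma exists_ne_of_le_normed_convolution_sub {ι : Type*} {l : Filter ι} [l.NeBot] {x : ι → E}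
    (hu : LipschitzWith L u) (huv : ∀ z, Tendsto (fun i => u (z + x i)) l (𝓝 (v z)))
    (ψ : ContDiffBump (0 : E)) {w : E} {a : ℝ} (ha : 0 < a)
    (h : ∀ i, a ≤ (ψ.normed volume ⋆ u) (x i + w) - u (x i)) : ∃ p, v p ≠ v 0 := by
  have hui (i : ι) := lipschitzWith_comp_add_right hu (x i)
  by_contra! hconst
  have hlim : Tendsto (fun i => (ψ.normed volume ⋆ u) (x i + w)) l (𝓝 (v 0)) := by
    have := tendsto_convolution (f := ψ.normed volume) (fun i => (hui i).continuous)
      (lipschitzWith_of_tendsto hui huv).continuous ψ.hasCompactSupport_normed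
      ψ.continuous_normed (fun s hs => tendstoUniformlyOn_of_lipschitzWith hui huv hs) w
    simp only [convolution_comm_of_real _ (ψ.normed volume), convolution_comp_add_right,
      add_comm w] at this
    have hvw : (ψ.normed volume ⋆ v) w = v w :=
      ψ.normed_convolution_eq_right fun y _ => (hconst y).trans (hconst w).symm
    rwa [hvw, hconst w] at this
  have : Tendsto (fun i => u (x i)) l (𝓝 (v 0)) := by simpa only [zero_add] using huv 0
  linarith [ge_of_tendsto' (hlim.sub this) h]

end LimitOfTranslates

lemma exists_gt_forall_mem_add_eq {R M α : Type*} [Semiring R] [AddCommMonoid M] [Module R M]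
    {V : Submodule R M} {f : M → α} {y : M} (hV : ∀ v ∈ V, ∀ x, f (x + v) = f x)
    (hy : ∀ (c : R) (x : M), f (x + c • y) = f x) (hyV : y ∉ V) :
    ∃ W > V, ∀ w ∈ W, ∀ x, f (x + w) = f x := by
  refine ⟨V ⊔ R ∙ y, left_lt_sup.2 fun h =>
    hyV ((Submodule.span_singleton_le_iff_mem _ _).1 h), fun w hw x => ?_⟩
  obtain ⟨v, hv, η, hη, rfl⟩ := Submodule.mem_sup.1 hw
  obtain ⟨c, rfl⟩ := Submodule.mem_span_singleton.1 hη
  rw [← add_assoc, hy, hV v hv]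

section InvariantLimit

open Filter Topology
open scoped Convolution NNReal

variable {E : Type*} [NormedAddCommGroup E] [InnerProductSpace ℂ E] [FiniteDimensional ℂ E]
  [MeasureSpace E] [BorelSpace E] [(volume : Measure E).IsAddHaarMeasure] {n m : ℕ}
  {b : OrthonormalBasis (Fin n) ℂ E} {L : ℝ≥0} {u : E → ℝ} {V : Submodule ℂ E}

namespace IsWeakSolution

lemma exists_levi_convolution_gradSq_lt_of_lt (hu : IsWeakSolution (leviCone b m) L u)
    (hV : ∀ v ∈ V, ∀ x, u (x + v) = u x) (hnV : Module.finrank ℂ V + m ≤ n) {p q : E}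
    (hpq : u q < u p) :
    ∃ a > 0, ∃ θ : ContDiffBump (0 : E), ∀ ε > 0, ∃ (ψ φ : ContDiffBump (0 : E)) (x ξ : E),
      (∀ z, dist ((ψ.normed volume ⋆ u) z) (u z) ≤ ε) ∧ ε⁻¹ ≤ φ.rIn ∧
      a ≤ (θ.normed volume ⋆ u) (x + (p - q)) - u x ∧ ξ ∈ Vᗮ ∧ ‖ξ‖ = 1 ∧
      levi ((φ ⋆ gradSq (ψ.normed volume ⋆ u)) x) ξ < ε := by
  have ha : 0 < (u p - u q) / 3 := by linarith
  obtain ⟨θ, hθ⟩ := exists_dist_normed_convolution_le hu.lipschitz ha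
  refine ⟨_, ha, θ, fun ε hε => ?_⟩
  obtain ⟨ψ, hψ⟩ := exists_dist_normed_convolution_le hu.lipschitz hε
  let φ : ContDiffBump (0 : E) := ⟨ε⁻¹, ε⁻¹ + 1, inv_pos.2 hε, lt_add_one _⟩
  have hq : 2 * ((u p - u q) / 3) ≤ (θ.normed volume ⋆ u) (q + (p - q)) - u q := by
    rw [add_sub_cancel]
    linarith [(abs_le.1 (hθ p)).1]
  obtain ⟨x, hx, ξ, hξ, hξ₁, hlt⟩ := hu.exists_levi_convolution_gradSq_normed_lt hV hnV
    (τ := fun x => (θ.normed volume ⋆ u) (x + (p - q)))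
    ((hu.contDiff_normed_convolution θ).comp (contDiff_id.add contDiff_const))
    (fun x => by
      rw [hess_comp_add_right]
      exact hu.hess_normed_convolution_mem θ _)
    (fun x => (normed_convolution_mem_Icc θ hu.lipschitz.continuous hu.mem_Icc _).2) ha hε hq ψ φ
  exact ⟨ψ, φ, x, ξ, hψ, le_rfl, hx, hξ, hξ₁, hlt⟩

theorem exists_invariant_of_ne (hu : IsWeakSolution (leviCone b m) L u)
    (hV : ∀ v ∈ V, ∀ x, u (x + v) = u x) (hnV : Module.finrank ℂ V + m ≤ n) {p q : E}
    (hpq : u p ≠ u q) :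
    ∃ v : E → ℝ, IsWeakSolution (leviCone b m) L v ∧
      (∃ W > V, ∀ w ∈ W, ∀ x, v (x + w) = v x) ∧ ∃ p q, v p ≠ v q := by
  wlog hlt : u q < u p generalizing p q
  · exact this hpq.symm (hpq.lt_of_le (not_lt.1 hlt))
  obtain ⟨a, ha, θ, hθ⟩ := hu.exists_levi_convolution_gradSq_lt_of_lt hV hnV hlt
  choose ψ φ x ξ hψ hφ hx hξV hξ₁ henergy using
    fun k : ℕ => hθ (1 / ((k : ℝ) + 1)) Nat.one_div_pos_of_nat
  have hl : (hyperfilter ℕ : Filter ℕ) ≤ atTop :=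
    hyperfilter_le_cofinite.trans_eq Nat.cofinite_eq_atTop
  choose v _ hv using fun z => exists_tendsto_ultrafilter_of_isCompact (hyperfilter ℕ)
    isCompact_Icc fun k => hu.mem_Icc (z + x k)
  obtain ⟨ξ₀, hξ₀, hξ⟩ := exists_tendsto_ultrafilter_of_isCompact (hyperfilter ℕ)
    (isCompact_sphere (0 : E) 1) fun k => mem_sphere_zero_iff_norm.2 (hξ₁ k)
  have hδ : Tendsto (fun k : ℕ => 1 / ((k : ℝ) + 1)) (hyperfilter ℕ) (𝓝 0) :=
    tendsto_one_div_add_atTop_nhds_zero_nat.mono_left hl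
  have hrIn : Tendsto (fun k => (φ k).rIn) (hyperfilter ℕ) atTop :=
    (tendsto_atTop_mono (fun k => (le_add_of_nonneg_right zero_le_one).trans (by simpa using hφ k))
      tendsto_natCast_atTop_atTop).mono_left hl
  have hξv (c : ℂ) (z : E) : v (z + c • ξ₀) = v z :=
    apply_add_smul_eq_of_levi_convolution_gradSq_le hu.lipschitz hδ hψ hrIn hv hξ
      (fun k => (henergy k).le) c z
  have hVv (w : E) (hw : w ∈ V) (z : E) : v (z + w) = v z :=
    tendsto_nhds_unique (hv (z + w)) ((hv z).congr fun k => by rw [add_right_comm, hV w hw])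
  have hξ₀V : ξ₀ ∉ V := fun h => ne_of_mem_sphere hξ₀ one_ne_zero <|
    Submodule.disjoint_def.1 V.orthogonal_disjoint _ h
      (Vᗮ.closed_of_finiteDimensional.mem_of_tendsto hξ (.of_forall hξV))
  obtain ⟨p, hp⟩ := exists_ne_of_le_normed_convolution_sub hu.lipschitz hv θ ha hx
  exact ⟨v, .of_tendsto (fun k => hu.comp_add_right (x k)) hv,
    exists_gt_forall_mem_add_eq hVv hξv hξ₀V, p, 0, hp⟩

end IsWeakSolution

end InvariantLimit

/-! ### The Liouville theorem -/

section Liouville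

open scoped NNReal

variable {E : Type*} [NormedAddCommGroup E] [InnerProductSpace ℂ E] [FiniteDimensional ℂ E]
  {n m : ℕ} {b : OrthonormalBasis (Fin n) ℂ E} {L : ℝ≥0} {u : E → ℝ}

theorem IsWeakSolution.eq_of_forall_mem_add_eq [MeasureSpace E] [BorelSpace E]
    [(volume : Measure E).IsAddHaarMeasure] (hu : IsWeakSolution (leviCone b m) L u)
    {V : Submodule ℂ E} (hV : ∀ v ∈ V, ∀ x, u (x + v) = u x) (p q : E) : u p = u q := by
  induction V using WellFoundedGT.induction generalizing u p q with
  | ind V ih =>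
    by_cases hnV : n ≤ Module.finrank ℂ V + m
    · exact hu.eq_of_invariant V hV hnV p q
    · by_contra hpq
      obtain ⟨v, hv, ⟨W, hVW, hW⟩, p', q', hne⟩ :=
        hu.exists_invariant_of_ne hV (le_of_not_ge hnV) hpq
      exact hne (ih W hVW hv hW p' q')

theorem eq_of_hess_mem_closure_leviCone (b : OrthonormalBasis (Fin n) ℂ E) (hmn : m ≤ n)
    (hu : ContDiff ℝ 2 u) {M : ℝ} (hM : ∀ z, |u z| ≤ M) (hL : LipschitzWith L u)
    (hcl : ∀ z, hess u z ∈ (leviCone b m).closure) (hnot : ∀ z, hess u z ∉ leviCone b m)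
    (p q : E) : u p = u q := by
  have hM₀ : 0 ≤ M := (abs_nonneg _).trans (hM 0)
  set c := (2 * M + 1)⁻¹ with hc
  have hc₀ : 0 < c := by positivity
  have hcu : ContDiff ℝ 2 fun z => c * u z := contDiff_const.mul hu
  have hhess (z : E) : hess (fun z => c * u z + c * M) z = c • hess u z := by
    rw [hess_add hcu.contDiffAt contDiffAt_const, hess_const, add_zero,
      hess_const_mul c hu.contDiffAt]
  let _ : MeasurableSpace E := borel E
  have : BorelSpace E := ⟨rfl⟩
  let _ : MeasureSpace E := ⟨Measure.addHaar⟩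
  have : (volume : Measure E).IsAddHaarMeasure :=
    inferInstanceAs (Measure.addHaar : Measure E).IsAddHaarMeasure
  have hsol : IsWeakSolution (leviCone b m) L fun z => c * u z + c * M := by
    refine .of_contDiff (isOpen_leviCone b)
      (fun B hB => mem_closure_leviCone_of_levi_nonneg b hmn fun ζ =>
        div_nonneg (add_nonneg (hB ζ) (hB _)) zero_le_four) (hcu.add contDiff_const)
      (fun x => ?_) (.of_dist_le_mul fun x y => ?_) (fun z => ?_) fun z hz => hnot z ?_
    · rw [← mul_add, hc, inv_mul_eq_div]
      have := abs_le.1 (hM x)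
      exact ⟨div_nonneg (by linarith) (by linarith), div_le_one_of_le₀ (by linarith) (by linarith)⟩
    · rw [dist_add_right, Real.dist_eq, ← mul_sub, abs_mul, abs_of_pos hc₀, ← Real.dist_eq]
      exact (mul_le_of_le_one_left dist_nonneg (inv_le_one_of_one_le₀ (by linarith))).trans
        (hL.dist_le_mul x y)
    · rw [hhess]
      exact smul_mem_closure_of_nonneg ⟨_, reInner_mem_leviCone b hmn⟩ hc₀.le (hcl z)
    · rw [hhess] at hz
      exact ((leviCone b m).smul_mem_iff hc₀).1 hz
  have := hsol.eq_of_forall_mem_add_eq (V := ⊥) (fun v hv x => by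
    rw [(Submodule.mem_bot ℂ).1 hv, add_zero]) p q
  simpa [hc₀.ne'] using this

lemma complexHessian_eq_transpose_leviMatrix {u : EuclideanSpace ℂ (Fin n) → ℝ}
    (hu : ContDiff ℝ 2 u) (z : EuclideanSpace ℂ (Fin n)) :
    complexHessian u z
      = (leviMatrix (hess u z) (EuclideanSpace.basisFun (Fin n) ℂ)).transpose := by
  ext j k
  simp only [complexHessian, ebasis, iteratedFDeriv_two_eq_hess, Matrix.transpose_apply,
    leviMatrix, leviForm_apply, EuclideanSpace.basisFun_apply, hess_comm hu _ (.single k 1),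
    hess_comm hu _ (I • .single k 1)]
  push_cast
  ring

theorem liouville_maximal_m_subharmonic_general
    (n m : ℕ) (hm : 1 ≤ m) (hmn : m ≤ n)
    (u : EuclideanSpace ℂ (Fin n) → ℝ)
    (hu : ContDiff ℝ 2 u)
    (hbounded : ∃ M : ℝ, ∀ z, |u z| ≤ M)
    (hgrad : ∃ C : ℝ, ∀ z, ‖fderiv ℝ u z‖ ≤ C)
    (hmsh : ∀ z, ∃ h : (complexHessian u z).IsHermitian,
      h.eigenvalues ∈ closure (gardingCone n m) ∧ esymm n m h.eigenvalues = 0) :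
    ∀ z w, u z = u w := by
  obtain ⟨M, hM⟩ := hbounded
  obtain ⟨C, hC⟩ := hgrad
  have hL : LipschitzWith C.toNNReal u :=
    lipschitzWith_of_nnnorm_fderiv_le (hu.differentiable two_ne_zero) fun z =>
      NNReal.coe_le_coe.1 ((hC z).trans (Real.le_coe_toNNReal C))
  set b := EuclideanSpace.basisFun (Fin n) ℂ
  have hspec (z) : (isHermitian_leviMatrix (hess u z) b).eigenvalues ∈ closure (gardingCone n m) ∧
      esymm n m (isHermitian_leviMatrix (hess u z) b).eigenvalues = 0 := by
    obtain ⟨h, hz⟩ := hmsh z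
    rwa [(h.eigenvalues_eq_eigenvalues_iff (isHermitian_leviMatrix _ b)).2
      (by rw [complexHessian_eq_transpose_leviMatrix hu, Matrix.charpoly_transpose])] at hz
  exact eq_of_hess_mem_closure_leviCone b hmn hu hM hL
    (fun z => mem_closure_leviCone_of_eigenvalues b hmn (hspec z).1)
    fun z hz => (hz m hm le_rfl).ne' (hspec z).2

end Liouville

/-- **Liouville theorem for maximal `m`-subharmonic functions** (Dinew–Kołodziej).
A globally bounded `C²` `m`-subharmonic function on `ℂⁿ` (`1 < m < n`) with globally bounded
gradient which is maximal, i.e. `σ_m(λ(H_u(z))) = 0` everywhere, must be constant. -/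
theorem liouville_maximal_m_subharmonic
    (n m : ℕ) (hn : 2 ≤ n) (hm : 1 < m) (hmn : m < n)
    (u : EuclideanSpace ℂ (Fin n) → ℝ)
    (hu : ContDiff ℝ 2 u)
    (hbounded : ∃ M : ℝ, ∀ z, |u z| ≤ M)
    (hgrad : ∃ C : ℝ, ∀ z, ‖fderiv ℝ u z‖ ≤ C)
    (hmsh : ∀ z, ∃ h : (complexHessian u z).IsHermitian,
      h.eigenvalues ∈ closure (gardingCone n m) ∧ esymm n m h.eigenvalues = 0) :
    ∀ z w, u z = u w :=
  liouville_maximal_m_subharmonic_general n m hm.le hmn.le u hu hbounded hgrad hmsh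
end
end

section
/- Let n ≥ 2 and let u : ℂⁿ → ℝ be a bounded continuous subharmonic function with a = sup_{ℂⁿ} u. Fix any q > 2n − 2. Then there exist a sequence of points x_k ∈ ℂⁿ \ {0} and radii r_k > 0 with Σ_{k=1}^∞ (r_k/‖x_k‖)^q < ∞ such that u(x) → a as ‖x‖ → ∞ along points x ∈ ℂⁿ \ ⋃_k B(x_k, r_k); that is, for every ε > 0 there is R > 0 such that every x with ‖x‖ > R and x ∉ ⋃_k B(x_k, r_k) satisfies u(x) > a − ε. -/
open MeasureTheory Metric

noncomputable section

instance (n : ℕ) : MeasurableSpace (EuclideanSpace ℂ (Fin n)) := borel _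
instance (n : ℕ) : BorelSpace (EuclideanSpace ℂ (Fin n)) := ⟨rfl⟩

open Filter Module Set
open scoped InnerProductSpace Topology Laplacian

/-!
Let `v = a - u`, a nonnegative superharmonic function with infimum `0`. The average of `v` against
the weight `(1 - |x - z|² / r²)₊²` equals `v z` at `r = 0`, and its derivative in `log r` is, up to
sign, the density at scale `r` of the Riesz measure of `v`. Hence if all densities at scales `r ≤ L`
are at most `η (r / L) ^ β`, then `v z` exceeds the average at scale `L` by at most `η / β`. Where
this fails, some ball of radius `r ≤ L` carries much Riesz mass. A Vitali subfamily of these balls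
in the annulus `L ≤ |z| < 2 L` is disjoint, so its total mass is controlled by the drop of the
averages between scales `8 L` and `16 L`, whence `∑ (r / L) ^ q ≤ C (drop) / η` for
`q = dim - 2 + β`. The averages decrease to `inf v = 0`, so along `L = 2 ^ j` the drops telescope
and `η` can tend to `0` with the sum still convergent.
-/

variable {E : Type*} [NormedAddCommGroup E] [InnerProductSpace ℝ E] [FiniteDimensional ℝ E]

section BallMoments

variable [MeasurableSpace E] [BorelSpace E]

lemma setIntegral_closedBall_comp_linearIsometryEquiv (e : E ≃ₗᵢ[ℝ] E) (f : E → ℝ) (r : ℝ) :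
    ∫ y in closedBall 0 r, f (e y) = ∫ y in closedBall 0 r, f y := by
  have hball : e ⁻¹' closedBall 0 r = closedBall 0 r := by ext; simp
  have h := e.measurePreserving.setIntegral_preimage_emb e.toMeasurableEquiv.measurableEmbedding f
    (closedBall 0 r)
  rwa [hball] at h

lemma setIntegral_closedBall_continuousLinearMap (L : E →L[ℝ] ℝ) (r : ℝ) :
    ∫ y in closedBall 0 r, L y = 0 := by
  have hodd : ∫ y in closedBall 0 r, -L y = ∫ y in closedBall 0 r, L y := by
    simpa using setIntegral_closedBall_comp_linearIsometryEquiv (LinearIsometryEquiv.neg ℝ) L r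
  rw [integral_neg] at hodd
  exact self_eq_neg.1 hodd.symm

lemma integrableOn_closedBall_of_continuous {f : E → ℝ} (hf : Continuous f) (z : E) (r : ℝ) :
    IntegrableOn f (closedBall z r) :=
  hf.continuousOn.integrableOn_compact (isCompact_closedBall z r)

lemma setIntegral_closedBall_inner_sq_congr {x x' : E} (h : ‖x‖ = ‖x'‖) (r : ℝ) :
    ∫ y in closedBall 0 r, ⟪x, y⟫_ℝ ^ 2 = ∫ y in closedBall 0 r, ⟪x', y⟫_ℝ ^ 2 := by
  let σ := (ℝ ∙ (x - x'))ᗮ.reflection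
  have hσ : σ x = x' := Submodule.reflection_sub h
  calc ∫ y in closedBall 0 r, ⟪x, y⟫_ℝ ^ 2
      = ∫ y in closedBall 0 r, ⟪σ x, σ y⟫_ℝ ^ 2 := by simp only [σ.inner_map_map]
    _ = ∫ y in closedBall 0 r, ⟪x', y⟫_ℝ ^ 2 := by
      rw [hσ]
      exact setIntegral_closedBall_comp_linearIsometryEquiv σ (fun y ↦ ⟪x', y⟫_ℝ ^ 2) r

lemma finrank_mul_setIntegral_closedBall_inner_sq (x : E) (r : ℝ) :
    finrank ℝ E * ∫ y in closedBall 0 r, ⟪x, y⟫_ℝ ^ 2 =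
      ‖x‖ ^ 2 * ∫ y in closedBall (0 : E) r, ‖y‖ ^ 2 := by
  let b := stdOrthonormalBasis ℝ E
  have hdir (i) : ∫ y in closedBall 0 r, ⟪x, y⟫_ℝ ^ 2 =
      ‖x‖ ^ 2 * ∫ y in closedBall 0 r, ⟪b i, y⟫_ℝ ^ 2 := by
    rw [setIntegral_closedBall_inner_sq_congr (x' := ‖x‖ • b i) (by simp [norm_smul]),
      ← integral_const_mul]
    simp only [inner_smul_left, mul_pow, conj_trivial]
  have hsum : ∫ y in closedBall (0 : E) r, ‖y‖ ^ 2 =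
      ∑ i, ∫ y in closedBall 0 r, ⟪b i, y⟫_ℝ ^ 2 := by
    rw [← integral_finsetSum _ fun i _ ↦
      integrableOn_closedBall_of_continuous (by fun_prop) _ _]
    simp only [← b.sum_sq_norm_inner_right, Real.norm_eq_abs, sq_abs]
  rw [hsum, Finset.mul_sum]
  simp only [← hdir, Finset.sum_const, Finset.card_univ, Fintype.card_fin, nsmul_eq_mul]

lemma finrank_mul_setIntegral_closedBall_inner_mul_inner (x x' : E) (r : ℝ) :
    finrank ℝ E * ∫ y in closedBall 0 r, ⟪x, y⟫_ℝ * ⟪x', y⟫_ℝ =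
      ⟪x, x'⟫_ℝ * ∫ y in closedBall (0 : E) r, ‖y‖ ^ 2 := by
  have hpol : ∫ y in closedBall 0 r, ⟪x, y⟫_ℝ * ⟪x', y⟫_ℝ =
      ((∫ y in closedBall 0 r, ⟪x + x', y⟫_ℝ ^ 2) -
        ∫ y in closedBall 0 r, ⟪x - x', y⟫_ℝ ^ 2) / 4 := by
    rw [← integral_sub (integrableOn_closedBall_of_continuous (by fun_prop) _ _)
      (integrableOn_closedBall_of_continuous (by fun_prop) _ _), ← integral_div]
    congr with y
    rw [inner_add_left, inner_sub_left]
    ring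
  have hadd := finrank_mul_setIntegral_closedBall_inner_sq (x + x') r
  have hsub := finrank_mul_setIntegral_closedBall_inner_sq (x - x') r
  rw [norm_add_sq_real] at hadd
  rw [norm_sub_sq_real] at hsub
  rw [hpol]
  linear_combination (hadd - hsub) / 4

lemma finrank_mul_setIntegral_closedBall_bilinear (B : E →L[ℝ] E →L[ℝ] ℝ) {ι : Type*} [Fintype ι]
    (b : OrthonormalBasis ι ℝ E) (r : ℝ) :
    finrank ℝ E * ∫ y in closedBall 0 r, B y y =
      (∑ i, B (b i) (b i)) * ∫ y in closedBall (0 : E) r, ‖y‖ ^ 2 := by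
  classical
  have hexpand (y : E) :
      B y y = ∑ i, ∑ j, B (b i) (b j) * (⟪b i, y⟫_ℝ * ⟪b j, y⟫_ℝ) := by
    conv_lhs => rw [← b.sum_repr' y]
    simp only [map_sum, map_smul, sum_apply, smul_apply,
      smul_eq_mul, Finset.mul_sum]
    rw [Finset.sum_comm]
    exact Finset.sum_congr rfl fun i _ ↦ Finset.sum_congr rfl fun j _ ↦ by ring
  have hint (i j) : IntegrableOn (fun y ↦ B (b i) (b j) * (⟪b i, y⟫_ℝ * ⟪b j, y⟫_ℝ))
      (closedBall 0 r) := integrableOn_closedBall_of_continuous (by fun_prop) _ _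
  simp only [hexpand]
  rw [integral_finsetSum _ fun i _ ↦ integrable_finsetSum _ fun j _ ↦ hint i j, Finset.mul_sum,
    Finset.sum_mul]
  refine Finset.sum_congr rfl fun i _ ↦ ?_
  rw [integral_finsetSum _ fun j _ ↦ hint i j, Finset.mul_sum]
  simp only [integral_const_mul, mul_left_comm (finrank ℝ E : ℝ),
    finrank_mul_setIntegral_closedBall_inner_mul_inner, b.inner_eq_ite]
  simp

lemma setIntegral_closedBall_norm_sq_pos [Nontrivial E] :
    0 < ∫ y in closedBall (0 : E) 1, ‖y‖ ^ 2 := by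
  rw [setIntegral_pos_iff_support_of_nonneg_ae (Eventually.of_forall fun y ↦ by positivity)
    (integrableOn_closedBall_of_continuous (by fun_prop) _ _)]
  obtain ⟨y, hy⟩ := exists_norm_eq E (c := 1 / 2) (by norm_num)
  have hopen : IsOpen (ball (0 : E) 1 \ {0}) := isOpen_ball.sdiff isClosed_singleton
  refine (hopen.measure_pos volume ⟨y, ?_, ?_⟩).trans_le (measure_mono fun w hw ↦ ⟨?_, ?_⟩)
  · rw [mem_ball_zero_iff, hy]; norm_num
  · rintro rfl; norm_num at hy
  · simpa using hw.2
  · exact ball_subset_closedBall hw.1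

end BallMoments

section Taylor

variable {F : Type*} [NormedAddCommGroup F] [NormedSpace ℝ F]

lemma exists_taylor_two {φ : F → ℝ} (hφ : ContDiff ℝ 2 φ) (x h : F) :
    ∃ θ ∈ Ioo (0 : ℝ) 1,
      φ (x + h) = φ x + fderiv ℝ φ x h + fderiv ℝ (fderiv ℝ φ) (x + θ • h) h h / 2 := by
  have hline (t : ℝ) : HasDerivAt (fun t : ℝ ↦ x + t • h) h t := by
    simpa using ((hasDerivAt_id t).smul_const h).const_add x
  have hderiv : deriv (fun t : ℝ ↦ φ (x + t • h)) = fun t ↦ fderiv ℝ φ (x + t • h) h :=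
    funext fun t ↦ ((hφ.differentiable (by norm_num) _).hasFDerivAt.comp_hasDerivAt t
      (hline t)).deriv
  have hderiv2 (t : ℝ) : deriv (fun t : ℝ ↦ fderiv ℝ φ (x + t • h) h) t =
      fderiv ℝ (fderiv ℝ φ) (x + t • h) h h :=
    ((((hφ.fderiv_right (m := 1) (by norm_num)).differentiable (by norm_num) _).hasFDerivAt
      |>.comp_hasDerivAt t (hline t)).clm_apply (hasDerivAt_const t h)).deriv.trans (by simp)
  obtain ⟨θ, hθ, heq⟩ := taylor_mean_remainder_lagrange_iteratedDeriv (n := 1) zero_ne_one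
    (f := fun t : ℝ ↦ φ (x + t • h)) (by fun_prop)
  refine ⟨θ, by simpa using hθ, ?_⟩
  have h2 : iteratedDeriv 2 (fun t : ℝ ↦ φ (x + t • h)) θ =
      fderiv ℝ (fderiv ℝ φ) (x + θ • h) h h := by
    rw [iteratedDeriv_succ, iteratedDeriv_one, hderiv, hderiv2]
  have h1 : derivWithin (fun t : ℝ ↦ φ (x + t • h)) (uIcc 0 1) 0 = fderiv ℝ φ x h := by
    have hd : DifferentiableAt ℝ (fun t : ℝ ↦ φ (x + t • h)) 0 :=
      (hφ.differentiable (by norm_num) _).comp _ (hline 0).differentiableAt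
    rw [uIcc_of_le zero_le_one, hd.derivWithin (uniqueDiffOn_Icc zero_lt_one 0 (by simp)), hderiv]
    simp
  rw [taylorWithinEval_succ, taylor_within_zero_eval, iteratedDerivWithin_one, h1, h2] at heq
  norm_num at heq
  linarith

lemma continuous_fderiv_fderiv {φ : F → ℝ} (hφ : ContDiff ℝ 2 φ) :
    Continuous (fderiv ℝ (fderiv ℝ φ)) :=
  (hφ.fderiv_right (m := 1) (by norm_num)).continuous_fderiv one_ne_zero

lemma exists_norm_fderiv_fderiv_le {φ : F → ℝ} (hφ : ContDiff ℝ 2 φ)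
    (hsupp : HasCompactSupport φ) : ∃ C, ∀ x, ‖fderiv ℝ (fderiv ℝ φ) x‖ ≤ C :=
  HasCompactSupport.exists_bound_of_continuous (E := F →L[ℝ] F →L[ℝ] ℝ)
    ((hsupp.fderiv ℝ).fderiv ℝ) (continuous_fderiv_fderiv hφ)

lemma tendsto_taylor_remainder_div_sq {φ : F → ℝ} (hφ : ContDiff ℝ 2 φ) (x h : F) :
    Tendsto (fun δ : ℝ ↦ (φ (x + δ • h) - φ x - fderiv ℝ φ x (δ • h)) / δ ^ 2) (𝓝[>] 0)
      (𝓝 (fderiv ℝ (fderiv ℝ φ) x h h / 2)) := by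
  choose θ hθ hθφ using fun δ : ℝ ↦ exists_taylor_two hφ x (δ • h)
  have hD := continuous_fderiv_fderiv hφ
  have hlim : Tendsto (fun δ : ℝ ↦ x + θ δ • δ • h) (𝓝[>] 0) (𝓝 x) := by
    have hθδ : Tendsto (fun δ : ℝ ↦ θ δ * δ) (𝓝[>] 0) (𝓝 0) :=
      bdd_le_mul_tendsto_zero' 1 (Eventually.of_forall fun δ ↦ by
        rw [abs_of_pos (hθ δ).1]; exact (hθ δ).2.le) (tendsto_id.mono_left nhdsWithin_le_nhds)
    simpa [smul_smul] using (hθδ.smul_const h).const_add x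
  have hDlim := ((((hD.clm_apply continuous_const).clm_apply continuous_const).tendsto x
    : Tendsto (fun w ↦ fderiv ℝ (fderiv ℝ φ) w h h) _ _).comp hlim).div_const 2
  refine hDlim.congr' ?_
  filter_upwards [self_mem_nhdsWithin] with δ hδ
  have hδ0 : δ ≠ 0 := (mem_Ioi.1 hδ).ne'
  rw [hθφ δ]
  simp only [Function.comp_apply, map_smul, smul_apply, smul_eq_mul]
  field_simp
  ring

lemma abs_taylor_remainder_le {φ : F → ℝ} (hφ : ContDiff ℝ 2 φ) {C : ℝ}
    (hC : ∀ x, ‖fderiv ℝ (fderiv ℝ φ) x‖ ≤ C) (x h : F) :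
    |φ (x + h) - φ x - fderiv ℝ φ x h| ≤ C / 2 * ‖h‖ ^ 2 := by
  obtain ⟨θ, -, hθφ⟩ := exists_taylor_two hφ x h
  have hrem : φ (x + h) - φ x - fderiv ℝ φ x h = fderiv ℝ (fderiv ℝ φ) (x + θ • h) h h / 2 := by
    rw [hθφ]; ring
  have hle := (fderiv ℝ (fderiv ℝ φ) (x + θ • h)).le_of_opNorm₂_le_of_le (hC _) le_rfl le_rfl
    (x := h) (y := h)
  rw [hrem, abs_div, abs_two]
  rw [Real.norm_eq_abs] at hle
  linarith

end Taylor

section BallMeans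

variable [MeasurableSpace E] [BorelSpace E] {φ : E → ℝ} {C : ℝ}

lemma setIntegral_closedBall_sub_eq_taylor_remainder (hφ : ContDiff ℝ 2 φ) (x : E) (δ : ℝ) :
    ∫ y in closedBall 0 1, (φ (x + δ • y) - φ x) =
      ∫ y in closedBall 0 1, (φ (x + δ • y) - φ x - fderiv ℝ φ x (δ • y)) := by
  have hcont := hφ.continuous
  symm
  rw [integral_sub (integrableOn_closedBall_of_continuous (by fun_prop) _ _)
    (integrableOn_closedBall_of_continuous (by fun_prop) _ _)]
  simp only [map_smul, smul_eq_mul, integral_const_mul,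
    setIntegral_closedBall_continuousLinearMap, mul_zero, sub_zero]

lemma abs_setIntegral_closedBall_sub_le (hφ : ContDiff ℝ 2 φ)
    (hC : ∀ x, ‖fderiv ℝ (fderiv ℝ φ) x‖ ≤ C) (x : E) (δ : ℝ) :
    |∫ y in closedBall 0 1, (φ (x + δ • y) - φ x)| ≤
      C / 2 * volume.real (closedBall (0 : E) 1) * δ ^ 2 := by
  have hC0 : 0 ≤ C := (norm_nonneg (fderiv ℝ (fderiv ℝ φ) 0)).trans (hC 0)
  rw [setIntegral_closedBall_sub_eq_taylor_remainder hφ, mul_right_comm, ← Real.norm_eq_abs]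
  refine norm_setIntegral_le_of_norm_le_const measure_closedBall_lt_top fun y hy ↦ ?_
  refine (abs_taylor_remainder_le hφ hC x _).trans ?_
  have hy1 : ‖y‖ ^ 2 ≤ 1 := pow_le_one₀ (norm_nonneg _) (mem_closedBall_zero_iff.1 hy)
  rw [norm_smul, mul_pow, Real.norm_eq_abs, sq_abs]
  gcongr
  exact mul_le_of_le_one_right (sq_nonneg δ) hy1

lemma tendsto_setIntegral_closedBall_sub_div_sq [Nontrivial E] (hφ : ContDiff ℝ 2 φ)
    (hC : ∀ x, ‖fderiv ℝ (fderiv ℝ φ) x‖ ≤ C) (x : E) :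
    Tendsto (fun δ : ℝ ↦ (∫ y in closedBall 0 1, (φ (x + δ • y) - φ x)) / δ ^ 2) (𝓝[>] 0)
      (𝓝 ((∫ y in closedBall (0 : E) 1, ‖y‖ ^ 2) / (2 * finrank ℝ E) * Δ φ x)) := by
  have hcont := hφ.continuous
  have hlim : Tendsto
      (fun δ : ℝ ↦ ∫ y in closedBall 0 1, (φ (x + δ • y) - φ x - fderiv ℝ φ x (δ • y)) / δ ^ 2)
      (𝓝[>] 0) (𝓝 (∫ y in closedBall 0 1, fderiv ℝ (fderiv ℝ φ) x y y / 2)) := by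
    refine tendsto_integral_filter_of_dominated_convergence (fun y ↦ C / 2 * ‖y‖ ^ 2)
      (Eventually.of_forall fun δ ↦ Continuous.aestronglyMeasurable (by fun_prop)) ?_
      (integrableOn_closedBall_of_continuous (by fun_prop) _ _)
      (Eventually.of_forall fun y ↦ tendsto_taylor_remainder_div_sq hφ x y)
    filter_upwards [self_mem_nhdsWithin] with δ hδ
    refine Eventually.of_forall fun y ↦ ?_
    have hδ0 : 0 < δ := hδ
    rw [norm_div, Real.norm_eq_abs, Real.norm_eq_abs, abs_sq, div_le_iff₀ (by positivity)]
    refine (abs_taylor_remainder_le hφ hC x _).trans_eq ?_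
    rw [norm_smul, mul_pow, Real.norm_eq_abs, sq_abs]
    ring
  have hmoment := finrank_mul_setIntegral_closedBall_bilinear (fderiv ℝ (fderiv ℝ φ) x)
    (stdOrthonormalBasis ℝ E) 1
  have hm : (finrank ℝ E : ℝ) ≠ 0 := Nat.cast_ne_zero.2 finrank_pos.ne'
  have hlap : Δ φ x = ∑ i, fderiv ℝ (fderiv ℝ φ) x (stdOrthonormalBasis ℝ E i)
      (stdOrthonormalBasis ℝ E i) := by
    simp [InnerProductSpace.laplacian_eq_iteratedFDeriv_stdOrthonormalBasis,
      iteratedFDeriv_two_apply]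
  rw [← hlap] at hmoment
  convert hlim using 2 with δ
  · rw [setIntegral_closedBall_sub_eq_taylor_remainder hφ, integral_div]
  · rw [integral_div]
    field_simp
    linarith

end BallMeans

section Superharmonic

lemma apply_add_eq_zero_of_notMem_cthickening {F : Type*} [SeminormedAddCommGroup F]
    {φ : F → ℝ} {δ : ℝ} {x h : F} (hh : ‖h‖ ≤ δ)
    (hx : x ∉ cthickening δ (tsupport φ)) : φ (x + h) = 0 := by
  by_contra hne
  exact hx (mem_cthickening_of_dist_le x (x + h) δ _ (subset_tsupport φ hne) (by simpa using hh))

variable [MeasurableSpace E] [BorelSpace E]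

/-- Superharmonic functions on a Euclidean space; only continuous ones are considered, so that the
super-mean-value inequality over all balls is the whole condition. -/
structure IsSuperharmonic (v : E → ℝ) : Prop where
  continuous : Continuous v
  setAverage_ball_le : ∀ z r, 0 < r → ⨍ w in ball z r, v w ≤ v z

lemma integrable_prod_restrict_of_isCompact {F : E × E → ℝ} (hF : Continuous F) {K s : Set E}
    (hK : IsCompact K) (hs : IsCompact s) (hzero : ∀ x ∉ K, ∀ y ∈ s, F (x, y) = 0) :
    Integrable F (volume.prod (volume.restrict s)) := by
  have hKs : IntegrableOn F (K ×ˢ s) (volume.prod volume) :=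
    hF.continuousOn.integrableOn_compact (hK.prod hs)
  have huniv : IntegrableOn F (univ ×ˢ s) (volume.prod volume) :=
    hKs.of_forall_sdiff_eq_zero (MeasurableSet.univ.prod hs.measurableSet) fun p hp ↦
      hzero p.1 (fun hpK ↦ hp.2 ⟨hpK, hp.1.2⟩) p.2 hp.1.2
  rwa [IntegrableOn, ← Measure.prod_restrict, Measure.restrict_univ] at huniv

lemma integral_mul_setIntegral_closedBall_sub_comm {v φ : E → ℝ} (hv : Continuous v)
    (hφ : Continuous φ) (hsupp : HasCompactSupport φ) (δ : ℝ) :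
    ∫ x, v x * ∫ y in closedBall 0 1, (φ (x + δ • y) - φ x) =
      ∫ x, φ x * ∫ y in closedBall 0 1, (v (x - δ • y) - v x) := by
  have hφδ (x : E) (hx : x ∉ cthickening |δ| (tsupport φ)) (y : E) (hy : y ∈ closedBall 0 1) :
      φ (x + δ • y) = 0 := by
    refine apply_add_eq_zero_of_notMem_cthickening ?_ hx
    rw [norm_smul]
    exact mul_le_of_le_one_right (norm_nonneg δ) (mem_closedBall_zero_iff.1 hy)
  have hφ0 (x : E) (hx : x ∉ cthickening |δ| (tsupport φ)) : φ x = 0 := by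
    simpa using hφδ x hx 0 (by simp)
  simp_rw [← integral_const_mul]
  rw [integral_integral_swap (integrable_prod_restrict_of_isCompact (by fun_prop)
      (hsupp.isCompact.cthickening (r := |δ|)) (isCompact_closedBall 0 1) fun x hx y hy ↦ by
        simp [hφδ x hx y hy, hφ0 x hx]),
    integral_integral_swap (integrable_prod_restrict_of_isCompact (by fun_prop)
      (hsupp.isCompact.cthickening (r := |δ|)) (isCompact_closedBall 0 1) fun x hx y _ ↦ by
        simp [hφ0 x hx])]
  congr with y
  have hφv : Integrable fun x ↦ φ x * v x :=
    (hφ.mul hv).integrable_of_hasCompactSupport hsupp.mul_right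
  have hφv' : Integrable fun x ↦ φ x * v (x - δ • y) :=
    (hφ.mul (by fun_prop)).integrable_of_hasCompactSupport hsupp.mul_right
  have htrans : (fun x ↦ v x * (φ (x + δ • y) - φ x)) =
      fun x ↦ φ (x + δ • y) * v (x + δ • y - δ • y) - φ x * v x := by
    ext x
    rw [add_sub_cancel_right]
    ring
  rw [htrans, integral_sub (hφv'.comp_add_right (δ • y)) hφv,
    integral_add_right_eq_self (fun x ↦ φ x * v (x - δ • y)) (δ • y), ← integral_sub hφv' hφv]
  simp only [mul_sub]

variable [Nontrivial E]

lemma tendsto_integral_mul_setIntegral_closedBall_sub_div_sq {v φ : E → ℝ} (hv : Continuous v)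
    (hφ : ContDiff ℝ 2 φ) (hsupp : HasCompactSupport φ) :
    Tendsto (fun δ : ℝ ↦ ∫ x, v x * ((∫ y in closedBall 0 1, (φ (x + δ • y) - φ x)) / δ ^ 2))
      (𝓝[>] 0)
      (𝓝 (∫ x, v x * ((∫ y in closedBall (0 : E) 1, ‖y‖ ^ 2) / (2 * finrank ℝ E) * Δ φ x))) := by
  have hcont := hφ.continuous
  obtain ⟨C, hC⟩ := exists_norm_fderiv_fderiv_le hφ hsupp
  let A := C / 2 * volume.real (closedBall (0 : E) 1)
  let K := cthickening 1 (tsupport φ)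
  have hK : IsCompact K := hsupp.isCompact.cthickening
  have hquot {δ : ℝ} (hδ : δ ∈ Ioc 0 1) (x : E) :
      ‖v x * ((∫ y in closedBall 0 1, (φ (x + δ • y) - φ x)) / δ ^ 2)‖ ≤
        K.indicator (fun x ↦ |v x| * A) x := by
    by_cases hx : x ∈ K
    · rw [indicator_of_mem hx, norm_mul, norm_div, Real.norm_eq_abs, Real.norm_eq_abs,
        Real.norm_eq_abs, abs_sq]
      gcongr
      rw [div_le_iff₀ (pow_pos hδ.1 2)]
      exact abs_setIntegral_closedBall_sub_le hφ hC x δ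
    · have hzero {y : E} (hy : ‖y‖ ≤ 1) : φ (x + δ • y) = 0 := by
        refine apply_add_eq_zero_of_notMem_cthickening ?_ hx
        rw [norm_smul, Real.norm_of_nonneg hδ.1.le]
        exact mul_le_one₀ hδ.2 (norm_nonneg y) hy
      have hzero0 : φ x = 0 := by simpa using hzero (y := 0) (norm_zero.trans_le zero_le_one)
      rw [indicator_of_notMem hx, setIntegral_eq_zero_of_forall_eq_zero fun y hy ↦ by
        rw [hzero (mem_closedBall_zero_iff.1 hy), hzero0, sub_zero]]
      simp
  refine tendsto_integral_filter_of_dominated_convergence (K.indicator fun x ↦ |v x| * A)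
    (Eventually.of_forall fun δ ↦ ?_) ?_ ?_
    (Eventually.of_forall fun x ↦ (tendsto_setIntegral_closedBall_sub_div_sq hφ hC x).const_mul _)
  · exact (hv.mul ((continuous_parametric_integral_of_continuous (by fun_prop)
      (isCompact_closedBall 0 1)).div_const _)).aestronglyMeasurable
  · filter_upwards [Ioc_mem_nhdsGT one_pos] with δ hδ
    exact Eventually.of_forall (hquot hδ)
  · exact (integrable_indicator_iff hK.measurableSet).2
      (Continuous.continuousOn (by fun_prop) |>.integrableOn_compact hK)

variable {v : E → ℝ}

lemma IsSuperharmonic.setIntegral_closedBall_le (hv : IsSuperharmonic v) (z : E) {r : ℝ}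
    (hr : 0 < r) : ∫ w in closedBall z r, v w ≤ volume.real (closedBall z r) * v z := by
  have hae : ball z r =ᵐ[volume] closedBall z r :=
    ae_eq_of_subset_of_measure_ge ball_subset_closedBall
      (Measure.addHaar_closedBall_eq_addHaar_ball volume z r).le
      measurableSet_ball.nullMeasurableSet measure_closedBall_lt_top.ne
  have havg := hv.setAverage_ball_le z r hr
  rw [setAverage_congr hae, setAverage_eq, smul_eq_mul] at havg
  exact (inv_mul_le_iff₀ (ENNReal.toReal_pos (measure_closedBall_pos volume z hr).ne'
    measure_closedBall_lt_top.ne)).1 havg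

lemma IsSuperharmonic.setIntegral_closedBall_sub_nonpos (hv : IsSuperharmonic v) (x : E) {δ : ℝ}
    (hδ : 0 < δ) : ∫ y in closedBall 0 1, (v (x - δ • y) - v x) ≤ 0 := by
  have hcont := hv.continuous
  have hscale := Measure.setIntegral_comp_smul_of_pos volume (fun w ↦ v (x - w) - v x)
    (closedBall 0 1) hδ
  have htrans : ∫ w in closedBall 0 δ, v (x - w) = ∫ w in closedBall x δ, v w := by
    rw [← (Measure.measurePreserving_sub_left volume x).setIntegral_preimage_emb
      (MeasurableEquiv.subLeft x).measurableEmbedding v (closedBall x δ)]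
    congr 2
    ext
    simp [dist_eq_norm]
  have hvol : volume.real (closedBall (0 : E) δ) = volume.real (closedBall x δ) := by
    simp only [Measure.real, Measure.addHaar_closedBall_center]
  rw [hscale, _root_.smul_closedBall _ _ zero_le_one, smul_zero, mul_one, Real.norm_of_nonneg hδ.le,
    integral_sub (integrableOn_closedBall_of_continuous (by fun_prop) _ _)
      (integrableOn_closedBall_of_continuous (by fun_prop) _ _), htrans, setIntegral_const, hvol]
  exact smul_nonpos_of_nonneg_of_nonpos (by positivity)
    (sub_nonpos.2 (hv.setIntegral_closedBall_le x hδ))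

theorem IsSuperharmonic.integral_mul_laplacian_nonpos (hv : IsSuperharmonic v) {φ : E → ℝ}
    (hφ : ContDiff ℝ 2 φ) (hsupp : HasCompactSupport φ) (hφ0 : ∀ x, 0 ≤ φ x) :
    ∫ x, v x * Δ φ x ≤ 0 := by
  have hquot {δ : ℝ} (hδ : 0 < δ) :
      (∫ x, v x * ((∫ y in closedBall 0 1, (φ (x + δ • y) - φ x)) / δ ^ 2)) ≤ 0 := by
    simp only [← mul_div_assoc, integral_div]
    rw [integral_mul_setIntegral_closedBall_sub_comm hv.continuous hφ.continuous hsupp]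
    exact div_nonpos_of_nonpos_of_nonneg (integral_nonpos fun x ↦ mul_nonpos_of_nonneg_of_nonpos
      (hφ0 x) (hv.setIntegral_closedBall_sub_nonpos x hδ)) (sq_nonneg δ)
  have hlim := le_of_tendsto
    (tendsto_integral_mul_setIntegral_closedBall_sub_div_sq hv.continuous hφ hsupp)
    (eventually_mem_nhdsWithin.mono fun δ hδ ↦ hquot hδ)
  simp only [mul_left_comm (v _), integral_const_mul] at hlim
  refine nonpos_of_mul_nonpos_right hlim (div_pos setIntegral_closedBall_norm_sq_pos ?_)
  exact mul_pos two_pos (Nat.cast_pos.2 finrank_pos)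

end Superharmonic

section PosPart

lemma hasDerivAt_posPart_pow (k : ℕ) (x : ℝ) :
    HasDerivAt (fun s : ℝ ↦ max s 0 ^ (k + 2)) ((k + 2) * max x 0 ^ (k + 1)) x := by
  have hne (y : ℝ) (hy : y ≠ 0) :
      HasDerivAt (fun s : ℝ ↦ max s 0 ^ (k + 2)) ((k + 2) * max y 0 ^ (k + 1)) y := by
    rcases hy.lt_or_gt with hy | hy
    · rw [max_eq_right hy.le, zero_pow (by simp), mul_zero]
      refine (hasDerivAt_const y (0 : ℝ)).congr_of_eventuallyEq ?_
      filter_upwards [Iio_mem_nhds hy] with s hs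
      rw [max_eq_right (mem_Iio.1 hs).le, zero_pow (by simp)]
    · rw [max_eq_left hy.le]
      refine HasDerivAt.congr_of_eventuallyEq (f := fun s ↦ s ^ (k + 2)) ?_ ?_
      · simpa using hasDerivAt_pow (k + 2) y
      · filter_upwards [Ioi_mem_nhds hy] with s hs
        rw [max_eq_left (mem_Ioi.1 hs).le]
  rcases eq_or_ne x 0 with rfl | hx
  · exact hasDerivAt_of_hasDerivAt_of_ne hne (Continuous.continuousAt (by fun_prop))
      (Continuous.continuousAt (by fun_prop))
  · exact hne x hx

lemma contDiff_posPart_pow (n : ℕ) : ContDiff ℝ n (fun s : ℝ ↦ max s 0 ^ (n + 1)) := by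
  induction n with
  | zero => exact contDiff_zero.2 (by fun_prop)
  | succ n ih =>
    push_cast
    refine contDiff_succ_iff_deriv.2
      ⟨fun s ↦ (hasDerivAt_posPart_pow n s).differentiableAt, by simp, ?_⟩
    rw [funext fun s ↦ (hasDerivAt_posPart_pow n s).deriv]
    exact contDiff_const.mul ih

end PosPart

lemma laplacian_comp_norm_sub_sq {f f' f'' : ℝ → ℝ} (hf : ∀ s, HasDerivAt f (f' s) s)
    (hf' : ∀ s, HasDerivAt f' (f'' s) s) (z x : E) :
    Δ (fun x ↦ f (‖x - z‖ ^ 2)) x =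
      4 * ‖x - z‖ ^ 2 * f'' (‖x - z‖ ^ 2) + 2 * finrank ℝ E * f' (‖x - z‖ ^ 2) := by
  have hsq (x : E) : HasFDerivAt (fun x ↦ ‖x - z‖ ^ 2) (2 • innerSL ℝ (x - z)) x := by
    simpa using ((hasFDerivAt_id x).sub_const z).norm_sq
  have hfderiv : fderiv ℝ (fun x ↦ f (‖x - z‖ ^ 2)) =
      fun x ↦ f' (‖x - z‖ ^ 2) • 2 • innerSL ℝ (x - z) :=
    funext fun x ↦ ((hf _).comp_hasFDerivAt x (hsq x)).fderiv
  have hinner :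
      HasFDerivAt (fun x ↦ 2 • innerSL ℝ (x - z)) (2 • innerSL ℝ : E →L[ℝ] E →L[ℝ] ℝ) x :=
    ((innerSL ℝ).hasFDerivAt.comp x ((hasFDerivAt_id x).sub_const z)).const_smul 2
  have hfderiv2 (h : E) : fderiv ℝ (fun x ↦ f' (‖x - z‖ ^ 2) • 2 • innerSL ℝ (x - z)) x h h =
      4 * ⟪h, x - z⟫_ℝ ^ 2 * f'' (‖x - z‖ ^ 2) + 2 * ‖h‖ ^ 2 * f' (‖x - z‖ ^ 2) := by
    have hprod := ((hf' _).comp_hasFDerivAt x (hsq x)).smul hinner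
    rw [HasFDerivAt.fderiv (f := fun x ↦ f' (‖x - z‖ ^ 2) • 2 • innerSL ℝ (x - z)) hprod]
    change f' (‖x - z‖ ^ 2) * (2 • ⟪h, h⟫_ℝ) +
      f'' (‖x - z‖ ^ 2) * (2 • ⟪x - z, h⟫_ℝ) * (2 • ⟪x - z, h⟫_ℝ) = _
    rw [real_inner_self_eq_norm_sq, real_inner_comm, two_nsmul, two_nsmul]
    ring
  have hsum := (stdOrthonormalBasis ℝ E).sum_sq_norm_inner_right (x - z)
  simp only [Real.norm_eq_abs, sq_abs] at hsum
  simp only [InnerProductSpace.laplacian_eq_iteratedFDeriv_stdOrthonormalBasis,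
    iteratedFDeriv_two_apply, hfderiv, Matrix.cons_val_zero, Matrix.cons_val_one, hfderiv2,
    OrthonormalBasis.norm_eq_one, Finset.sum_add_distrib, ← Finset.sum_mul, ← Finset.mul_sum, hsum,
    Finset.sum_const, Finset.card_univ, Fintype.card_fin, nsmul_eq_mul]
  ring

section Cap

variable {F : Type*} [SeminormedAddCommGroup F]

/-- The paraboloid cap of radius `r` centred at `z`, with height `1` and support `closedBall z r`.
Its square serves as the weight of the means below, and its cube as a test function; the two are
related by `∂ᵣ (r ^ (-m) * cap z r ^ 2) = r ^ (1 - m) * Δ (cap z r ^ 3) / 6` in dimension `m`.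
The radius is meant to be positive: `cap z 0` is constantly `1`. -/
def cap (z : F) (r : ℝ) (x : F) : ℝ := max (1 - ‖x - z‖ ^ 2 / r ^ 2) 0

lemma cap_nonneg (z : F) (r : ℝ) (x : F) : 0 ≤ cap z r x := le_max_right _ _

lemma cap_le_one (z : F) (r : ℝ) (x : F) : cap z r x ≤ 1 :=
  max_le (sub_le_self _ (by positivity)) zero_le_one

@[fun_prop]
lemma continuous_cap (z : F) (r : ℝ) : Continuous (cap z r) := by
  unfold cap
  fun_prop

lemma cap_eq_zero {z : F} {r : ℝ} {x : F} (hr : 0 < r) (hx : x ∉ ball z r) : cap z r x = 0 := by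
  refine max_eq_right (sub_nonpos.2 ((one_le_div (by positivity)).2 ?_))
  gcongr
  simpa [dist_eq_norm] using hx

lemma three_fourths_le_cap {z : F} {r : ℝ} {x : F} (hr : 0 < r) (hx : ‖x - z‖ ≤ r / 2) :
    3 / 4 ≤ cap z r x := by
  refine le_max_of_le_left ?_
  have hsq : ‖x - z‖ ^ 2 / r ^ 2 ≤ 1 / 4 := by
    rw [div_le_iff₀ (by positivity)]
    nlinarith [norm_nonneg (x - z)]
  linarith

lemma hasDerivAt_cap_sq (z x : F) {r : ℝ} (hr : r ≠ 0) :
    HasDerivAt (fun r ↦ cap z r x ^ 2) (4 * cap z r x * ‖x - z‖ ^ 2 / r ^ 3) r := by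
  have hquot : HasDerivAt (fun r ↦ 1 - ‖x - z‖ ^ 2 / r ^ 2) (2 * ‖x - z‖ ^ 2 / r ^ 3) r := by
    refine (((hasDerivAt_pow 2 r).fun_inv (pow_ne_zero 2 hr)).const_mul
      (‖x - z‖ ^ 2)).const_sub 1 |>.congr_deriv ?_
    field_simp
    ring
  refine ((hasDerivAt_posPart_pow 0 _).comp r hquot).congr_deriv ?_
  simp only [cap]
  push_cast
  ring

lemma cap_add_smul [NormedSpace ℝ F] (z : F) {r : ℝ} (hr : 0 < r) (y : F) :
    cap z r (z + r • y) = cap 0 1 y := by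
  simp [cap, norm_smul, mul_pow, hr.ne']

lemma hasCompactSupport_cap_pow (z : E) {r : ℝ} (hr : 0 < r) {k : ℕ} (hk : k ≠ 0) :
    HasCompactSupport fun x ↦ cap z r x ^ k :=
  .intro (isCompact_closedBall z r) fun x hx ↦ by
    rw [cap_eq_zero hr fun h ↦ hx (ball_subset_closedBall h), zero_pow hk]

lemma contDiff_cap_cube {F : Type*} [NormedAddCommGroup F] [InnerProductSpace ℝ F]
    (z : F) (r : ℝ) : ContDiff ℝ 2 fun x ↦ cap z r x ^ 3 :=
  (contDiff_posPart_pow 2).comp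
    (contDiff_const.sub (((contDiff_id.sub contDiff_const).norm_sq ℝ).div_const _))

lemma laplacian_cap_cube (z : E) (r : ℝ) (x : E) :
    Δ (fun x ↦ cap z r x ^ 3) x =
      6 / r ^ 2 * (4 * cap z r x * (‖x - z‖ ^ 2 / r ^ 2) - finrank ℝ E * cap z r x ^ 2) := by
  have hlin (s : ℝ) : HasDerivAt (fun s ↦ 1 - s / r ^ 2) (-(1 / r ^ 2)) s :=
    ((hasDerivAt_id s).div_const _).const_sub 1
  refine (laplacian_comp_norm_sub_sq
    (fun s ↦ (hasDerivAt_posPart_pow 1 _).comp s (hlin s))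
    (fun s ↦ (((hasDerivAt_posPart_pow 0 _).comp s (hlin s)).const_mul _).mul_const _) z x).trans ?_
  simp only [cap]
  push_cast
  ring

end Cap

section CapMean

variable [MeasurableSpace E] [BorelSpace E]

lemma integrable_mul_cap_pow {v : E → ℝ} (hv : Continuous v) (z : E) {r : ℝ} (hr : 0 < r) {k : ℕ}
    (hk : k ≠ 0) : Integrable fun x ↦ v x * cap z r x ^ k :=
  Continuous.integrable_of_hasCompactSupport (by fun_prop)
    (hasCompactSupport_cap_pow z hr hk).mul_left

lemma setIntegral_mul_cap_pow (v : E → ℝ) (z : E) {r R : ℝ} (hr : 0 < r) (hrR : r ≤ R) {k : ℕ}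
    (hk : k ≠ 0) : ∫ x in closedBall z R, v x * cap z r x ^ k = ∫ x, v x * cap z r x ^ k :=
  setIntegral_eq_integral_of_forall_compl_eq_zero fun x hx ↦ by
    rw [cap_eq_zero hr fun h ↦ hx (ball_subset_closedBall (ball_subset_ball hrR h)), zero_pow hk,
      mul_zero]

variable (E) in
/-- The total mass of the weight `cap 0 1 ^ 2`, which normalizes `capMean`. -/
def capMass : ℝ := ∫ y : E, cap 0 1 y ^ 2

lemma capMass_pos : 0 < capMass E :=
  Continuous.integral_pos_of_hasCompactSupport_nonneg_nonzero (x := 0) (by fun_prop)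
    (hasCompactSupport_cap_pow 0 one_pos two_ne_zero) (fun _ ↦ sq_nonneg _) (by simp [cap])

/-- The average of `v` around `z` at scale `r`, with weight proportional to `cap z r ^ 2`. It is
written as an integral over the unit ball, which makes sense for `r = 0` as well. -/
def capMean (v : E → ℝ) (z : E) (r : ℝ) : ℝ :=
  (∫ y, v (z + r • y) * cap 0 1 y ^ 2) / capMass E

@[simp]
lemma capMean_zero (v : E → ℝ) (z : E) : capMean v z 0 = v z := by
  simp only [capMean, zero_smul, add_zero, integral_const_mul]
  exact mul_div_cancel_right₀ _ capMass_pos.ne'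

lemma capMean_nonneg {v : E → ℝ} (hv : ∀ x, 0 ≤ v x) (z : E) (r : ℝ) : 0 ≤ capMean v z r :=
  div_nonneg (integral_nonneg fun _ ↦ mul_nonneg (hv _) (sq_nonneg _)) capMass_pos.le

lemma continuous_capMean {v : E → ℝ} (hv : Continuous v) (z : E) : Continuous (capMean v z) := by
  have hunif (r : ℝ) : ∫ y in closedBall 0 1, v (z + r • y) * cap 0 1 y ^ 2 =
      ∫ y, v (z + r • y) * cap 0 1 y ^ 2 :=
    setIntegral_mul_cap_pow (fun y ↦ v (z + r • y)) 0 one_pos le_rfl two_ne_zero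
  unfold capMean
  simp only [← hunif]
  refine (continuous_parametric_integral_of_continuous ?_ (isCompact_closedBall 0 1)).div_const _
  unfold Function.uncurry
  fun_prop

lemma capMean_eq (v : E → ℝ) (z : E) {r : ℝ} (hr : 0 < r) :
    capMean v z r = (∫ x, v x * cap z r x ^ 2) / (r ^ finrank ℝ E * capMass E) := by
  have hscale := Measure.integral_comp_smul volume
    (fun x ↦ v (z + x) * cap z r (z + x) ^ 2) r
  have htrans := integral_add_left_eq_self (μ := volume) (fun x ↦ v x * cap z r x ^ 2) z
  simp only [cap_add_smul z hr] at hscale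
  rw [capMean, hscale, htrans, abs_of_pos (by positivity), smul_eq_mul, ← div_eq_inv_mul, div_div]

lemma hasDerivAt_setIntegral_of_isCompact {X : Type*} [TopologicalSpace X] [T2Space X]
    [MeasurableSpace X] [OpensMeasurableSpace X] {μ : Measure X} [IsFiniteMeasureOnCompacts μ]
    {F F' : ℝ → X → ℝ} {K : Set X} {U : Set ℝ} {r : ℝ} (hK : IsCompact K) (hU : U ∈ 𝓝 r)
    (hF : ∀ s ∈ U, ContinuousOn (F s) K) (hF' : ContinuousOn (Function.uncurry F') (U ×ˢ K))
    (hderiv : ∀ s ∈ U, ∀ x ∈ K, HasDerivAt (F · x) (F' s x) s) :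
    HasDerivAt (fun s ↦ ∫ x in K, F s x ∂μ) (∫ x in K, F' r x ∂μ) r := by
  obtain ⟨V, hV, hVU, hVc⟩ := local_compact_nhds hU
  obtain ⟨C, hC⟩ := (hVc.prod hK).exists_bound_of_continuousOn (hF'.mono (prod_mono_left hVU))
  have hF'r : ContinuousOn (F' r) K :=
    hF'.uncurry_left r (mem_of_mem_nhds hU)
  have hmem : ∀ᵐ x ∂μ.restrict K, x ∈ K := ae_restrict_mem hK.measurableSet
  exact (hasDerivAt_integral_of_dominated_loc_of_deriv_le hV
    (eventually_of_mem hU fun s hs ↦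
      (hF s hs).aestronglyMeasurable_of_isCompact hK hK.measurableSet)
    ((hF r (mem_of_mem_nhds hU)).integrableOn_compact hK)
    (hF'r.aestronglyMeasurable_of_isCompact hK hK.measurableSet)
    (hmem.mono fun x hx s hs ↦ hC (s, x) ⟨hs, hx⟩)
    (integrableOn_const hK.measure_lt_top.ne)
    (hmem.mono fun x hx s hs ↦ hderiv s (hVU hs) x hx)).2

lemma hasDerivAt_integral_mul_cap_sq {v : E → ℝ} (hv : Continuous v) (z : E) {r : ℝ} (hr : 0 < r) :
    HasDerivAt (fun r ↦ ∫ x, v x * cap z r x ^ 2)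
      (∫ x, v x * (4 * cap z r x * ‖x - z‖ ^ 2 / r ^ 3)) r := by
  have hU : Ioo 0 (r + 1) ∈ 𝓝 r := Ioo_mem_nhds hr (by simp)
  have hderiv := hasDerivAt_setIntegral_of_isCompact (μ := volume)
    (F := fun s x ↦ v x * cap z s x ^ 2)
    (F' := fun s x ↦ v x * (4 * cap z s x * ‖x - z‖ ^ 2 / s ^ 3))
    (isCompact_closedBall z (r + 1)) hU (fun s _ ↦ by fun_prop) ?_
    fun s hs x _ ↦ (hasDerivAt_cap_sq z x hs.1.ne').const_mul _
  · refine (hderiv.congr_deriv ?_).congr_of_eventuallyEq (eventually_of_mem hU fun s hs ↦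
      (setIntegral_mul_cap_pow v z hs.1 hs.2.le two_ne_zero).symm)
    refine setIntegral_eq_integral_of_forall_compl_eq_zero fun x hx ↦ ?_
    rw [cap_eq_zero hr fun h ↦ hx (ball_subset_closedBall (ball_subset_ball (by simp) h))]
    simp
  · have hne (k : ℕ) : ∀ p ∈ Ioo 0 (r + 1) ×ˢ closedBall z (r + 1), p.1 ^ k ≠ 0 :=
      fun p hp ↦ pow_ne_zero k hp.1.1.ne'
    refine (hv.comp continuous_snd).continuousOn.mul ?_
    unfold cap
    fun_prop (disch := exact hne _)

end CapMean

section RieszMass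

variable [MeasurableSpace E] [BorelSpace E] {v : E → ℝ}

/-- The mass that the Riesz measure of a superharmonic function `v`, a multiple of `-Δ v`, puts on
the ball of radius `r` around `z`, weighted with `cap z r ^ 3`. The Laplacian is moved to the weight
by duality, and the constant is the one making `hasDerivAt_capMean` free of constants. -/
def rieszMass (v : E → ℝ) (z : E) (r : ℝ) : ℝ :=
  -(∫ x, v x * Δ (fun x ↦ cap z r x ^ 3) x) / (6 * capMass E)

/-- The dimensionless density of the Riesz measure of `v` at scale `r` around `z`. -/
def rieszDensity (v : E → ℝ) (z : E) (r : ℝ) : ℝ := r ^ 2 * rieszMass v z r / r ^ finrank ℝ E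

lemma integral_mul_laplacian_cap_cube (hv : Continuous v) (z : E) {r : ℝ} (hr : 0 < r) :
    ∫ x, v x * Δ (fun x ↦ cap z r x ^ 3) x =
      6 / r * (∫ x, v x * (4 * cap z r x * ‖x - z‖ ^ 2 / r ^ 3)) -
        6 * finrank ℝ E / r ^ 2 * ∫ x, v x * cap z r x ^ 2 := by
  have hint : Integrable fun x ↦ v x * (4 * cap z r x * ‖x - z‖ ^ 2 / r ^ 3) := by
    refine (integrable_mul_cap_pow (v := fun x ↦ v x * (4 * ‖x - z‖ ^ 2 / r ^ 3)) (by fun_prop) z hr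
      one_ne_zero).congr (ae_of_all _ fun x ↦ ?_)
    ring
  rw [← integral_const_mul, ← integral_const_mul, ← integral_sub (hint.const_mul _)
    ((integrable_mul_cap_pow hv z hr two_ne_zero).const_mul _)]
  congr with x
  rw [laplacian_cap_cube]
  field_simp

lemma hasDerivAt_capMean (hv : Continuous v) (z : E) {r : ℝ} (hr : 0 < r) :
    HasDerivAt (capMean v z) (-(rieszDensity v z r / r)) r := by
  have hpow : HasDerivAt (fun r ↦ r ^ finrank ℝ E) (finrank ℝ E * r ^ finrank ℝ E / r) r := by
    refine (hasDerivAt_pow _ r).congr_deriv ?_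
    cases finrank ℝ E <;> simp [pow_succ, hr.ne', ← mul_assoc]
  have hc : capMass E ≠ 0 := capMass_pos.ne'
  refine (((hasDerivAt_integral_mul_cap_sq hv z hr).fun_div (hpow.mul_const (capMass E))
    (by positivity)).congr_deriv ?_).congr_of_eventuallyEq
    (eventually_of_mem (Ioi_mem_nhds hr) fun s hs ↦ capMean_eq v z hs)
  rw [rieszDensity, rieszMass, integral_mul_laplacian_cap_cube hv z hr]
  generalize ∫ x, v x * (4 * cap z r x * ‖x - z‖ ^ 2 / r ^ 3) = D
  field_simp

lemma cap_sq_le_two_mul_cap_sq {F : Type*} [SeminormedAddCommGroup F] {z z₀ : F} {r : ℝ}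
    (hr : 0 < r) (hz : ‖z - z₀‖ ≤ 3 * r) (x : F) : cap z r x ^ 2 ≤ 2 * cap z₀ (8 * r) x ^ 2 := by
  by_cases hx : x ∈ ball z r
  · have hdist : ‖x - z₀‖ ≤ 8 * r / 2 := by
      rw [mem_ball, dist_eq_norm] at hx
      linarith [norm_sub_le_norm_sub_add_norm_sub x z z₀]
    nlinarith [three_fourths_le_cap (by positivity) hdist, cap_le_one z r x, cap_nonneg z r x]
  · simp [cap_eq_zero hr hx, sq_nonneg]

lemma capMean_le_mul_capMean (hv : Continuous v) (hv0 : ∀ x, 0 ≤ v x) {z z₀ : E} {r : ℝ}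
    (hr : 0 < r) (hz : ‖z - z₀‖ ≤ 3 * r) :
    capMean v z r ≤ 2 * 8 ^ finrank ℝ E * capMean v z₀ (8 * r) := by
  have hc : 0 < capMass E := capMass_pos
  have hint : ∫ x, v x * cap z r x ^ 2 ≤ 2 * ∫ x, v x * cap z₀ (8 * r) x ^ 2 := by
    rw [← integral_const_mul]
    refine integral_mono (integrable_mul_cap_pow hv z hr two_ne_zero)
      ((integrable_mul_cap_pow hv z₀ (by positivity) two_ne_zero).const_mul 2) fun x ↦ ?_
    dsimp only
    rw [mul_left_comm]
    exact mul_le_mul_of_nonneg_left (cap_sq_le_two_mul_cap_sq hr hz x) (hv0 x)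
  rw [capMean_eq v z hr, capMean_eq v z₀ (by positivity), div_le_iff₀ (by positivity), mul_pow]
  refine hint.trans_eq ?_
  field_simp

variable [Nontrivial E]

lemma IsSuperharmonic.rieszMass_nonneg (hv : IsSuperharmonic v) (z : E) {r : ℝ} (hr : 0 < r) :
    0 ≤ rieszMass v z r :=
  div_nonneg (neg_nonneg.2 (hv.integral_mul_laplacian_nonpos (contDiff_cap_cube z r)
    (hasCompactSupport_cap_pow z hr three_ne_zero) fun x ↦ pow_nonneg (cap_nonneg z r x) 3))
    (mul_nonneg (by norm_num) capMass_pos.le)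

lemma IsSuperharmonic.antitoneOn_capMean (hv : IsSuperharmonic v) (z : E) :
    AntitoneOn (capMean v z) (Ici 0) := by
  refine antitoneOn_of_hasDerivWithinAt_nonpos
    (f' := fun r ↦ -(rieszDensity v z r / r)) (convex_Ici 0)
    (continuous_capMean hv.continuous z).continuousOn
    (fun r hr ↦ ?_) fun r hr ↦ ?_
  all_goals rw [interior_Ici, mem_Ioi] at hr
  · exact (hasDerivAt_capMean hv.continuous z hr).hasDerivWithinAt
  · have := hv.rieszMass_nonneg z hr
    exact neg_nonpos.2 (by unfold rieszDensity; positivity)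

lemma IsSuperharmonic.capMean_le (hv : IsSuperharmonic v) (z : E) {r : ℝ} (hr : 0 ≤ r) :
    capMean v z r ≤ v z :=
  (hv.antitoneOn_capMean z self_mem_Ici hr hr).trans_eq (capMean_zero v z)

lemma IsSuperharmonic.eventually_capMean_lt (hv : IsSuperharmonic v) (hv0 : IsGLB (range v) 0)
    {ε : ℝ} (hε : 0 < ε) : ∀ᶠ r in atTop, ∀ z, ‖z‖ ≤ 2 * r → capMean v z r < ε := by
  have hC : (0 : ℝ) < 2 * 8 ^ finrank ℝ E := by positivity
  obtain ⟨_, ⟨z₀, rfl⟩, -, hz₀⟩ := hv0.exists_between (div_pos hε hC)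
  filter_upwards [eventually_ge_atTop ‖z₀‖, eventually_gt_atTop 0] with r hr hr0 z hz
  calc capMean v z r ≤ 2 * 8 ^ finrank ℝ E * capMean v z₀ (8 * r) :=
        capMean_le_mul_capMean hv.continuous (fun x ↦ hv0.1 (mem_range_self x)) hr0
          (by linarith [norm_sub_le z z₀])
    _ ≤ 2 * 8 ^ finrank ℝ E * v z₀ := by gcongr; exact hv.capMean_le z₀ (by positivity)
    _ < ε := by rwa [lt_div_iff₀' hC] at hz₀

end RieszMass

section Packing

lemma laplacian_finsetSum {ι : Type*} {f : ι → E → ℝ} {s : Finset ι} {x : E}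
    (hf : ∀ i ∈ s, ContDiffAt ℝ 2 (f i) x) : Δ (∑ i ∈ s, f i) x = ∑ i ∈ s, Δ (f i) x := by
  simp only [InnerProductSpace.laplacian_eq_iteratedFDeriv_stdOrthonormalBasis,
    iteratedFDeriv_sum_apply hf, sum_apply]
  exact Finset.sum_comm

lemma sum_cap_cube_le {F : Type*} [SeminormedAddCommGroup F] {s : Finset (F × ℝ)} {z : F} {r : ℝ}
    (hr : 0 < r) (hs : ∀ p ∈ s, 0 < p.2 ∧ closedBall p.1 p.2 ⊆ closedBall z (r / 2))
    (hdisj : (s : Set (F × ℝ)).PairwiseDisjoint fun p ↦ closedBall p.1 p.2) (x : F) :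
    ∑ p ∈ s, cap p.1 p.2 x ^ 3 ≤ 64 / 27 * cap z r x ^ 3 := by
  have hzero (p) (hp : p ∈ s) (hx : x ∉ closedBall p.1 p.2) : cap p.1 p.2 x ^ 3 = 0 := by
    rw [cap_eq_zero (hs p hp).1 fun h ↦ hx (ball_subset_closedBall h), zero_pow three_ne_zero]
  by_cases hx : ∃ p ∈ s, x ∈ closedBall p.1 p.2
  · obtain ⟨p, hp, hxp⟩ := hx
    have hcap : 3 / 4 ≤ cap z r x :=
      three_fourths_le_cap hr (by simpa [dist_eq_norm] using (hs p hp).2 hxp)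
    calc ∑ p ∈ s, cap p.1 p.2 x ^ 3 = cap p.1 p.2 x ^ 3 :=
          Finset.sum_eq_single_of_mem p hp fun p' hp' hne ↦
            hzero p' hp' fun hxp' ↦ disjoint_left.1 (hdisj hp' hp hne) hxp' hxp
      _ ≤ 64 / 27 * (3 / 4) ^ 3 := by
          have := pow_le_one₀ (n := 3) (cap_nonneg p.1 p.2 x) (cap_le_one p.1 p.2 x)
          linarith
      _ ≤ 64 / 27 * cap z r x ^ 3 := by gcongr
  · push Not at hx
    rw [Finset.sum_eq_zero fun p hp ↦ hzero p hp (hx p hp)]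
    have := cap_nonneg z r x
    positivity

variable [MeasurableSpace E] [BorelSpace E] {v : E → ℝ}

lemma integrable_mul_laplacian_cap_cube (hv : Continuous v) (z : E) {r : ℝ} (hr : 0 < r) :
    Integrable fun x ↦ v x * Δ (fun x ↦ cap z r x ^ 3) x := by
  simp only [laplacian_cap_cube]
  refine (integrable_mul_cap_pow (k := 1) (v := fun x ↦ v x * (6 / r ^ 2 *
    (4 * (‖x - z‖ ^ 2 / r ^ 2) - finrank ℝ E * cap z r x))) (by fun_prop) z hr one_ne_zero).congr
    (ae_of_all _ fun x ↦ ?_)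
  ring

lemma exists_rieszMass_eq (hv : Continuous v) (z : E) {L : ℝ} (hL : 0 < L) :
    ∃ r ∈ Ioo (8 * L) (16 * L),
      rieszMass v z r =
        (capMean v z (8 * L) - capMean v z (16 * L)) / (8 * L) * r ^ finrank ℝ E / r := by
  obtain ⟨r, hr, hslope⟩ := exists_hasDerivAt_eq_slope (capMean v z)
    (fun r ↦ -(rieszDensity v z r / r)) (show 8 * L < 16 * L by linarith)
    (continuous_capMean hv z).continuousOn
    fun r hr ↦ hasDerivAt_capMean hv z (by linarith [hr.1])
  have hr0 : r ≠ 0 := by linarith [hr.1]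
  refine ⟨r, hr, ?_⟩
  rw [rieszDensity] at hslope
  field_simp at hslope ⊢
  linarith

lemma rpow_le_of_lt_rieszDensity {z : E} {r L η q : ℝ} (hr : 0 < r) (hL : 0 < L) (hη : 0 < η)
    (h : η * (r / L) ^ (q - (finrank ℝ E - 2)) < rieszDensity v z r) :
    (r / L) ^ q ≤ L ^ 2 / (η * L ^ finrank ℝ E) * rieszMass v z r := by
  have hrL : 0 < r / L := by positivity
  have hsplit : (r / L) ^ q =
      (r / L) ^ (q - (finrank ℝ E - 2)) * ((r / L) ^ finrank ℝ E / (r / L) ^ 2) := by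
    rw [← Real.rpow_natCast _ (finrank ℝ E), ← Real.rpow_two, ← Real.rpow_sub hrL,
      ← Real.rpow_add hrL]
    ring_nf
  calc (r / L) ^ q
      = η * (r / L) ^ (q - (finrank ℝ E - 2)) * ((r / L) ^ finrank ℝ E / (r / L) ^ 2) / η := by
        rw [hsplit]; field_simp
    _ ≤ rieszDensity v z r * ((r / L) ^ finrank ℝ E / (r / L) ^ 2) / η := by gcongr
    _ = L ^ 2 / (η * L ^ finrank ℝ E) * rieszMass v z r := by
        rw [rieszDensity, div_pow, div_pow]; field_simp

variable [Nontrivial E]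

lemma IsSuperharmonic.sum_rieszMass_le (hv : IsSuperharmonic v) {s : Finset (E × ℝ)}
    (hs : ∀ p ∈ s, 0 < p.2) {z : E} {r c : ℝ} (hr : 0 < r)
    (hle : ∀ x, ∑ p ∈ s, cap p.1 p.2 x ^ 3 ≤ c * cap z r x ^ 3) :
    ∑ p ∈ s, rieszMass v p.1 p.2 ≤ c * rieszMass v z r := by
  have hsmooth (p : E × ℝ) : ContDiff ℝ 2 fun x ↦ cap p.1 p.2 x ^ 3 := contDiff_cap_cube _ _
  set φ : E → ℝ := c • fun x ↦ cap z r x ^ 3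
  set ψ : E → ℝ := ∑ p ∈ s, fun x ↦ cap p.1 p.2 x ^ 3
  have hφ : ContDiff ℝ 2 φ := (contDiff_cap_cube z r).const_smul c
  have hψ : ContDiff ℝ 2 ψ := by
    simpa only [ψ, Finset.sum_fn] using ContDiff.sum fun p _ ↦ hsmooth p
  have hφsupp : HasCompactSupport φ :=
    (hasCompactSupport_cap_pow z hr three_ne_zero).smul_left (f := fun _ ↦ c)
  have hψsupp : HasCompactSupport ψ := by
    simpa only [ψ, Finset.sum_fn] using HasCompactSupport.finset_sum fun p hp ↦
      hasCompactSupport_cap_pow p.1 (hs p hp) three_ne_zero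
  have hweak : ∫ x, v x * Δ (φ - ψ) x ≤ 0 :=
    hv.integral_mul_laplacian_nonpos (hφ.sub hψ) (hφsupp.sub hψsupp) fun x ↦
      sub_nonneg.2 (by simpa [φ, ψ] using hle x)
  have hlap (x : E) : v x * Δ (φ - ψ) x = c * (v x * Δ (fun x ↦ cap z r x ^ 3) x) -
      ∑ p ∈ s, v x * Δ (fun x ↦ cap p.1 p.2 x ^ 3) x := by
    rw [hφ.contDiffAt.laplacian_sub hψ.contDiffAt,
      InnerProductSpace.laplacian_smul c (contDiff_cap_cube z r).contDiffAt,
      laplacian_finsetSum fun p _ ↦ (hsmooth p).contDiffAt, smul_eq_mul, mul_sub, Finset.mul_sum]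
    ring
  have hint (p) (hp : p ∈ s) := integrable_mul_laplacian_cap_cube hv.continuous p.1 (hs p hp)
  simp only [hlap] at hweak
  rw [integral_sub ((integrable_mul_laplacian_cap_cube hv.continuous z hr).const_mul c)
    (integrable_finsetSum s hint), integral_const_mul, integral_finsetSum s hint] at hweak
  simp only [rieszMass, ← Finset.sum_div, Finset.sum_neg_distrib]
  rw [mul_div_assoc']
  exact div_le_div_of_nonneg_right (by linarith) (mul_nonneg (by norm_num) capMass_pos.le)

lemma IsSuperharmonic.sum_rpow_le (hv : IsSuperharmonic v) {s : Finset (E × ℝ)} {z : E}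
    {L η q : ℝ} (hL : 0 < L) (hη : 0 < η)
    (hs : ∀ p ∈ s, 0 < p.2 ∧ closedBall p.1 p.2 ⊆ closedBall z (4 * L))
    (hdisj : (s : Set (E × ℝ)).PairwiseDisjoint fun p ↦ closedBall p.1 p.2)
    (hdensity : ∀ p ∈ s, η * (p.2 / L) ^ (q - (finrank ℝ E - 2)) < rieszDensity v p.1 p.2) :
    ∑ p ∈ s, (p.2 / L) ^ q ≤
      16 ^ finrank ℝ E / 27 * ((capMean v z (8 * L) - capMean v z (16 * L)) / η) := by
  obtain ⟨R, ⟨hLR, hRL⟩, hR⟩ := exists_rieszMass_eq hv.continuous z hL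
  have hR0 : 0 < R := by linarith
  have hanti : 0 ≤ capMean v z (8 * L) - capMean v z (16 * L) :=
    sub_nonneg.2 (hv.antitoneOn_capMean z (mem_Ici.2 (by positivity)) (mem_Ici.2 (by positivity))
      (by linarith))
  have hpack : ∑ p ∈ s, rieszMass v p.1 p.2 ≤ 64 / 27 * rieszMass v z R :=
    hv.sum_rieszMass_le (fun p hp ↦ (hs p hp).1) hR0 <| sum_cap_cube_le hR0
      (fun p hp ↦ ⟨(hs p hp).1, (hs p hp).2.trans (closedBall_subset_closedBall (by linarith))⟩)
      hdisj
  have hterm (p) (hp : p ∈ s) :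
      (p.2 / L) ^ q ≤ L ^ 2 / (η * L ^ finrank ℝ E) * rieszMass v p.1 p.2 :=
    rpow_le_of_lt_rieszDensity (hs p hp).1 hL hη (hdensity p hp)
  calc ∑ p ∈ s, (p.2 / L) ^ q
      ≤ L ^ 2 / (η * L ^ finrank ℝ E) * ∑ p ∈ s, rieszMass v p.1 p.2 := by
        rw [Finset.mul_sum]; exact Finset.sum_le_sum hterm
    _ ≤ L ^ 2 / (η * L ^ finrank ℝ E) * (64 / 27 *
          ((capMean v z (8 * L) - capMean v z (16 * L)) / (8 * L) *
            (16 * L) ^ finrank ℝ E / (8 * L))) := by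
        rw [hR] at hpack
        grw [hpack, hRL, ← hLR]
    _ = _ := by
        rw [mul_pow]
        field_simp
        norm_num

end Packing

section Exceptional

variable [MeasurableSpace E] [BorelSpace E] {v : E → ℝ}

lemma le_capMean_add_of_rieszDensity_le (hv : Continuous v) {z : E} {L η β : ℝ} (hL : 0 < L)
    (hβ : 0 < β) (h : ∀ r ∈ Ioo 0 L, rieszDensity v z r ≤ η * (r / L) ^ β) :
    v z ≤ capMean v z L + η / β := by
  have hderiv (r) (hr : 0 < r) : HasDerivAt (fun r ↦ capMean v z r + η / β * (r / L) ^ β)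
      (-(rieszDensity v z r / r) + η * (r / L) ^ β / r) r := by
    have hpow := ((hasDerivAt_id r).div_const L).rpow_const (p := β) (.inl (by positivity))
    refine (hasDerivAt_capMean hv z hr).add ((hpow.const_mul (η / β)).congr_deriv ?_)
    rw [id, Real.rpow_sub_one (by positivity)]
    field_simp
  have hmono : MonotoneOn (fun r ↦ capMean v z r + η / β * (r / L) ^ β) (Icc 0 L) := by
    refine monotoneOn_of_hasDerivWithinAt_nonneg (convex_Icc 0 L)
      (f' := fun r ↦ -(rieszDensity v z r / r) + η * (r / L) ^ β / r) ?_ (fun r hr ↦ ?_)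
      fun r hr ↦ ?_
    · have := continuous_capMean hv z
      exact (this.add (((Real.continuous_rpow_const hβ.le).comp
        (continuous_id.div_const L)).const_mul _)).continuousOn
    all_goals rw [interior_Icc] at hr
    · exact (hderiv r hr.1).hasDerivWithinAt
    · rw [neg_add_eq_sub, ← sub_div]
      exact div_nonneg (sub_nonneg.2 (h r hr)) hr.1.le
  simpa [capMean_zero, hβ.ne', hL.ne'] using
    hmono (left_mem_Icc.2 hL.le) (right_mem_Icc.2 hL.le) hL.le

variable [Nontrivial E]

lemma IsSuperharmonic.exists_exceptional_annulus (hv : IsSuperharmonic v) {L η q : ℝ} (hL : 0 < L)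
    (hη : 0 < η) (hq : (finrank ℝ E : ℝ) - 2 < q) :
    ∃ t : Set (E × ℝ), (∀ p ∈ t, L ≤ ‖p.1‖ ∧ 0 < p.2) ∧
      (∀ s : Finset (E × ℝ), (s : Set (E × ℝ)) ⊆ t → ∑ p ∈ s, (p.2 / L) ^ q ≤
        16 ^ finrank ℝ E / 27 * ((capMean v 0 (8 * L) - capMean v 0 (16 * L)) / η)) ∧
      ∀ z, L ≤ ‖z‖ → ‖z‖ < 2 * L → (∀ p ∈ t, z ∉ ball p.1 (6 * p.2)) →
        v z ≤ capMean v z L + η / (q - (finrank ℝ E - 2)) := by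
  obtain ⟨t, htT, hdisj, hcov⟩ := Vitali.exists_disjoint_subfamily_covering_enlargement_closedBall
    {p : E × ℝ | (L ≤ ‖p.1‖ ∧ ‖p.1‖ < 2 * L) ∧ (0 < p.2 ∧ p.2 ≤ L) ∧
      η * (p.2 / L) ^ (q - (finrank ℝ E - 2)) < rieszDensity v p.1 p.2}
    Prod.fst Prod.snd L (fun p hp ↦ hp.2.1.2) 5 (by norm_num)
  refine ⟨t, fun p hp ↦ ⟨(htT hp).1.1, (htT hp).2.1.1⟩, fun s hs ↦ ?_, fun z hz hz' hzt ↦ ?_⟩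
  · refine hv.sum_rpow_le hL hη (fun p hp ↦ ?_) (hdisj.subset hs) fun p hp ↦ (htT (hs hp)).2.2
    obtain ⟨⟨-, hp1⟩, ⟨hp0, hpL⟩, -⟩ := htT (hs hp)
    refine ⟨hp0, closedBall_subset_closedBall' ?_⟩
    rw [dist_zero_right]
    linarith
  · refine le_capMean_add_of_rieszDensity_le hv.continuous hL (sub_pos.2 hq) fun r hr ↦ ?_
    by_contra! hdense
    obtain ⟨p, hp, hsub⟩ := hcov (z, r) ⟨⟨hz, hz'⟩, ⟨hr.1, hr.2.le⟩, hdense⟩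
    refine hzt p hp (closedBall_subset_ball ?_ (hsub (mem_closedBall_self hr.1.le)))
    linarith [(htT hp).2.1.1]

end Exceptional

section Assembly

lemma exists_summable_sub_div {b : ℕ → ℝ} (hb : Antitone b) (hlim : Tendsto b atTop (𝓝 0)) :
    ∃ η : ℕ → ℝ, (∀ j, 0 < η j) ∧ Tendsto η atTop (𝓝 0) ∧
      Summable fun j ↦ (b j - b (j + 1)) / η j := by
  have hb0 (j) : 0 ≤ b j := hb.le_of_tendsto hlim j
  have hsqrt (j) : √(b (j + 1)) ≤ √(b j) := Real.sqrt_le_sqrt (hb j.le_succ)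
  have hη (j) : 0 < √(b j) + (1 / 2) ^ j := by positivity
  have htelescope : Summable fun j ↦ √(b j) - √(b (j + 1)) := by
    refine summable_of_sum_range_le (c := √(b 0)) (fun j ↦ sub_nonneg.2 (hsqrt j)) fun n ↦ ?_
    rw [Finset.sum_range_sub']
    exact sub_le_self _ (Real.sqrt_nonneg _)
  refine ⟨fun j ↦ √(b j) + (1 / 2) ^ j, hη, ?_, (htelescope.mul_left 2).of_nonneg_of_le
    (fun j ↦ div_nonneg (sub_nonneg.2 (hb j.le_succ)) (hη j).le) fun j ↦ ?_⟩
  · simpa using hlim.sqrt.add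
      (tendsto_pow_atTop_nhds_zero_of_lt_one (r := (1 / 2 : ℝ)) (by norm_num) (by norm_num))
  · rw [div_le_iff₀ (hη j)]
    calc b j - b (j + 1) = (√(b j) - √(b (j + 1))) * (√(b j) + √(b (j + 1))) := by
          nlinarith [Real.sq_sqrt (hb0 j), Real.sq_sqrt (hb0 (j + 1))]
      _ ≤ (√(b j) - √(b (j + 1))) * (2 * (√(b j) + (1 / 2) ^ j)) := by
          have hpow : (0 : ℝ) ≤ (1 / 2) ^ j := by positivity
          exact mul_le_mul_of_nonneg_left (by linarith [hsqrt j]) (sub_nonneg.2 (hsqrt j))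
      _ = 2 * (√(b j) - √(b (j + 1))) * (√(b j) + (1 / 2) ^ j) := by ring

lemma summable_sigma_of_sum_le {ι : Type*} {α : ι → Type*} {f : (Σ i, α i) → ℝ} {c : ι → ℝ}
    (hf : ∀ p, 0 ≤ f p) (hc : Summable c) (hle : ∀ i (s : Finset (α i)), ∑ a ∈ s, f ⟨i, a⟩ ≤ c i) :
    Summable f := by
  have hfiber (i) : Summable fun a ↦ f ⟨i, a⟩ := summable_of_sum_le (fun _ ↦ hf _) (hle i)
  exact (summable_sigma_of_nonneg hf).2 ⟨hfiber, hc.of_nonneg_of_le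
    (fun i ↦ tsum_nonneg fun _ ↦ hf _) fun i ↦ (hfiber i).tsum_le_of_sum_le (hle i)⟩

lemma exists_seq_of_summable_rpow {F ι : Type*} [NormedAddCommGroup F] [Nontrivial F]
    {x : ι → F} {r : ι → ℝ} {q : ℝ} (hq : 0 < q) (hx : ∀ i, x i ≠ 0) (hr : ∀ i, 0 < r i)
    (hsum : Summable fun i ↦ (r i / ‖x i‖) ^ q) :
    ∃ (y : ℕ → F) (s : ℕ → ℝ), (∀ k, y k ≠ 0) ∧ (∀ k, 0 < s k) ∧
      Summable (fun k ↦ (s k / ‖y k‖) ^ q) ∧ ∀ i, ∃ k, y k = x i ∧ s k = r i := by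
  obtain ⟨e, he⟩ := exists_ne (0 : F)
  have hpos (i) : 0 < (r i / ‖x i‖) ^ q :=
    Real.rpow_pos_of_pos (div_pos (hr i) (norm_pos_iff.2 (hx i))) q
  have hcount : Countable ι := by
    have huniv : Function.support (fun i ↦ (r i / ‖x i‖) ^ q) = univ :=
      eq_univ_of_forall fun i ↦ (hpos i).ne'
    exact countable_univ_iff.1 (huniv ▸ hsum.countable_support)
  have hpad : Summable fun k : ℕ ↦ (‖e‖ * (1 / 2) ^ k / ‖e‖) ^ q := by
    refine (summable_geometric_of_lt_one (r := (1 / 2 : ℝ) ^ q) (by positivity)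
      (Real.rpow_lt_one (by norm_num) (by norm_num) hq)).congr fun k ↦ ?_
    rw [mul_div_cancel_left₀ _ (norm_ne_zero_iff.2 he), Real.rpow_pow_comm (by norm_num)]
  have hradius (k : ℕ) : 0 < ‖e‖ * (1 / 2) ^ k := mul_pos (norm_pos_iff.2 he) (by positivity)
  let y : ι ⊕ ℕ → F := Sum.elim x fun _ ↦ e
  let s : ι ⊕ ℕ → ℝ := Sum.elim r fun k ↦ ‖e‖ * (1 / 2) ^ k
  have hy : ∀ i, y i ≠ 0 := Sum.forall.2 ⟨hx, fun _ ↦ he⟩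
  have hs : ∀ i, 0 < s i := Sum.forall.2 ⟨hr, hradius⟩
  have hys : Summable fun i ↦ (s i / ‖y i‖) ^ q := Summable.sum _ hsum hpad
  obtain ⟨_⟩ := nonempty_denumerable (ι ⊕ ℕ)
  let φ : ℕ ≃ ι ⊕ ℕ := (Denumerable.eqv (ι ⊕ ℕ)).symm
  refine ⟨y ∘ φ, s ∘ φ, fun k ↦ hy (φ k), fun k ↦ hs (φ k), φ.summable_iff.2 hys,
    fun i ↦ ⟨φ.symm (.inl i), congrArg y (φ.apply_symm_apply _),
      congrArg s (φ.apply_symm_apply _)⟩⟩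

variable [MeasurableSpace E] [BorelSpace E] [Nontrivial E] {v : E → ℝ}

lemma IsSuperharmonic.tendsto_capMean (hv : IsSuperharmonic v) (hv0 : IsGLB (range v) 0) (z : E) :
    Tendsto (capMean v z) atTop (𝓝 0) := by
  refine tendsto_order.2 ⟨fun a ha ↦ .of_forall fun r ↦
    ha.trans_le (capMean_nonneg (fun x ↦ hv0.1 (mem_range_self x)) z r), fun ε hε ↦ ?_⟩
  filter_upwards [hv.eventually_capMean_lt hv0 hε, eventually_ge_atTop (‖z‖ / 2)] with r hr hzr
  exact hr z (by linarith)

lemma IsSuperharmonic.exists_exceptional_family (hv : IsSuperharmonic v)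
    (hv0 : IsGLB (range v) 0) {q : ℝ} (hq : (finrank ℝ E : ℝ) - 2 < q) :
    ∃ t : ℕ → Set (E × ℝ), (∀ j, ∀ p ∈ t j, 2 ^ j ≤ ‖p.1‖ ∧ 0 < p.2) ∧
      (Summable fun p : Σ j, t j ↦ (p.2.1.2 / 2 ^ p.1) ^ q) ∧
      ∀ ε > 0, ∀ᶠ j in atTop, ∀ z, 2 ^ j ≤ ‖z‖ → ‖z‖ < 2 * 2 ^ j →
        (∀ p ∈ t j, z ∉ ball p.1 (6 * p.2)) → v z < ε := by
  have hpow : Tendsto (fun j : ℕ ↦ (2 : ℝ) ^ j) atTop atTop :=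
    tendsto_pow_atTop_atTop_of_one_lt one_lt_two
  have hanti : Antitone fun j : ℕ ↦ capMean v 0 (8 * 2 ^ j) := fun i j hij ↦
    hv.antitoneOn_capMean 0 (mem_Ici.2 (by positivity)) (mem_Ici.2 (by positivity))
      (by gcongr; norm_num)
  obtain ⟨η, hη, hηlim, hηsum⟩ := exists_summable_sub_div hanti
    ((hv.tendsto_capMean hv0 0).comp (hpow.const_mul_atTop (by norm_num)))
  choose t htpos htsum ht using fun j : ℕ ↦
    hv.exists_exceptional_annulus (L := 2 ^ j) (by positivity) (hη j) hq
  refine ⟨t, htpos, summable_sigma_of_sum_le (fun ⟨j, p⟩ ↦ ?_)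
    (hηsum.mul_left (16 ^ finrank ℝ E / 27)) fun j s ↦ ?_, fun ε hε ↦ ?_⟩
  · exact Real.rpow_nonneg (div_nonneg (htpos j p p.2).2.le (by positivity)) q
  · have := htsum j (s.map (.subtype _)) (by simp)
    rwa [Finset.sum_map, show (16 : ℝ) * 2 ^ j = 8 * 2 ^ (j + 1) by ring] at this
  · have hβ : 0 < q - (finrank ℝ E - 2) := sub_pos.2 hq
    filter_upwards [hpow.eventually (hv.eventually_capMean_lt hv0 (half_pos hε)),
      hηlim.eventually_lt_const (mul_pos (half_pos hε) hβ)] with j hmean hηj z hz hz' hzt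
    rw [← div_lt_iff₀ hβ] at hηj
    linarith [ht j z hz hz' hzt, hmean z hz'.le]

theorem IsSuperharmonic.exists_exceptional_balls (hv : IsSuperharmonic v)
    (hv0 : IsGLB (range v) 0) {q : ℝ} (hq0 : 0 < q) (hq : (finrank ℝ E : ℝ) - 2 < q) :
    ∃ (x : ℕ → E) (r : ℕ → ℝ), (∀ k, x k ≠ 0) ∧ (∀ k, 0 < r k) ∧
      Summable (fun k ↦ (r k / ‖x k‖) ^ q) ∧
      ∀ ε > 0, ∃ R > 0, ∀ z, R < ‖z‖ → (∀ k, z ∉ ball (x k) (r k)) → v z < ε := by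
  obtain ⟨t, ht, hsum, hsmall⟩ := hv.exists_exceptional_family hv0 hq
  have hnorm (p : Σ j, t j) : 2 ^ p.1 ≤ ‖p.2.1.1‖ := (ht p.1 p.2 p.2.2).1
  have hradius (p : Σ j, t j) : 0 < p.2.1.2 := (ht p.1 p.2 p.2.2).2
  have hcenter (p : Σ j, t j) : p.2.1.1 ≠ 0 :=
    norm_pos_iff.1 ((by positivity : (0 : ℝ) < 2 ^ p.1).trans_le (hnorm p))
  have hsum' : Summable fun p : Σ j, t j ↦ (6 * p.2.1.2 / ‖p.2.1.1‖) ^ q := by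
    refine (hsum.mul_left (6 ^ q)).of_nonneg_of_le (fun p ↦ ?_) fun p ↦ ?_
    all_goals have := hradius p
    · positivity
    · rw [← Real.mul_rpow (by norm_num) (by positivity), ← mul_div_assoc]
      gcongr
      exact hnorm p
  obtain ⟨x, r, hx, hr, hxr, hattain⟩ := exists_seq_of_summable_rpow hq0 hcenter
    (fun p ↦ mul_pos (by norm_num : (0 : ℝ) < 6) (hradius p)) hsum'
  refine ⟨x, r, hx, hr, hxr, fun ε hε ↦ ?_⟩
  obtain ⟨N, hN⟩ := eventually_atTop.1 (hsmall ε hε)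
  refine ⟨2 ^ N, by positivity, fun z hz hout ↦ ?_⟩
  obtain ⟨j, hj, hj'⟩ :=
    exists_nat_pow_near ((one_le_pow₀ one_le_two).trans hz.le) (one_lt_two (α := ℝ))
  have hNj : N < j + 1 := (pow_lt_pow_iff_right₀ one_lt_two).1 (hz.trans hj')
  refine hN j (by lia) z hj (by rwa [← pow_succ']) fun p hp hzp ↦ ?_
  obtain ⟨k, hxk, hrk⟩ := hattain ⟨j, p, hp⟩
  exact hout k (by rwa [hxk, hrk])

end Assembly

section Subharmonic

lemma isGLB_range_const_sub {α : Type*} {u : α → ℝ} {a : ℝ} (hu : IsLUB (range u) a) :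
    IsGLB (range fun x ↦ a - u x) 0 := by
  refine ⟨forall_mem_range.2 fun x ↦ sub_nonneg.2 (hu.1 (mem_range_self x)), fun b hb ↦ ?_⟩
  have := hu.2 (forall_mem_range.2 fun x ↦ le_sub_comm.1 (hb (mem_range_self x)))
  linarith

lemma isSuperharmonic_const_sub [MeasurableSpace E] [BorelSpace E] {u : E → ℝ}
    (hcont : Continuous u) (hsh : ∀ z r, 0 < r → u z ≤ ⨍ w in ball z r, u w) (a : ℝ) :
    IsSuperharmonic fun z ↦ a - u z where
  continuous := by fun_prop
  setAverage_ball_le z r hr := by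
    have hint : IntegrableOn u (ball z r) volume :=
      (integrableOn_closedBall_of_continuous hcont z r).mono_set ball_subset_closedBall
    have hconst : IntegrableOn (fun _ ↦ a) (ball z r) volume :=
      integrableOn_const measure_ball_lt_top.ne
    have havg : ⨍ w in ball z r, (a - u w) = a - ⨍ w in ball z r, u w := by
      rw [setAverage_eq, integral_sub hconst hint, smul_sub, ← setAverage_eq, ← setAverage_eq,
        setAverage_const (measure_ball_pos volume z hr).ne' measure_ball_lt_top.ne]
    rw [havg]
    exact sub_le_sub_left (hsh z r hr) a

end Subharmonic

lemma finrank_real_euclideanSpace_complex (n : ℕ) :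
    finrank ℝ (EuclideanSpace ℂ (Fin n)) = 2 * n := by
  rw [← finrank_mul_finrank ℝ ℂ, Complex.finrank_real_complex, finrank_euclideanSpace_fin]

theorem cartan_lemma_general {E : Type*} [NormedAddCommGroup E] [InnerProductSpace ℝ E]
    [FiniteDimensional ℝ E] [Nontrivial E] [MeasurableSpace E] [BorelSpace E]
    (u : E → ℝ) (a q : ℝ) (hq0 : 0 < q) (hq : (finrank ℝ E : ℝ) - 2 < q) (hcont : Continuous u)
    (hsh : ∀ z r, 0 < r → u z ≤ ⨍ w in ball z r, u w) (hsup : IsLUB (range u) a) :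
    ∃ (x : ℕ → E) (r : ℕ → ℝ), (∀ k, x k ≠ 0) ∧ (∀ k, 0 < r k) ∧
      Summable (fun k ↦ (r k / ‖x k‖) ^ q) ∧
      ∀ ε > (0 : ℝ), ∃ R > (0 : ℝ), ∀ z, R < ‖z‖ →
        (∀ k, z ∉ ball (x k) (r k)) → a - ε < u z := by
  obtain ⟨x, r, hx, hr, hsum, hsmall⟩ :=
    (isSuperharmonic_const_sub hcont hsh a).exists_exceptional_balls
      (isGLB_range_const_sub hsup) hq0 hq
  refine ⟨x, r, hx, hr, hsum, fun ε hε ↦ ?_⟩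
  obtain ⟨R, hR, hsmall⟩ := hsmall ε hε
  exact ⟨R, hR, fun z hz hout ↦ sub_lt_comm.1 (hsmall z hz hout)⟩

/-- **Cartan's lemma.** A bounded continuous subharmonic function `u` on `ℂⁿ` (`n ≥ 2`) with
`a = sup u` tends to `a` at infinity outside a countable union of balls `B(x_k, r_k)` with
`Σ (r_k/‖x_k‖)^q < ∞`, for any fixed `q > 2n - 2`. -/
theorem cartan_lemma
    (n : ℕ) (hn : 2 ≤ n)
    (u : EuclideanSpace ℂ (Fin n) → ℝ) (a q : ℝ)
    (hq : (2 * n : ℝ) - 2 < q)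
    (hcont : Continuous u)
    (hbounded : ∃ M : ℝ, ∀ z, |u z| ≤ M)
    (hsh : ∀ z r, 0 < r → u z ≤ ⨍ w in ball z r, u w)
    (hsup : IsLUB (Set.range u) a) :
    ∃ (x : ℕ → EuclideanSpace ℂ (Fin n)) (r : ℕ → ℝ),
      (∀ k, x k ≠ 0) ∧ (∀ k, 0 < r k) ∧
      Summable (fun k => (r k / ‖x k‖) ^ q) ∧
      ∀ ε > (0 : ℝ), ∃ R > (0 : ℝ), ∀ z, R < ‖z‖ →
        (∀ k, z ∉ ball (x k) (r k)) → a - ε < u z := by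
  have hn2 : (2 : ℝ) ≤ n := by exact_mod_cast hn
  have : Nonempty (Fin n) := ⟨⟨0, by lia⟩⟩
  exact cartan_lemma_general u a q (by linarith) (by simpa [finrank_real_euclideanSpace_complex])
    hcont hsh hsup
end
end
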